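/- Let α ∈ (2,3), λ > 0, σ > 0, n ≥ 2, and let γ ∈ H^{(α+1)/2+σ,2}(ℝ/ℤ,ℝⁿ) be injective, parametrized by arc-length, and a stationary point of E^α + λL, i.e. δE^α(γ;h) + λ∫_{ℝ/ℤ} ⟨γ'(u),h'(u)⟩ du = 0 for all h ∈ H^{(1+α)/2,2}(ℝ/ℤ,ℝⁿ). Then γ ∈ H^{α−1/2+σ̂,2}(ℝ/ℤ,ℝⁿ) for every σ̂ with 0 < σ̂ < σ. -/

import Mathlib

open MeasureTheory Filter Set
open scoped RealInnerProductSpace ENNReal Topology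

noncomputable section

/-- `ℝⁿ` -/
abbrev Rn (n : ℕ) := EuclideanSpace ℝ (Fin n)

variable {n : ℕ}

/-- A 1-periodic curve is injective as a map on `ℝ/ℤ`. -/
def PerInjective (γ : ℝ → Rn n) : Prop :=
  ∀ u v : ℝ, γ u = γ v → ∃ k : ℤ, v = u + k

/-- `γ` is a regular curve: `γ'(u) ≠ 0` for all `u`. -/
def RegularCurve (γ : ℝ → Rn n) : Prop := ∀ u : ℝ, deriv γ u ≠ 0

/-- `γ` is parametrized by arc-length: `|γ'(u)| = 1` for all `u`. -/
def ArcLengthParam (γ : ℝ → Rn n) : Prop := ∀ u : ℝ, ‖deriv γ u‖ = 1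

/-- The length `L(γ) = ∫₀¹ |γ'(θ)| dθ` of the closed curve `γ`. -/
def curveLen (γ : ℝ → Rn n) : ℝ := ∫ θ in (0:ℝ)..1, ‖deriv γ θ‖

/-- The arc length `L(γ|_{[u,u+w]}) = |∫_u^{u+w} |γ'(θ)| dθ|`. -/
def arcLen (γ : ℝ → Rn n) (u w : ℝ) : ℝ := |∫ θ in u..(u + w), ‖deriv γ θ‖|

/-- The intrinsic distance `d_γ(u+w,u)`. -/
def idist (γ : ℝ → Rn n) (u w : ℝ) : ℝ :=
  min (arcLen γ u w) (curveLen γ - arcLen γ u w)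

/-- The integrand of the O'Hara energy `E^α`. -/
def ohIntegrand (α : ℝ) (γ : ℝ → Rn n) (u w : ℝ) : ℝ :=
  (1 / ‖γ (u + w) - γ u‖ ^ α - 1 / idist γ u w ^ α) * ‖deriv γ (u + w)‖ * ‖deriv γ u‖

/-- The O'Hara energy `E^α`, with values in `[0,∞]`. -/
def oharaE (α : ℝ) (γ : ℝ → Rn n) : ℝ≥0∞ :=
  ∫⁻ u in Ioc (0:ℝ) 1, ∫⁻ w in Ioo (-(1:ℝ)/2) (1/2), ENNReal.ofReal (ohIntegrand α γ u w)

/-- The O'Hara energy `E^α` as a real number. -/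
def oharaER (α : ℝ) (γ : ℝ → Rn n) : ℝ := (oharaE α γ).toReal

/-- `[−1/2,−ε] ∪ [ε,1/2]`, the `w`-section of `U_ε`. -/
def Wset (ε : ℝ) : Set ℝ := Icc (-(1:ℝ)/2) (-ε) ∪ Icc ε (1/2)

/-- The truncated O'Hara energy `E^α_ε`, an integral over `U_ε`. -/
def oharaEeps (α ε : ℝ) (γ : ℝ → Rn n) : ℝ :=
  ∫ u in Ioc (0:ℝ) 1, ∫ w in Wset ε, ohIntegrand α γ u w

/-- `F` has directional (Gâteaux) derivative `d` at `γ` in direction `h`. -/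
def HasDirDeriv (F : (ℝ → Rn n) → ℝ) (γ h : ℝ → Rn n) (d : ℝ) : Prop :=
  Tendsto (fun τ : ℝ => (F (γ + τ • h) - F γ) / τ) (𝓝[≠] (0:ℝ)) (𝓝 d)

/-- Squared Gagliardo seminorm `[f]²_{H^{s,2}}` of a 1-periodic map. -/
def gagliardoSq (s : ℝ) {E : Type*} [NormedAddCommGroup E] (f : ℝ → E) : ℝ≥0∞ :=
  ∫⁻ u in Ioc (0:ℝ) 1, ∫⁻ w in Ioo (-(1:ℝ)/2) (1/2),
    ENNReal.ofReal (‖f (u + w) - f u‖ ^ 2 / |w| ^ (1 + 2 * s))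

/-- Membership in the fractional Sobolev space `H^{1+σ,2}(ℝ/ℤ,ℝⁿ)`, `σ ∈ (0,1)`:
a 1-periodic `C¹` function whose derivative has finite Gagliardo seminorm of order `σ`. -/
def MemH1 (σ : ℝ) (γ : ℝ → Rn n) : Prop :=
  Function.Periodic γ 1 ∧ ContDiff ℝ 1 γ ∧ gagliardoSq σ (deriv γ) < ⊤

/-- The norm of `H^{1+σ,2}(ℝ/ℤ,ℝⁿ)`. -/
def H1Norm (σ : ℝ) (γ : ℝ → Rn n) : ℝ :=
  Real.sqrt (∫ u in Ioc (0:ℝ) 1, (‖γ u‖ ^ 2 + ‖deriv γ u‖ ^ 2)) +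
    Real.sqrt ((gagliardoSq σ (deriv γ)).toReal)

/-- Membership of a 1-periodic map in `L²(ℝ/ℤ)`. -/
def MemL2per {E : Type*} [NormedAddCommGroup E] (f : ℝ → E) : Prop :=
  Function.Periodic f 1 ∧ AEStronglyMeasurable f (volume : Measure ℝ) ∧
    IntegrableOn (fun u => ‖f u‖ ^ 2) (Ioc (0:ℝ) 1) volume

/-- Membership in the fractional Sobolev space `H^{s,2}(ℝ/ℤ)`, `s ∈ (0,1)`. -/
def MemHs0 (s : ℝ) {E : Type*} [NormedAddCommGroup E] (f : ℝ → E) : Prop :=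
  MemL2per f ∧ gagliardoSq s f < ⊤

/-- The norm of `H^{s,2}(ℝ/ℤ)` for `s ∈ (0,1)`: `‖f‖_{L²} + [f]_{H^{s,2}}`. -/
def Hs0Norm (s : ℝ) {E : Type*} [NormedAddCommGroup E] (f : ℝ → E) : ℝ :=
  Real.sqrt (∫ u in Ioc (0:ℝ) 1, ‖f u‖ ^ 2) + Real.sqrt ((gagliardoSq s f).toReal)

/-- The `k`-th Fourier coefficient (`j`-th component) of a 1-periodic curve. -/
def fCoef (γ : ℝ → Rn n) (k : ℤ) (j : Fin n) : ℂ :=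
  ∫ u in (0:ℝ)..1, (γ u j : ℂ) * Complex.exp ((-2) * (Real.pi : ℂ) * Complex.I * (k : ℂ) * (u : ℂ))

/-- Membership in `H^{s,2}(ℝ/ℤ,ℝⁿ)` via the Fourier characterization:
`((1+|k|²)^{s/2} γ̂(k))_k ∈ ℓ²`. -/
def MemHF (s : ℝ) (γ : ℝ → Rn n) : Prop :=
  Function.Periodic γ 1 ∧ Continuous γ ∧
    Summable (fun k : ℤ => (1 + (k : ℝ) ^ 2) ^ s * ∑ j, ‖fCoef γ k j‖ ^ 2)

/-- The squared Fourier norm of `H^{s,2}(ℝ/ℤ,ℝⁿ)`. -/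
def fNormSq (s : ℝ) (γ : ℝ → Rn n) : ℝ :=
  ∑' k : ℤ, (1 + (k : ℝ) ^ 2) ^ s * ∑ j, ‖fCoef γ k j‖ ^ 2

/-- C¹-norm of a 1-periodic map. -/
def c1Norm (f : ℝ → Rn n) : ℝ := ⨆ u : Icc (0:ℝ) 1, (‖f u.1‖ + ‖deriv f u.1‖)

/-- The integrand of `Q(γ,h)`. -/
def Qintegrand (α : ℝ) (γ h : ℝ → Rn n) (u w : ℝ) : ℝ :=
  ⟪deriv γ u, deriv h u⟫ / |w| ^ α
    - ⟪γ (u + w) - γ u, h (u + w) - h u⟫ / |w| ^ (α + 2)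

/-- The integrand of `R(γ,h)`. -/
def Rintegrand (α : ℝ) (γ h : ℝ → Rn n) (u w : ℝ) : ℝ :=
  2 * ⟪deriv γ u, deriv h u⟫ * (1 / ‖γ (u + w) - γ u‖ ^ α - 1 / |w| ^ α)
    - α * ⟪γ (u + w) - γ u, h (u + w) - h u⟫ *
        (1 / ‖γ (u + w) - γ u‖ ^ (α + 2) - 1 / |w| ^ (α + 2))

/-- `R(γ,h)`, an absolutely convergent double integral over `(ℝ/ℤ) × [−1/2,1/2]`. -/
def Rval (α : ℝ) (γ h : ℝ → Rn n) : ℝ :=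
  ∫ p in (Ioc (0:ℝ) 1) ×ˢ (Icc (-(1:ℝ)/2) (1/2)), Rintegrand α γ h p.1 p.2

/-!
The curve `f = γ'` takes values in the unit sphere, so the average of `f` over `[u, u + w]` is the
chord `(γ (u + w) - γ u) / w`, and its squared length falls short of `1` by half the mean of
`|f (u + s w) - f (u + t w)|²` over `s, t ∈ [0, 1]`. This deficit dominates the `w → 0` singularity
of the energy and of its difference quotients, so one may differentiate under the integral.

Testing the resulting Euler–Lagrange equation with a trigonometric direction of frequency `k`
isolates the `k`-th Fourier coefficient of `f`: it is multiplied by a symbol of order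
`|k| ^ (α - 1)`, and every other term carries a factor `|chord| ^ (-p) - 1`, which is a power series
in the deficit. The deficit is quadratic in the increments of `f`, so the Fourier coefficients of
these terms are `O(|w| ^ (2 θ))` times a convolution square of the sequence `|k| ^ θ |f̂ k|`. With
`θ` slightly above `(α - 1) / 2`, the singular factor `|w| ^ (-α)` is compensated and the
convolution square lies in the weighted `ℓ²` space of every order below `σ - 1 / 2`. Dividing by
the symbol gives the regularity.
-/

/-! ### Weighted sequences on the integers -/

lemma ennreal_rpow_sq (x : ℝ≥0∞) (t : ℝ) : (x ^ t) ^ 2 = (x ^ 2) ^ t := by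
  rw [← ENNReal.rpow_natCast, ← ENNReal.rpow_mul, ← ENNReal.rpow_natCast, ← ENNReal.rpow_mul,
    mul_comm]

lemma ennreal_rpow_le_rpow_of_nonpos {x y : ℝ≥0∞} {s : ℝ} (h : x ≤ y) (hs : s ≤ 0) :
    y ^ s ≤ x ^ s := by
  have h' := ENNReal.inv_le_inv.2 (ENNReal.rpow_le_rpow h (neg_nonneg.2 hs))
  rwa [← ENNReal.rpow_neg, ← ENNReal.rpow_neg, neg_neg] at h'

/-- The weight `⟨k⟩ = 1 + |k|` on frequencies; it is equivalent to `(1 + |k|²)^{1/2}` and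
submultiplicative. -/
def bracket (k : ℤ) : ℝ≥0∞ := 1 + (k.natAbs : ℝ≥0∞)

lemma bracket_ne_zero (k : ℤ) : bracket k ≠ 0 := by simp [bracket]

lemma bracket_ne_top (k : ℤ) : bracket k ≠ ⊤ := by simp [bracket]

lemma one_le_bracket (k : ℤ) : 1 ≤ bracket k := by simp [bracket]

lemma bracket_eq_ofReal (k : ℤ) : bracket k = ENNReal.ofReal (1 + |(k : ℝ)|) := by
  rw [ENNReal.ofReal_add zero_le_one (abs_nonneg _), ENNReal.ofReal_one, bracket, ← Int.cast_abs,
    Int.abs_eq_natAbs, Int.cast_natCast, ENNReal.ofReal_natCast]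

lemma norm_int_le_bracket (k : ℤ) : ENNReal.ofReal |(k : ℝ)| ≤ bracket k := by
  rw [bracket_eq_ofReal]; exact ENNReal.ofReal_le_ofReal (by linarith)

lemma bracket_sq_le (k : ℤ) : bracket k ^ 2 ≤ 2 * ENNReal.ofReal (1 + (k : ℝ) ^ 2) := by
  rw [bracket_eq_ofReal, ← ENNReal.ofReal_pow (by positivity),
    show (2 : ℝ≥0∞) = ENNReal.ofReal 2 by simp, ← ENNReal.ofReal_mul zero_le_two]
  apply ENNReal.ofReal_le_ofReal
  nlinarith [sq_nonneg (1 - |(k : ℝ)|), sq_abs (k : ℝ)]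

lemma le_bracket_sq (k : ℤ) : ENNReal.ofReal (1 + (k : ℝ) ^ 2) ≤ bracket k ^ 2 := by
  rw [bracket_eq_ofReal, ← ENNReal.ofReal_pow (by positivity)]
  apply ENNReal.ofReal_le_ofReal
  nlinarith [abs_nonneg (k : ℝ), sq_abs (k : ℝ)]

lemma bracket_add_le (k l : ℤ) : bracket (k + l) ≤ bracket k * bracket l := by
  have h : ((k + l).natAbs : ℝ≥0∞) ≤ k.natAbs + l.natAbs := by
    exact_mod_cast Int.natAbs_add_le k l
  calc bracket (k + l) ≤ 1 + ((k.natAbs : ℝ≥0∞) + l.natAbs) := by unfold bracket; gcongr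
    _ ≤ 1 + ((k.natAbs : ℝ≥0∞) + l.natAbs) + k.natAbs * l.natAbs := le_self_add
    _ = bracket k * bracket l := by unfold bracket; ring

lemma bracket_le_mul_sub (k l : ℤ) : bracket k ≤ bracket l * bracket (k - l) := by
  simpa using bracket_add_le l (k - l)

lemma bracket_rpow_le_mul_sub {s : ℝ} (hs : 0 ≤ s) (k l : ℤ) :
    bracket k ^ s ≤ bracket l ^ s * bracket (k - l) ^ s := by
  rw [← ENNReal.mul_rpow_of_nonneg _ _ hs]
  exact ENNReal.rpow_le_rpow (bracket_le_mul_sub k l) hs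

lemma tsum_bracket_rpow_lt_top {t : ℝ} (ht : t < -1) : ∑' k, bracket k ^ t < ⊤ := by
  have hpow : Summable fun k : ℤ => |(k : ℝ)| ^ t := by
    simpa using Real.summable_abs_int_rpow (b := -t) (by linarith)
  have hs : Summable fun k : ℤ => (1 + |(k : ℝ)|) ^ t := by
    refine hpow.of_norm_bounded_eventually ((eventually_cofinite_ne 0).mono fun k hk => ?_)
    rw [Real.norm_of_nonneg (by positivity)]
    exact Real.rpow_le_rpow_of_nonpos (by positivity) (by linarith) (by linarith)
  have hbracket : ∀ k, bracket k ^ t = ENNReal.ofReal ((1 + |(k : ℝ)|) ^ t) := fun k => by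
    rw [bracket_eq_ofReal, ENNReal.ofReal_rpow_of_pos (by positivity)]
  simp_rw [hbracket, ← ENNReal.ofReal_tsum_of_nonneg (fun k => by positivity) hs]
  exact ENNReal.ofReal_lt_top

lemma ennreal_sq_tsum_mul_le {ι : Type*} (f g : ι → ℝ≥0∞) :
    (∑' i, f i * g i) ^ 2 ≤ (∑' i, f i ^ 2) * ∑' i, g i ^ 2 := by
  let _ : MeasurableSpace ι := ⊤
  have h := ENNReal.lintegral_mul_le_Lp_mul_Lq (Measure.count : Measure ι)
    Real.HolderConjugate.two_two (f := f) (g := g) measurable_from_top.aemeasurable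
    measurable_from_top.aemeasurable
  simp only [Pi.mul_apply, lintegral_count, ENNReal.rpow_two] at h
  calc _ ≤ ((∑' i, f i ^ 2) ^ (1 / 2 : ℝ) * (∑' i, g i ^ 2) ^ (1 / 2 : ℝ)) ^ 2 := by gcongr
    _ = _ := by
      rw [mul_pow, ← ENNReal.rpow_two, ← ENNReal.rpow_mul, ← ENNReal.rpow_two, ← ENNReal.rpow_mul]
      norm_num

/-- The convolution of two `[0,∞]`-valued functions on a discrete abelian group. -/
def seqConv {G : Type*} [AddCommGroup G] (A B : G → ℝ≥0∞) (k : G) : ℝ≥0∞ := ∑' l, A l * B (k - l)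

/-- The weighted `ℓ¹` norm `∑ ⟨k⟩^s A k`, i.e. the norm of the weighted Wiener algebra on the
Fourier side. -/
def wienerNorm (s : ℝ) (A : ℤ → ℝ≥0∞) : ℝ≥0∞ := ∑' k, bracket k ^ s * A k

/-- The squared weighted `ℓ²` norm `∑ (⟨k⟩^s A k)²`, i.e. the squared norm of `H^s` on the Fourier
side. -/
def sobolevSq (s : ℝ) (A : ℤ → ℝ≥0∞) : ℝ≥0∞ := ∑' k, (bracket k ^ s * A k) ^ 2

lemma seqConv_comm {G : Type*} [AddCommGroup G] (A B : G → ℝ≥0∞) : seqConv A B = seqConv B A := by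
  funext k
  rw [seqConv, seqConv, ← (Equiv.subLeft k).tsum_eq]
  exact tsum_congr fun l => by simp [mul_comm]

lemma seqConv_assoc {G : Type*} [AddCommGroup G] (A B C : G → ℝ≥0∞) :
    seqConv (seqConv A B) C = seqConv A (seqConv B C) := by
  funext k
  simp only [seqConv, ← ENNReal.tsum_mul_left, ← ENNReal.tsum_mul_right]
  rw [ENNReal.tsum_comm]
  refine tsum_congr fun l => ?_
  rw [← (Equiv.addRight l).tsum_eq]
  refine tsum_congr fun m => ?_
  simp only [Equiv.coe_addRight, add_sub_cancel_right, mul_assoc]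
  congr 3; abel

lemma seqConv_const_mul_left {G : Type*} [AddCommGroup G] (c : ℝ≥0∞) (A B : G → ℝ≥0∞) :
    seqConv (fun k => c * A k) B = fun k => c * seqConv A B k := by
  funext k
  simp only [seqConv, mul_assoc, ENNReal.tsum_mul_left]

lemma seqConv_const_mul_right {G : Type*} [AddCommGroup G] (c : ℝ≥0∞) (A B : G → ℝ≥0∞) :
    seqConv A (fun k => c * B k) = fun k => c * seqConv A B k := by
  rw [seqConv_comm, seqConv_const_mul_left, seqConv_comm]

lemma tsum_tsum_sub_eq {G : Type*} [AddCommGroup G] (f : G → G → ℝ≥0∞) :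
    ∑' k, ∑' l, f l (k - l) = ∑' l, ∑' m, f l m := by
  rw [ENNReal.tsum_comm]
  exact tsum_congr fun l => (Equiv.subRight l).tsum_eq (f l)

lemma wienerNorm_seqConv_le {s : ℝ} (hs : 0 ≤ s) (A B : ℤ → ℝ≥0∞) :
    wienerNorm s (seqConv A B) ≤ wienerNorm s A * wienerNorm s B := by
  calc wienerNorm s (seqConv A B)
      ≤ ∑' k, ∑' l, (bracket l ^ s * A l) * (bracket (k - l) ^ s * B (k - l)) := by
        refine ENNReal.tsum_le_tsum fun k => ?_
        rw [seqConv, ← ENNReal.tsum_mul_left]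
        refine ENNReal.tsum_le_tsum fun l => ?_
        rw [mul_mul_mul_comm]
        gcongr
        exact bracket_rpow_le_mul_sub hs k l
    _ = wienerNorm s A * wienerNorm s B := by
        rw [tsum_tsum_sub_eq (fun l m => (bracket l ^ s * A l) * (bracket m ^ s * B m))]
        simp only [ENNReal.tsum_mul_left, ENNReal.tsum_mul_right, wienerNorm]

lemma wienerNorm_sum {ι : Type*} (s : ℝ) (t : Finset ι) (A : ι → ℤ → ℝ≥0∞) :
    wienerNorm s (fun k => ∑ i ∈ t, A i k) = ∑ i ∈ t, wienerNorm s (A i) := by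
  simp only [wienerNorm, Finset.mul_sum]
  exact Summable.tsum_finsetSum fun _ _ => ENNReal.summable

lemma tsum_le_wienerNorm {s : ℝ} (hs : 0 ≤ s) (A : ℤ → ℝ≥0∞) : ∑' k, A k ≤ wienerNorm s A :=
  ENNReal.tsum_le_tsum fun k => by
    simpa using mul_le_mul_left (ENNReal.rpow_le_rpow (one_le_bracket k) hs) (A k)

lemma wienerNorm_const_mul (s : ℝ) (c : ℝ≥0∞) (A : ℤ → ℝ≥0∞) :
    wienerNorm s (fun k => c * A k) = c * wienerNorm s A := by
  rw [wienerNorm, wienerNorm, ← ENNReal.tsum_mul_left]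
  exact tsum_congr fun k => by ring

lemma sobolevSq_seqConv_le {s : ℝ} (hs : 0 ≤ s) (A B : ℤ → ℝ≥0∞) :
    sobolevSq s (seqConv A B) ≤ sobolevSq s A * wienerNorm s B ^ 2 := by
  set a : ℤ → ℝ≥0∞ := fun k => bracket k ^ s * A k with ha
  set b : ℤ → ℝ≥0∞ := fun k => bracket k ^ s * B k with hb
  have sqrt_sq : ∀ x : ℝ≥0∞, (x ^ (1 / 2 : ℝ)) ^ 2 = x := fun x => by
    rw [← ENNReal.rpow_two, ← ENNReal.rpow_mul]; norm_num
  have weighted_le : ∀ k, bracket k ^ s * seqConv A B k ≤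
      ∑' l, (a l * b (k - l) ^ (1 / 2 : ℝ)) * b (k - l) ^ (1 / 2 : ℝ) := fun k => by
    rw [seqConv, ← ENNReal.tsum_mul_left]
    refine ENNReal.tsum_le_tsum fun l => ?_
    rw [mul_assoc (a l), ← sq, sqrt_sq, ha, hb, mul_mul_mul_comm]
    gcongr
    exact bracket_rpow_le_mul_sub hs k l
  have cauchySchwarz : ∀ k, (bracket k ^ s * seqConv A B k) ^ 2 ≤
      (∑' l, a l ^ 2 * b (k - l)) * wienerNorm s B := fun k =>
    calc _ ≤ _ := pow_le_pow_left' (weighted_le k) 2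
      _ ≤ _ := ennreal_sq_tsum_mul_le _ _
      _ = _ := by
        simp only [mul_pow, sqrt_sq]
        congr 1
        exact (Equiv.subLeft k).tsum_eq b
  calc sobolevSq s (seqConv A B) ≤ ∑' k, (∑' l, a l ^ 2 * b (k - l)) * wienerNorm s B :=
        ENNReal.tsum_le_tsum cauchySchwarz
    _ = (∑' l, ∑' m, a l ^ 2 * b m) * wienerNorm s B := by
        rw [ENNReal.tsum_mul_right, tsum_tsum_sub_eq (fun l m => a l ^ 2 * b m)]
    _ = (∑' l, a l ^ 2) * wienerNorm s B * wienerNorm s B := by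
        simp only [ENNReal.tsum_mul_left, ENNReal.tsum_mul_right, wienerNorm, hb]
    _ = sobolevSq s A * wienerNorm s B ^ 2 := by rw [mul_assoc, ← sq, sobolevSq]

lemma sobolevSq_mono {s : ℝ} {A B : ℤ → ℝ≥0∞} (h : A ≤ B) : sobolevSq s A ≤ sobolevSq s B :=
  ENNReal.tsum_le_tsum fun k => by gcongr; exact h k

lemma sobolevSq_mono_exp {s t : ℝ} (h : s ≤ t) (A : ℤ → ℝ≥0∞) : sobolevSq s A ≤ sobolevSq t A :=
  ENNReal.tsum_le_tsum fun k => by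
    gcongr
    exact one_le_bracket k

lemma sobolevSq_const_mul (s : ℝ) (c : ℝ≥0∞) (A : ℤ → ℝ≥0∞) :
    sobolevSq s (fun k => c * A k) = c ^ 2 * sobolevSq s A := by
  rw [sobolevSq, sobolevSq, ← ENNReal.tsum_mul_left]
  exact tsum_congr fun k => by ring

lemma sobolevSq_bracket_mul (s t : ℝ) (A : ℤ → ℝ≥0∞) :
    sobolevSq s (fun k => bracket k ^ t * A k) = sobolevSq (s + t) A :=
  tsum_congr fun k => by
    rw [← mul_assoc, ENNReal.rpow_add _ _ (bracket_ne_zero k) (bracket_ne_top k)]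

lemma sobolevSq_add_lt_top {s : ℝ} {A B : ℤ → ℝ≥0∞} (hA : sobolevSq s A < ⊤)
    (hB : sobolevSq s B < ⊤) : sobolevSq s (fun k => A k + B k) < ⊤ := by
  have hle : sobolevSq s (fun k => A k + B k) ≤ 2 * sobolevSq s A + 2 * sobolevSq s B := by
    simp only [sobolevSq]
    rw [← ENNReal.tsum_mul_left, ← ENNReal.tsum_mul_left, ← ENNReal.tsum_add]
    refine ENNReal.tsum_le_tsum fun k => ?_
    have hsq := ENNReal.rpow_add_le_mul_rpow_add_rpow (bracket k ^ s * A k) (bracket k ^ s * B k)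
      one_le_two
    norm_num at hsq
    simpa only [mul_add] using hsq
  exact hle.trans_lt (by finiteness)

lemma sobolevSq_sum_lt_top {ι : Type*} {s : ℝ} (t : Finset ι) {A : ι → ℤ → ℝ≥0∞}
    (hA : ∀ i, sobolevSq s (A i) < ⊤) : sobolevSq s (fun k => ∑ i ∈ t, A i k) < ⊤ := by
  classical
  induction t using Finset.induction_on with
  | empty => simp [sobolevSq]
  | insert i t hi ih =>
    simp only [Finset.sum_insert hi]
    exact sobolevSq_add_lt_top (hA i) ih

lemma ne_top_of_sobolevSq_lt_top {s : ℝ} {A : ℤ → ℝ≥0∞} (h : sobolevSq s A < ⊤) (k : ℤ) :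
    A k ≠ ⊤ := by
  intro hk
  have hterm := ENNReal.ne_top_of_tsum_ne_top h.ne k
  have hbracket : bracket k ^ s ≠ 0 := by
    simp [ENNReal.rpow_eq_zero_iff, bracket_ne_zero, bracket_ne_top]
  simp [hk, ENNReal.mul_top hbracket] at hterm

lemma wienerNorm_lt_top_of_sobolevSq_lt_top {s t : ℝ} (h : s + 1 / 2 < t) {A : ℤ → ℝ≥0∞}
    (hA : sobolevSq t A < ⊤) : wienerNorm s A < ⊤ := by
  have hsplit : wienerNorm s A = ∑' k, bracket k ^ (s - t) * (bracket k ^ t * A k) :=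
    tsum_congr fun k => by
      rw [← mul_assoc, ← ENNReal.rpow_add _ _ (bracket_ne_zero k) (bracket_ne_top k),
        sub_add_cancel]
  have cauchySchwarz : wienerNorm s A ^ 2 ≤ (∑' k, bracket k ^ (2 * (s - t))) * sobolevSq t A := by
    rw [hsplit]
    refine (ennreal_sq_tsum_mul_le _ _).trans_eq ?_
    congr 1
    exact tsum_congr fun k => by
      rw [← ENNReal.rpow_two, ← ENNReal.rpow_mul]; ring_nf
  have hfin := cauchySchwarz.trans_lt
    (ENNReal.mul_lt_top (tsum_bracket_rpow_lt_top (t := 2 * (s - t)) (by linarith)) hA)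
  exact (ENNReal.pow_lt_top_iff.1 hfin).resolve_right two_ne_zero

lemma bracket_rpow_mul_rpow_sq_le {s μ : ℝ} (hs : s ≤ 0) (hμ : 0 ≤ μ) (k l : ℤ) :
    (bracket k ^ s * bracket l ^ (-μ)) ^ 2 ≤
      bracket k ^ (2 * (s - μ)) + bracket l ^ (2 * (s - μ)) := by
  have min_le : ∀ m : ℤ, bracket m ≤ bracket k → bracket m ≤ bracket l →
      (bracket k ^ s * bracket l ^ (-μ)) ^ 2 ≤ bracket m ^ (2 * (s - μ)) := fun m hk hl =>
    calc (bracket k ^ s * bracket l ^ (-μ)) ^ 2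
        ≤ (bracket m ^ s * bracket m ^ (-μ)) ^ 2 := by
          gcongr ?_ ^ 2
          exact mul_le_mul' (ennreal_rpow_le_rpow_of_nonpos hk hs)
            (ennreal_rpow_le_rpow_of_nonpos hl (neg_nonpos.2 hμ))
      _ = bracket m ^ (2 * (s - μ)) := by
          rw [← ENNReal.rpow_add _ _ (bracket_ne_zero m) (bracket_ne_top m), ← ENNReal.rpow_two,
            ← ENNReal.rpow_mul]
          ring_nf
  rcases le_total (bracket k) (bracket l) with h | h
  · exact (min_le k le_rfl h).trans le_self_add
  · exact (min_le l h le_rfl).trans le_add_self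

lemma tsum_bracket_rpow_mul_rpow_sub_sq_le {s μ : ℝ} (hs : s ≤ 0) (hμ : 0 ≤ μ) (l : ℤ) :
    ∑' k, (bracket k ^ s * bracket (k - l) ^ (-μ)) ^ 2 ≤
      2 * ∑' k, bracket k ^ (2 * (s - μ)) := by
  have hshift : ∑' k, bracket (k - l) ^ (2 * (s - μ)) = ∑' k, bracket k ^ (2 * (s - μ)) :=
    (Equiv.subRight l).tsum_eq fun k => bracket k ^ (2 * (s - μ))
  calc _ ≤ ∑' k, (bracket k ^ (2 * (s - μ)) + bracket (k - l) ^ (2 * (s - μ))) :=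
        ENNReal.tsum_le_tsum fun k => bracket_rpow_mul_rpow_sq_le hs hμ k (k - l)
    _ = _ := by rw [ENNReal.tsum_add, hshift, ← two_mul]

lemma sobolevSq_seqConv_le_of_nonpos {s μ : ℝ} (hs : s ≤ 0) (hμ : 0 ≤ μ) (A B : ℤ → ℝ≥0∞) :
    sobolevSq s (seqConv A B) ≤
      2 * (∑' k, bracket k ^ (2 * (s - μ))) * sobolevSq 0 A * sobolevSq μ B := by
  set S := ∑' k, bracket k ^ (2 * (s - μ))
  set K : ℤ → ℤ → ℝ≥0∞ := fun k l => bracket k ^ s * bracket (k - l) ^ (-μ) with hK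
  set b : ℤ → ℝ≥0∞ := fun k => bracket k ^ μ * B k with hb
  have cauchySchwarz : ∀ k, (bracket k ^ s * seqConv A B k) ^ 2 ≤
      (∑' l, (K k l * A l) ^ 2) * ∑' l, b l ^ 2 := fun k => by
    have hsplit : bracket k ^ s * seqConv A B k = ∑' l, (K k l * A l) * b (k - l) := by
      rw [seqConv, ← ENNReal.tsum_mul_left]
      refine tsum_congr fun l => ?_
      have hcancel : bracket (k - l) ^ (-μ) * bracket (k - l) ^ μ = 1 := by
        rw [← ENNReal.rpow_add _ _ (bracket_ne_zero _) (bracket_ne_top _)]; simp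
      calc _ = bracket k ^ s * 1 * (A l * B (k - l)) := by ring
        _ = _ := by rw [← hcancel]; simp only [hK, hb]; ring
    rw [hsplit, ← (Equiv.subLeft k).tsum_eq (fun l => b l ^ 2)]
    exact ennreal_sq_tsum_mul_le _ _
  calc sobolevSq s (seqConv A B) ≤ ∑' k, (∑' l, (K k l * A l) ^ 2) * ∑' l, b l ^ 2 :=
        ENNReal.tsum_le_tsum cauchySchwarz
    _ = (∑' l, (∑' k, K k l ^ 2) * A l ^ 2) * sobolevSq μ B := by
        rw [ENNReal.tsum_mul_right, ENNReal.tsum_comm]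
        simp only [mul_pow, ENNReal.tsum_mul_right, sobolevSq, hb]
    _ ≤ (∑' l, 2 * S * A l ^ 2) * sobolevSq μ B := by
        gcongr with l
        exact tsum_bracket_rpow_mul_rpow_sub_sq_le hs hμ l
    _ = _ := by simp only [ENNReal.tsum_mul_left, sobolevSq, ENNReal.rpow_zero, one_mul]

lemma sobolevSq_seqConv_lt_top {s μ : ℝ} (hμ : 0 ≤ μ) (hs : s + 1 / 2 < μ) {A B : ℤ → ℝ≥0∞}
    (hA : sobolevSq (max s 0) A < ⊤) (hB : sobolevSq μ B < ⊤) :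
    sobolevSq s (seqConv A B) < ⊤ := by
  rcases le_or_gt 0 s with h0 | h0
  · rw [max_eq_left h0] at hA
    exact (sobolevSq_seqConv_le h0 A B).trans_lt
      (ENNReal.mul_lt_top hA (ENNReal.pow_lt_top (wienerNorm_lt_top_of_sobolevSq_lt_top hs hB)))
  · rw [max_eq_right h0.le] at hA
    have hS : ∑' k, bracket k ^ (2 * (s - μ)) < ⊤ := tsum_bracket_rpow_lt_top (by linarith)
    exact (sobolevSq_seqConv_le_of_nonpos h0.le hμ A B).trans_lt
      (ENNReal.mul_lt_top (ENNReal.mul_lt_top (ENNReal.mul_lt_top (by simp) hS) hA) hB)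

/-! ### Fourier coefficients of periodic functions -/

/-- The character `u ↦ e^{2πiku}` of `ℝ/ℤ`, as a function on `ℝ`. -/
def mode (k : ℤ) (u : ℝ) : ℂ := fourier k (u : UnitAddCircle)

lemma mode_eq_exp (k : ℤ) (u : ℝ) : mode k u = Complex.exp (2 * Real.pi * Complex.I * k * u) := by
  simp [mode]

lemma mode_continuous (k : ℤ) : Continuous (mode k) :=
  (map_continuous (fourier k)).comp (AddCircle.continuous_mk' 1)

lemma norm_mode (k : ℤ) (u : ℝ) : ‖mode k u‖ = 1 := Circle.norm_coe _

lemma mode_add (k : ℤ) (u w : ℝ) : mode k (u + w) = mode k u * mode k w := by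
  simp only [mode_eq_exp, ← Complex.exp_add]; push_cast; ring_nf

lemma mode_add_left (k l : ℤ) (u : ℝ) : mode (k + l) u = mode k u * mode l u := fourier_add

lemma mode_zero (k : ℤ) : mode k 0 = 1 := by simp [mode_eq_exp]

lemma mode_zero_left (u : ℝ) : mode 0 u = 1 := fourier_zero

lemma mode_periodic (k : ℤ) : Function.Periodic (mode k) 1 := fun u =>
  congrArg (fourier k) (AddCircle.coe_add_period 1 u)

lemma mode_one (k : ℤ) : mode k 1 = 1 := by
  simpa [mode_zero] using mode_periodic k 0

lemma mode_mul_neg (k : ℤ) (u : ℝ) : mode k u * mode (-k) u = 1 := by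
  rw [← mode_add_left, add_neg_cancel, mode_zero_left]

lemma hasDerivAt_mode (k : ℤ) (u : ℝ) :
    HasDerivAt (mode k) (2 * Real.pi * Complex.I * k * mode k u) u :=
  (hasDerivAt_fourier 1 k u).congr_deriv (by simp [mode])

/-- A continuous `1`-periodic function. -/
structure ContPer {E : Type*} [TopologicalSpace E] (F : ℝ → E) : Prop where
  cont : Continuous F
  per : Function.Periodic F 1

lemma contPer_mode (k : ℤ) : ContPer (mode k) := ⟨mode_continuous k, mode_periodic k⟩

namespace ContPer

variable {E : Type*} [TopologicalSpace E]

lemma const (c : E) : ContPer (fun _ : ℝ => c) := ⟨continuous_const, fun _ => rfl⟩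

lemma shift {F : ℝ → E} (hF : ContPer F) (w : ℝ) : ContPer (fun u => F (u + w)) :=
  ⟨hF.cont.comp (by fun_prop), fun u => by rw [add_right_comm, hF.per]⟩

lemma mul [Mul E] [ContinuousMul E] {F G : ℝ → E} (hF : ContPer F) (hG : ContPer G) :
    ContPer (fun u => F u * G u) :=
  ⟨hF.cont.mul hG.cont, hF.per.mul hG.per⟩

lemma add [Add E] [ContinuousAdd E] {F G : ℝ → E} (hF : ContPer F) (hG : ContPer G) :
    ContPer (fun u => F u + G u) :=
  ⟨hF.cont.add hG.cont, hF.per.add hG.per⟩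

lemma sub [Sub E] [ContinuousSub E] {F G : ℝ → E} (hF : ContPer F) (hG : ContPer G) :
    ContPer (fun u => F u - G u) :=
  ⟨hF.cont.sub hG.cont, hF.per.sub hG.per⟩

lemma pow [Monoid E] [ContinuousMul E] {F : ℝ → E} (hF : ContPer F) (m : ℕ) :
    ContPer (fun u => F u ^ m) :=
  ⟨hF.cont.pow m, fun u => by simp only [hF.per u]⟩

lemma sum [AddCommMonoid E] [ContinuousAdd E] {ι : Type*} (t : Finset ι) {F : ι → ℝ → E}
    (hF : ∀ i, ContPer (F i)) : ContPer (fun u => ∑ i ∈ t, F i u) :=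
  ⟨continuous_finsetSum _ fun i _ => (hF i).cont, fun u => by simp only [fun i => (hF i).per u]⟩

lemma intervalIntegrable_mul_mode {F : ℝ → ℂ} (hF : ContPer F) (k : ℤ) :
    IntervalIntegrable (fun u => F u * mode k u) volume 0 1 :=
  (hF.cont.mul (mode_continuous k)).intervalIntegrable _ _

end ContPer

/-- The `k`-th Fourier coefficient of a `1`-periodic function. -/
def fourierCoef (F : ℝ → ℂ) (k : ℤ) : ℂ := ∫ u in (0 : ℝ)..1, F u * mode (-k) u

lemma fourierCoef_sub {F G : ℝ → ℂ} (hF : ContPer F) (hG : ContPer G) (k : ℤ) :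
    fourierCoef (fun u => F u - G u) k = fourierCoef F k - fourierCoef G k := by
  simp only [fourierCoef, sub_mul]
  exact intervalIntegral.integral_sub (hF.intervalIntegrable_mul_mode _)
    (hG.intervalIntegrable_mul_mode _)

lemma fourierCoef_const_mul (c : ℂ) (F : ℝ → ℂ) (k : ℤ) :
    fourierCoef (fun u => c * F u) k = c * fourierCoef F k := by
  simp only [fourierCoef, mul_assoc]
  exact intervalIntegral.integral_const_mul _ _

lemma fourierCoef_sum {ι : Type*} (t : Finset ι) {F : ι → ℝ → ℂ} (hF : ∀ i, ContPer (F i))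
    (k : ℤ) : fourierCoef (fun u => ∑ i ∈ t, F i u) k = ∑ i ∈ t, fourierCoef (F i) k := by
  simp only [fourierCoef, Finset.sum_mul]
  exact intervalIntegral.integral_finsetSum fun i _ => (hF i).intervalIntegrable_mul_mode _

lemma integral_mode (k : ℤ) : ∫ u in (0 : ℝ)..1, mode k u = if k = 0 then 1 else 0 := by
  split_ifs with hk
  · simp [hk, mode_zero_left]
  · have hne : (2 * Real.pi * Complex.I * k : ℂ) ≠ 0 := by
      simp [hk, Real.pi_ne_zero, Complex.I_ne_zero]
    have hint : ∫ u in (0 : ℝ)..1, 2 * Real.pi * Complex.I * k * mode k u = mode k 1 - mode k 0 :=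
      intervalIntegral.integral_eq_sub_of_hasDerivAt (fun u _ => hasDerivAt_mode k u)
        ((continuous_const.mul (mode_continuous k)).intervalIntegrable _ _)
    rw [intervalIntegral.integral_const_mul, mode_one, mode_zero, sub_self] at hint
    exact (mul_eq_zero.1 hint).resolve_left hne

lemma fourierCoef_mode (l k : ℤ) : fourierCoef (mode l) k = if l = k then 1 else 0 := by
  simp only [fourierCoef, ← mode_add_left, integral_mode]
  congr 1; rw [← sub_eq_add_neg, sub_eq_zero]

lemma fourierCoef_const (c : ℂ) (k : ℤ) : fourierCoef (fun _ => c) k = if k = 0 then c else 0 := by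
  simp only [fourierCoef, intervalIntegral.integral_const_mul, integral_mode]; simp

lemma norm_fourierCoef_le {F : ℝ → ℂ} {C : ℝ} (hF : ∀ u, ‖F u‖ ≤ C) (k : ℤ) :
    ‖fourierCoef F k‖ ≤ C := by
  simpa [fourierCoef] using intervalIntegral.norm_integral_le_of_norm_le_const
    (a := (0 : ℝ)) (b := 1) (f := fun u => F u * mode (-k) u) (C := C)
    (fun u _ => by rw [norm_mul, norm_mode, mul_one]; exact hF u)

lemma fourierCoef_shift {F : ℝ → ℂ} (hF : ContPer F) (w : ℝ) (k : ℤ) :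
    fourierCoef (fun u => F (u + w)) k = mode k w * fourierCoef F k := by
  have hfactor : ∀ u, F (u + w) * mode (-k) u = mode k w * (F (u + w) * mode (-k) (u + w)) :=
    fun u => by rw [mode_add]; linear_combination (-F (u + w) * mode (-k) u) * mode_mul_neg k w
  simp only [fourierCoef, hfactor, intervalIntegral.integral_const_mul]
  rw [intervalIntegral.integral_comp_add_right (fun u => F u * mode (-k) u), zero_add, add_comm 1 w]
  have hper := (hF.per.mul (mode_periodic (-k))).intervalIntegral_add_eq w 0
  rw [zero_add] at hper
  exact congrArg (mode k w * ·) hper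

lemma fourierCoef_deriv {F F' : ℝ → ℂ} (hF : ContPer F) (hF' : Continuous F')
    (hd : ∀ u, HasDerivAt F (F' u) u) (k : ℤ) :
    fourierCoef F' k = 2 * Real.pi * Complex.I * k * fourierCoef F k := by
  have hparts := intervalIntegral.integral_mul_deriv_eq_deriv_mul (a := 0) (b := 1)
    (fun u _ => hd u) (fun u _ => hasDerivAt_mode (-k) u) (hF'.intervalIntegrable _ _)
    ((continuous_const.mul (mode_continuous (-k))).intervalIntegrable _ _)
  have hpull : ∫ u in (0 : ℝ)..1, F u * (2 * Real.pi * Complex.I * ((-k : ℤ) : ℂ) * mode (-k) u) =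
      -(2 * Real.pi * Complex.I * k) * fourierCoef F k := by
    rw [fourierCoef, ← intervalIntegral.integral_const_mul]
    congr 1; funext u; push_cast; ring
  have hends : F 1 = F 0 := by simpa using hF.per 0
  rw [hpull, hends, mode_one, mode_zero, sub_self] at hparts
  rw [fourierCoef]; linear_combination hparts

lemma hasSum_fourierCoef {F : ℝ → ℂ} (hF : ContPer F) (hs : Summable (fourierCoef F)) (u : ℝ) :
    HasSum (fun k => fourierCoef F k * mode k u) (F u) := by
  let f : C(UnitAddCircle, ℂ) := ⟨hF.per.lift, continuous_coinduced_dom.2 hF.cont⟩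
  have hcoeff : fourierCoeff f = fourierCoef F := funext fun k => by
    rw [fourierCoeff_eq_intervalIntegral _ _ 0, fourierCoef]
    simp only [zero_add, div_one, one_smul, smul_eq_mul]
    exact intervalIntegral.integral_congr fun u _ => mul_comm _ _
  have hsum := has_pointwise_sum_fourier_series_of_summable (f := f)
    (by rwa [hcoeff]) (u : UnitAddCircle)
  rwa [hcoeff] at hsum

lemma hasSum_fourierCoef_mul {F G : ℝ → ℂ} (hF : ContPer F) (hG : ContPer G)
    (hs : Summable (fourierCoef F)) (k : ℤ) :
    HasSum (fun l => fourierCoef F l * fourierCoef G (k - l))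
      (fourierCoef (fun u => F u * G u) k) := by
  obtain ⟨C, hC⟩ := (isCompact_Icc (a := (0 : ℝ)) (b := 1)).exists_bound_of_continuousOn
    hG.cont.continuousOn
  have hsum : ∀ u, HasSum (fun l => fourierCoef F l * (G u * mode (-(k - l)) u))
      (F u * G u * mode (-k) u) := fun u => by
    rw [mul_assoc]
    refine ((hasSum_fourierCoef hF hs u).mul_right (G u * mode (-k) u)).congr_fun fun l => ?_
    rw [show -(k - l) = -k + l by ring, mode_add_left]; ring
  have hint := intervalIntegral.hasSum_integral_of_dominated_convergence (a := 0) (b := 1)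
    (μ := volume) (F := fun l u => fourierCoef F l * (G u * mode (-(k - l)) u))
    (fun l _ => ‖fourierCoef F l‖ * C)
    (fun l => (continuous_const.mul (hG.cont.mul (mode_continuous _))).aestronglyMeasurable)
    (fun l => Eventually.of_forall fun u hu => by
      rw [uIoc_of_le zero_le_one] at hu
      simp only [norm_mul, norm_mode, mul_one]
      gcongr
      exact hC u ⟨hu.1.le, hu.2⟩)
    (Eventually.of_forall fun u _ => hs.norm.mul_right C) (by simp)
    (Eventually.of_forall fun u _ => hsum u)
  simpa only [intervalIntegral.integral_const_mul] using! hint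

/-- `FourierLE F A`: the Fourier coefficients of `F` are dominated in modulus by the sequence `A`.
Products of functions then correspond to convolutions of the dominating sequences. -/
def FourierLE (F : ℝ → ℂ) (A : ℤ → ℝ≥0∞) : Prop := ∀ k, ‖fourierCoef F k‖ₑ ≤ A k

lemma fourierCoef_average {G : ℝ → ℝ → ℂ} (hG : Continuous (Function.uncurry G)) (k : ℤ) :
    fourierCoef (fun u => ∫ s in (0 : ℝ)..1, G s u) k = ∫ s in (0 : ℝ)..1, fourierCoef (G s) k := by
  simp only [fourierCoef, ← intervalIntegral.integral_mul_const]
  refine intervalIntegral_intervalIntegral_swap ?_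
  have hc : Continuous (Function.uncurry fun u s : ℝ => G s u * mode (-k) u) :=
    (hG.comp continuous_swap).mul ((mode_continuous (-k)).comp continuous_fst)
  rw [uIoc_of_le zero_le_one]
  exact (hc.continuousOn.integrableOn_compact (isCompact_Icc.prod isCompact_Icc)).mono_set
    (Set.prod_mono Ioc_subset_Icc_self Ioc_subset_Icc_self)

namespace FourierLE

lemma mono {F : ℝ → ℂ} {A B : ℤ → ℝ≥0∞} (h : FourierLE F A) (hAB : A ≤ B) : FourierLE F B :=
  fun k => (h k).trans (hAB k)

lemma const_mul {F : ℝ → ℂ} {A : ℤ → ℝ≥0∞} (h : FourierLE F A) (c : ℂ) :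
    FourierLE (fun u => c * F u) (fun k => ‖c‖ₑ * A k) := fun k => by
  rw [fourierCoef_const_mul, enorm_mul]; exact mul_le_mul_right (h k) _

lemma sub {F G : ℝ → ℂ} {A B : ℤ → ℝ≥0∞} (hF : ContPer F) (hG : ContPer G) (hA : FourierLE F A)
    (hB : FourierLE G B) : FourierLE (fun u => F u - G u) (fun k => A k + B k) := fun k => by
  rw [fourierCoef_sub hF hG]
  exact enorm_sub_le.trans (add_le_add (hA k) (hB k))

lemma sum {ι : Type*} (t : Finset ι) {F : ι → ℝ → ℂ} {A : ι → ℤ → ℝ≥0∞}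
    (hF : ∀ i, ContPer (F i)) (hA : ∀ i, FourierLE (F i) (A i)) :
    FourierLE (fun u => ∑ i ∈ t, F i u) (fun k => ∑ i ∈ t, A i k) := fun k => by
  rw [fourierCoef_sum t hF]; exact (enorm_sum_le _ _).trans (Finset.sum_le_sum fun i _ => hA i k)

lemma shift {F : ℝ → ℂ} {A : ℤ → ℝ≥0∞} (hF : ContPer F) (hA : FourierLE F A) (w : ℝ) :
    FourierLE (fun u => F (u + w)) A := fun k => by
  rw [fourierCoef_shift hF, enorm_mul, ← ofReal_norm (mode k w), norm_mode, ENNReal.ofReal_one,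
    one_mul]
  exact hA k

lemma average {G : ℝ → ℝ → ℂ} {A : ℤ → ℝ≥0∞} (hG : Continuous (Function.uncurry G))
    (hA : ∀ s ∈ Icc (0 : ℝ) 1, FourierLE (G s) A) :
    FourierLE (fun u => ∫ s in (0 : ℝ)..1, G s u) A := fun k => by
  rw [fourierCoef_average hG k, ← ofReal_norm]
  by_cases hk : A k = ⊤
  · simp [hk]
  have hbound : ‖∫ s in (0 : ℝ)..1, fourierCoef (G s) k‖ ≤ (A k).toReal * |1 - 0| :=
    intervalIntegral.norm_integral_le_of_norm_le_const fun s hs => by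
      rw [uIoc_of_le zero_le_one] at hs
      simpa using ENNReal.toReal_mono hk (hA s ⟨hs.1.le, hs.2⟩ k)
  exact ENNReal.ofReal_le_of_le_toReal (by simpa using hbound)

lemma tsum {F : ℝ → ℂ} {G : ℕ → ℝ → ℂ} {Y : ℕ → ℤ → ℝ≥0∞} {g : ℕ → ℝ}
    (hG : ∀ m, ContPer (G m)) (hg : ∀ m u, ‖G m u‖ ≤ g m) (hs : Summable g)
    (hF : ∀ u, HasSum (fun m => G m u) (F u)) (hY : ∀ m, FourierLE (G m) (Y m)) :
    FourierLE F (fun k => ∑' m, Y m k) := fun k => by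
  have hsum := intervalIntegral.hasSum_integral_of_dominated_convergence (a := (0 : ℝ)) (b := 1)
    (μ := volume) (F := fun m u => G m u * mode (-k) u) (f := fun u => F u * mode (-k) u)
    (fun m _ => g m)
    (fun m => ((hG m).cont.mul (mode_continuous _)).aestronglyMeasurable)
    (fun m => Eventually.of_forall fun u _ => by
      simp only [norm_mul, norm_mode, mul_one]; exact hg m u)
    (Eventually.of_forall fun u _ => hs) (by simp)
    (Eventually.of_forall fun u _ => (hF u).mul_right _)
  rw [fourierCoef, ← hsum.tsum_eq]
  exact enorm_tsum_le_tsum_enorm.trans (ENNReal.tsum_le_tsum fun m => hY m k)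

lemma summable {F : ℝ → ℂ} {A : ℤ → ℝ≥0∞} (h : FourierLE F A) (hA : ∑' k, A k ≠ ⊤) :
    Summable (fourierCoef F) := by
  refine Summable.of_norm ?_
  have hfin : ∑' k, ‖fourierCoef F k‖ₑ ≠ ⊤ := ne_top_of_le_ne_top hA (ENNReal.tsum_le_tsum h)
  simpa [enorm, Function.comp_def] using ENNReal.summable_toReal hfin

lemma mul_of_summable {F G : ℝ → ℂ} {A B : ℤ → ℝ≥0∞} (hF : ContPer F) (hG : ContPer G)
    (hA : FourierLE F A) (hB : FourierLE G B) (hs : Summable (fourierCoef F)) :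
    FourierLE (fun u => F u * G u) (seqConv A B) := fun k => by
  rw [← (hasSum_fourierCoef_mul hF hG hs k).tsum_eq]
  refine enorm_tsum_le_tsum_enorm.trans (ENNReal.tsum_le_tsum fun l => ?_)
  rw [enorm_mul]
  exact mul_le_mul' (hA l) (hB _)

lemma mul {F G : ℝ → ℂ} {A B : ℤ → ℝ≥0∞} (hF : ContPer F) (hG : ContPer G)
    (hA : FourierLE F A) (hB : FourierLE G B) (hs : ∑' k, A k ≠ ⊤) :
    FourierLE (fun u => F u * G u) (seqConv A B) :=
  mul_of_summable hF hG hA hB (hA.summable hs)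

lemma enorm_le {F : ℝ → ℂ} {A : ℤ → ℝ≥0∞} (hF : ContPer F) (h : FourierLE F A)
    (hA : ∑' k, A k ≠ ⊤) (u : ℝ) : ‖F u‖ₑ ≤ ∑' k, A k := by
  rw [← (hasSum_fourierCoef hF (h.summable hA) u).tsum_eq]
  refine enorm_tsum_le_tsum_enorm.trans (ENNReal.tsum_le_tsum fun k => ?_)
  rw [enorm_mul, ← ofReal_norm (mode k u), norm_mode, ENNReal.ofReal_one, mul_one]
  exact h k

end FourierLE

/-! ### Convolution powers and power series -/

/-- Convolution powers; the zeroth one is the unit `δ₀` of convolution. -/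
def convPow (A : ℤ → ℝ≥0∞) : ℕ → ℤ → ℝ≥0∞
  | 0 => fun k => if k = 0 then 1 else 0
  | m + 1 => seqConv A (convPow A m)

lemma wienerNorm_convPow_le {s : ℝ} (hs : 0 ≤ s) (A : ℤ → ℝ≥0∞) (m : ℕ) :
    wienerNorm s (convPow A m) ≤ wienerNorm s A ^ m := by
  induction m with
  | zero =>
    rw [wienerNorm, tsum_eq_single 0 fun k hk => by simp [convPow, hk]]
    simp [convPow, bracket]
  | succ m ih =>
    rw [pow_succ']
    exact (wienerNorm_seqConv_le hs _ _).trans (mul_le_mul_right ih _)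

lemma convPow_eq_zero {A : ℤ → ℝ≥0∞} {D : ℕ} (hA : ∀ k : ℤ, D < k.natAbs → A k = 0) (m : ℕ) :
    ∀ k : ℤ, m * D < k.natAbs → convPow A m k = 0 := by
  induction m with
  | zero => exact fun k hk => if_neg (by omega)
  | succ m ih =>
    intro k hk
    refine ENNReal.tsum_eq_zero.2 fun l => ?_
    rcases lt_or_ge D l.natAbs with h | h
    · simp [hA l h]
    · rw [ih (k - l) (by rw [add_mul, one_mul] at hk; omega), mul_zero]

lemma FourierLE.pow {F : ℝ → ℂ} {A : ℤ → ℝ≥0∞} (hF : ContPer F) (h : FourierLE F A)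
    (hA : ∑' k, A k ≠ ⊤) (m : ℕ) : FourierLE (fun u => F u ^ m) (convPow A m) := by
  induction m with
  | zero =>
    intro k
    simp only [pow_zero, fourierCoef_const, convPow]
    split_ifs <;> simp
  | succ m ih =>
    simp only [pow_succ']
    exact h.mul hF (hF.pow m) ih hA

/-- The constant `Q^j` on the frequency band `|k| ≤ jD`. It dominates the Fourier coefficients of
the `j`-th power of a trigonometric polynomial of degree `D` with supremum norm at most `Q`. -/
def bandPow (Q : ℝ) (D j : ℕ) (k : ℤ) : ℝ≥0∞ :=
  if k.natAbs ≤ j * D then ENNReal.ofReal (Q ^ j) else 0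

lemma FourierLE.pow_bandPow {F : ℝ → ℂ} {A : ℤ → ℝ≥0∞} {Q : ℝ} {D : ℕ} (hF : ContPer F)
    (h : FourierLE F A) (hA : ∑' k, A k ≠ ⊤) (hD : ∀ k : ℤ, D < k.natAbs → A k = 0)
    (hQ : ∀ u, ‖F u‖ ≤ Q) (j : ℕ) : FourierLE (fun u => F u ^ j) (bandPow Q D j) := by
  intro k
  rw [bandPow]
  split_ifs with hk
  · rw [← ofReal_norm]
    refine ENNReal.ofReal_le_ofReal (norm_fourierCoef_le (fun u => ?_) k)
    rw [norm_pow]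
    exact pow_le_pow_left₀ (norm_nonneg _) (hQ u) j
  · rw [← convPow_eq_zero hD j k (by omega)]
    exact h.pow hF hA j k

lemma exists_polynomial_mul_pow_le_pow (K D : ℕ) {Q Q' : ℝ} (hQ : 0 ≤ Q) (hQQ' : Q < Q') :
    ∃ C : ℝ, 0 ≤ C ∧ ∀ j : ℕ, (1 + 2 * (j * D : ℝ)) ^ K * Q ^ j ≤ C * Q' ^ j := by
  have hQ' : 0 < Q' := hQ.trans_lt hQQ'
  have hratio : |Q / Q'| < 1 := by
    rwa [abs_of_nonneg (by positivity), div_lt_one hQ']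
  obtain ⟨B, hB⟩ := (tendsto_pow_const_mul_const_pow_of_abs_lt_one K hratio).bddAbove_range
  have hB' : ∀ j : ℕ, (j : ℝ) ^ K * (Q / Q') ^ j ≤ B := fun j => hB ⟨j, rfl⟩
  have hB0 : 0 ≤ B := le_trans (by positivity) (hB' 0)
  refine ⟨(1 + 2 * (D : ℝ)) ^ K * (B + 1), by positivity, fun j => ?_⟩
  rcases Nat.eq_zero_or_pos j with rfl | hj
  · have hone : (1 : ℝ) ≤ (1 + 2 * (D : ℝ)) ^ K := one_le_pow₀ (by simp)
    simpa using one_le_mul_of_one_le_of_one_le hone (by linarith : 1 ≤ B + 1)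
  · have hj1 : (1 : ℝ) ≤ j := by exact_mod_cast hj
    have hlin : 1 + 2 * (j * D : ℝ) ≤ (1 + 2 * D) * j := by
      nlinarith [Nat.cast_nonneg (α := ℝ) D]
    calc (1 + 2 * (j * D : ℝ)) ^ K * Q ^ j ≤ ((1 + 2 * D) * j) ^ K * Q ^ j := by gcongr
      _ = (1 + 2 * (D : ℝ)) ^ K * ((j : ℝ) ^ K * (Q / Q') ^ j) * Q' ^ j := by
        rw [mul_pow, div_pow]; field_simp
      _ ≤ (1 + 2 * (D : ℝ)) ^ K * (B + 1) * Q' ^ j := by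
        gcongr; linarith [hB' j]

lemma wienerNorm_bandPow_le {s : ℝ} (hs : 0 ≤ s) (Q : ℝ) (D j : ℕ) {K : ℕ} (hK : s + 1 ≤ K) :
    wienerNorm s (bandPow Q D j) ≤
      ENNReal.ofReal ((1 + 2 * (j * D : ℝ)) ^ K) * ENNReal.ofReal (Q ^ j) := by
  set N : ℕ := j * D with hN
  set B : ℝ≥0∞ := 1 + 2 * (N : ℝ≥0∞) with hB
  have hB_ofReal : ENNReal.ofReal ((1 + 2 * (j * D : ℝ)) ^ K) = B ^ K := by
    rw [ENNReal.ofReal_pow (by positivity), ENNReal.ofReal_add zero_le_one (by positivity),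
      ENNReal.ofReal_mul zero_le_two, ← Nat.cast_mul, ENNReal.ofReal_natCast]
    simp [hB, hN]
  have hsupport : wienerNorm s (bandPow Q D j) =
      ∑ k ∈ Finset.Icc (-(N : ℤ)) N, bracket k ^ s * bandPow Q D j k := by
    refine tsum_eq_sum fun k hk => ?_
    rw [bandPow, if_neg, mul_zero]
    simp only [Finset.mem_Icc, not_and, not_le] at hk
    omega
  have hterm : ∀ k ∈ Finset.Icc (-(N : ℤ)) N,
      bracket k ^ s * bandPow Q D j k ≤ B ^ s * ENNReal.ofReal (Q ^ j) := fun k hk => by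
    rw [Finset.mem_Icc] at hk
    gcongr
    · have hkN : (k.natAbs : ℝ≥0∞) ≤ N := by exact_mod_cast (by omega : k.natAbs ≤ N)
      calc bracket k ≤ 1 + (N : ℝ≥0∞) := by unfold bracket; gcongr
        _ ≤ B := by rw [hB, two_mul]; gcongr; exact le_self_add
    · rw [bandPow]; split_ifs <;> simp
  have hcard : ((Finset.Icc (-(N : ℤ)) N).card : ℝ≥0∞) = B := by
    rw [Int.card_Icc, show ((N : ℤ) + 1 - -N).toNat = 1 + 2 * N by omega]; simp [hB]
  calc wienerNorm s (bandPow Q D j) ≤ B * (B ^ s * ENNReal.ofReal (Q ^ j)) := by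
        rw [hsupport, ← hcard, ← nsmul_eq_mul, hcard]
        exact Finset.sum_le_card_nsmul _ _ _ hterm
    _ = B ^ (1 + s) * ENNReal.ofReal (Q ^ j) := by
        rw [ENNReal.rpow_add_of_nonneg _ _ zero_le_one hs, ENNReal.rpow_one, mul_assoc]
    _ ≤ B ^ (K : ℝ) * ENNReal.ofReal (Q ^ j) := by
        gcongr
        · exact le_self_add
        · linarith
    _ = _ := by rw [hB_ofReal, ENNReal.rpow_natCast]

/-- A sequence dominating the Fourier coefficients of `(p + r)^m` when `p` is a trigonometric
polynomial of degree `D` bounded by `Q` and the coefficients of `r` are dominated by `R`. -/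
def powBound (Q : ℝ) (D : ℕ) (R : ℤ → ℝ≥0∞) (m : ℕ) (k : ℤ) : ℝ≥0∞ :=
  ∑ j ∈ Finset.range (m + 1), seqConv (bandPow Q D j) (convPow R (m - j)) k * (m.choose j : ℝ≥0∞)

lemma tsum_bandPow_ne_top (Q : ℝ) (D j : ℕ) : ∑' k, bandPow Q D j k ≠ ⊤ := by
  have hle := (tsum_le_wienerNorm le_rfl _).trans
    (wienerNorm_bandPow_le le_rfl Q D j (K := 1) (by simp))
  exact ne_top_of_le_ne_top (ENNReal.mul_ne_top ENNReal.ofReal_ne_top ENNReal.ofReal_ne_top) hle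

lemma FourierLE.pow_add {p r : ℝ → ℂ} {A R : ℤ → ℝ≥0∞} {Q : ℝ} {D : ℕ} (hp : ContPer p)
    (hr : ContPer r) (hA : FourierLE p A) (hAs : ∑' k, A k ≠ ⊤)
    (hD : ∀ k : ℤ, D < k.natAbs → A k = 0) (hQ : ∀ u, ‖p u‖ ≤ Q) (hR : FourierLE r R)
    (hRs : ∑' k, R k ≠ ⊤) (m : ℕ) : FourierLE (fun u => (p u + r u) ^ m) (powBound Q D R m) := by
  simp only [_root_.add_pow]
  refine FourierLE.sum _ (fun j => ((hp.pow j).mul (hr.pow _)).mul (ContPer.const _)) fun j k => ?_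
  have hterm := (FourierLE.mul (hp.pow j) (hr.pow (m - j)) (hA.pow_bandPow hp hAs hD hQ j)
    (hR.pow hr hRs (m - j)) (tsum_bandPow_ne_top _ _ _)).const_mul (m.choose j : ℂ) k
  simp only [mul_comm (m.choose j : ℂ)] at hterm
  rw [mul_comm]
  simpa [← ofReal_norm] using hterm

lemma exists_wienerNorm_powBound_le {s : ℝ} (hs : 0 ≤ s) {Q Q' ε : ℝ} (hQ : 0 ≤ Q) (hQQ' : Q < Q')
    (hε : 0 ≤ ε) (D : ℕ) {R : ℤ → ℝ≥0∞} (hR : wienerNorm s R ≤ ENNReal.ofReal ε) :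
    ∃ C : ℝ, 0 ≤ C ∧ ∀ m, wienerNorm s (powBound Q D R m) ≤ ENNReal.ofReal (C * (Q' + ε) ^ m) := by
  obtain ⟨K, hK⟩ := exists_nat_ge (s + 1)
  obtain ⟨C, hC0, hC⟩ := exists_polynomial_mul_pow_le_pow K D hQ hQQ'
  have hQ' : 0 ≤ Q' := hQ.trans hQQ'.le
  refine ⟨C, hC0, fun m => ?_⟩
  have hsum : wienerNorm s (powBound Q D R m) = ∑ j ∈ Finset.range (m + 1),
      wienerNorm s (fun k => seqConv (bandPow Q D j) (convPow R (m - j)) k * (m.choose j : ℝ≥0∞)) :=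
    wienerNorm_sum s _ _
  have hterm : ∀ j ∈ Finset.range (m + 1),
      wienerNorm s (fun k => seqConv (bandPow Q D j) (convPow R (m - j)) k * (m.choose j : ℝ≥0∞)) ≤
        ENNReal.ofReal (C * (Q' ^ j * ε ^ (m - j) * m.choose j)) := by
    intro j _
    simp only [mul_comm _ (m.choose j : ℝ≥0∞)]
    rw [wienerNorm_const_mul]
    calc (m.choose j : ℝ≥0∞) * wienerNorm s (seqConv (bandPow Q D j) (convPow R (m - j)))
        ≤ m.choose j * (wienerNorm s (bandPow Q D j) * wienerNorm s (convPow R (m - j))) := by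
          gcongr; exact wienerNorm_seqConv_le hs _ _
      _ ≤ m.choose j * (ENNReal.ofReal (C * Q' ^ j) * ENNReal.ofReal (ε ^ (m - j))) := by
          gcongr
          · refine (wienerNorm_bandPow_le hs Q D j hK).trans ?_
            rw [← ENNReal.ofReal_mul (by positivity)]
            exact ENNReal.ofReal_le_ofReal (hC j)
          · refine (wienerNorm_convPow_le hs R _).trans ?_
            rw [ENNReal.ofReal_pow hε]
            gcongr
      _ = _ := by
          rw [← ENNReal.ofReal_natCast, ← ENNReal.ofReal_mul (by positivity),
            ← ENNReal.ofReal_mul (by positivity)]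
          congr 1; ring
  rw [hsum]
  refine (Finset.sum_le_sum hterm).trans ?_
  rw [← ENNReal.ofReal_sum_of_nonneg (fun j _ => by positivity), ← Finset.mul_sum, ← _root_.add_pow]

lemma wienerNorm_tsum {ι : Type*} (s : ℝ) (A : ι → ℤ → ℝ≥0∞) :
    wienerNorm s (fun k => ∑' m, A m k) = ∑' m, wienerNorm s (A m) := by
  simp only [wienerNorm, ← ENNReal.tsum_mul_left]
  exact ENNReal.tsum_comm

lemma exists_fourierLE_powerSeries_add {s : ℝ} (hs : 0 ≤ s) {Q ε : ℝ} (hQ : 0 ≤ Q) (hε : 0 ≤ ε)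
    (hQε : Q + ε < 1) {A R : ℤ → ℝ≥0∞} (hAs : ∑' k, A k ≠ ⊤) {D : ℕ}
    (hD : ∀ k : ℤ, D < k.natAbs → A k = 0) (hR : wienerNorm s R ≤ ENNReal.ofReal ε) {c : ℕ → ℝ}
    (hc : ∀ r : ℝ, 0 ≤ r → r < 1 → Summable (fun m => |c m| * r ^ m)) :
    ∃ Y : ℤ → ℝ≥0∞, wienerNorm s Y < ⊤ ∧ ∀ p r H : ℝ → ℂ, ContPer p → ContPer r →
      FourierLE p A → FourierLE r R → (∀ u, ‖p u‖ ≤ Q) →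
      (∀ u, HasSum (fun m => (c m : ℂ) * (p u + r u) ^ m) (H u)) → FourierLE H Y := by
  set Q' := (Q + (1 - ε)) / 2
  obtain ⟨C, -, hC⟩ := exists_wienerNorm_powBound_le hs hQ (show Q < Q' by grind) hε D hR
  have hRs : ∑' k, R k ≤ ENNReal.ofReal ε := (tsum_le_wienerNorm hs R).trans hR
  refine ⟨fun k => ∑' m, ‖(c m : ℂ)‖ₑ * powBound Q D R m k, ?_, ?_⟩
  · rw [wienerNorm_tsum]
    have hterm : ∀ m, wienerNorm s (fun k => ‖(c m : ℂ)‖ₑ * powBound Q D R m k) ≤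
        ENNReal.ofReal (C * (|c m| * (Q' + ε) ^ m)) := fun m => by
      rw [wienerNorm_const_mul]
      calc _ ≤ ‖(c m : ℂ)‖ₑ * ENNReal.ofReal (C * (Q' + ε) ^ m) := by gcongr; exact hC m
        _ = _ := by
          rw [← ofReal_norm, ← ENNReal.ofReal_mul (norm_nonneg _), Complex.norm_real,
            Real.norm_eq_abs, mul_left_comm]
    exact (ENNReal.tsum_le_tsum hterm).trans_lt
      ((hc _ (by grind) (by grind)).mul_left C).tsum_ofReal_lt_top
  · intro p r H hp hr hpA hrR hpQ hH
    have hRt : ∑' k, R k ≠ ⊤ := ne_top_of_le_ne_top ENNReal.ofReal_ne_top hRs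
    have hrε : ∀ u, ‖r u‖ ≤ ε := fun u => by
      simpa [← ofReal_norm, ENNReal.ofReal_le_ofReal_iff hε] using
        (hrR.enorm_le hr hRt u).trans hRs
    refine FourierLE.tsum (G := fun m u => (c m : ℂ) * (p u + r u) ^ m)
      (g := fun m => |c m| * (Q + ε) ^ m)
      (fun m => (ContPer.const _).mul ((hp.add hr).pow m)) (fun m u => ?_)
      (hc _ (by linarith) hQε) hH fun m => ?_
    · rw [norm_mul, norm_pow, Complex.norm_real, Real.norm_eq_abs]
      gcongr
      exact (norm_add_le _ _).trans (add_le_add (hpQ u) (hrε u))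
    · exact (FourierLE.pow_add hp hr hpA hAs hD hpQ hrR hRt m).const_mul _

/-! ### Averages over segments and the Wiener–Lévy theorem -/

/-- The average of `F` over the segment from `u` to `u + w`. -/
def lineAvg {E : Type*} [NormedAddCommGroup E] [NormedSpace ℝ E] (F : ℝ → E) (w u : ℝ) : E :=
  ∫ t in (0 : ℝ)..1, F (u + t * w)

protected lemma ContPer.lineAvg {E : Type*} [NormedAddCommGroup E] [NormedSpace ℝ E] {F : ℝ → E}
    (hF : ContPer F) (w : ℝ) : ContPer (lineAvg F w) := by
  refine ⟨?_, fun u => ?_⟩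
  · have hc := hF.cont
    exact intervalIntegral.continuous_parametric_intervalIntegral_of_continuous'
      (f := fun u t => F (u + t * w)) (by fun_prop) 0 1
  · refine intervalIntegral.integral_congr fun t _ => ?_
    simp only [add_right_comm u 1, hF.per _]

protected lemma FourierLE.lineAvg {F : ℝ → ℂ} {A : ℤ → ℝ≥0∞} (hF : ContPer F) (hA : FourierLE F A)
    (w : ℝ) : FourierLE (lineAvg F w) A := by
  have hc := hF.cont
  exact FourierLE.average (G := fun s u => F (u + s * w)) (by fun_prop) fun s _ => hA.shift hF _

lemma norm_mode_sub_mode_le (k : ℤ) (x y : ℝ) :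
    ‖mode k x - mode k y‖ ≤ 2 * Real.pi * |(k : ℝ)| * |x - y| := by
  have hlip := (convex_univ (𝕜 := ℝ)).norm_image_sub_le_of_norm_hasDerivWithin_le
    (f := mode k) (C := 2 * Real.pi * |(k : ℝ)|) (x := y) (y := x)
    (fun u _ => (hasDerivAt_mode k u).hasDerivWithinAt) (fun u _ => by
      simp [norm_mode, abs_of_pos Real.pi_pos]) (mem_univ _) (mem_univ _)
  simpa using hlip

lemma norm_mode_sub_mode_le_rpow {θ : ℝ} (h0 : 0 ≤ θ) (h1 : θ ≤ 1) (k : ℤ) (x y : ℝ) :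
    ‖mode k x - mode k y‖ ≤ 2 * Real.pi * |(k : ℝ)| ^ θ * |x - y| ^ θ := by
  rw [mul_assoc, ← Real.mul_rpow (abs_nonneg _) (abs_nonneg _)]
  rcases le_total (|(k : ℝ)| * |x - y|) 1 with hle | hge
  · refine (norm_mode_sub_mode_le k x y).trans ?_
    rw [mul_assoc]
    gcongr
    exact Real.self_le_rpow_of_le_one (by positivity) hle h1
  · have htriangle : ‖mode k x - mode k y‖ ≤ 1 + 1 := by
      simpa only [norm_mode] using norm_sub_le (mode k x) (mode k y)
    have hone : 1 ≤ (|(k : ℝ)| * |x - y|) ^ θ := Real.one_le_rpow hge h0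
    nlinarith [Real.pi_gt_three]

/-- If `a` dominates the Fourier coefficients of `F`, then `|h|^θ * fracBound θ a` dominates those
of the difference `F(· + h) - F`, see `FourierLE.shift_sub_shift`. -/
def fracBound (θ : ℝ) (a : ℤ → ℝ≥0∞) (k : ℤ) : ℝ≥0∞ :=
  ENNReal.ofReal (2 * Real.pi) * (ENNReal.ofReal (|(k : ℝ)| ^ θ) * a k)

lemma FourierLE.shift_sub_shift {F : ℝ → ℂ} {a : ℤ → ℝ≥0∞} {θ : ℝ} (h0 : 0 ≤ θ) (h1 : θ ≤ 1)
    (hF : ContPer F) (ha : FourierLE F a) {x y h : ℝ} (hxy : |x - y| ≤ |h|) :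
    FourierLE (fun u => F (u + x) - F (u + y))
      (fun k => ENNReal.ofReal (|h| ^ θ) * fracBound θ a k) := fun k => by
  rw [fourierCoef_sub (hF.shift _) (hF.shift _), fourierCoef_shift hF, fourierCoef_shift hF,
    ← sub_mul, enorm_mul, ← ofReal_norm (mode _ _ - _)]
  calc _ ≤ ENNReal.ofReal (2 * Real.pi * |(k : ℝ)| ^ θ * |h| ^ θ) * a k := by
        gcongr
        · exact (norm_mode_sub_mode_le_rpow h0 h1 k x y).trans (by gcongr)
        · exact ha k
    _ = ENNReal.ofReal (|h| ^ θ) * fracBound θ a k := by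
        rw [fracBound, ENNReal.ofReal_mul (by positivity), ENNReal.ofReal_mul (by positivity)]
        ring

lemma FourierLE.sub_lineAvg {F : ℝ → ℂ} {a : ℤ → ℝ≥0∞} {θ : ℝ} (h0 : 0 ≤ θ) (h1 : θ ≤ 1)
    (hF : ContPer F) (ha : FourierLE F a) {s : ℝ} (hs : s ∈ Icc (0 : ℝ) 1) (w : ℝ) :
    FourierLE (fun u => F (u + s * w) - lineAvg F w u)
      (fun k => ENNReal.ofReal (|w| ^ θ) * fracBound θ a k) := by
  have hc := hF.cont
  have haverage : (fun u => F (u + s * w) - lineAvg F w u) =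
      fun u => ∫ t in (0 : ℝ)..1, (F (u + s * w) - F (u + t * w)) := by
    funext u
    rw [intervalIntegral.integral_sub (by simp)
      (Continuous.intervalIntegrable (by fun_prop) _ _)]
    simp [lineAvg]
  rw [haverage]
  refine FourierLE.average (G := fun t u => F (u + s * w) - F (u + t * w)) (by fun_prop)
    fun t ht => FourierLE.shift_sub_shift h0 h1 hF ha ?_
  rw [← sub_mul, abs_mul]
  refine mul_le_of_le_one_left (abs_nonneg _) (abs_le.2 ⟨?_, ?_⟩) <;>
    linarith [hs.1, hs.2, ht.1, ht.2]

section UnitVector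

variable {ι : Type*} [Fintype ι] {F : ι → ℝ → ℂ}

lemma one_sub_sum_lineAvg_sq (hF : ∀ j, ContPer (F j)) (hunit : ∀ u, ∑ j, F j u ^ 2 = 1)
    (w u : ℝ) :
    1 - ∑ j, lineAvg (F j) w u ^ 2 =
      ∫ s in (0 : ℝ)..1, ∑ j, (F j (u + s * w) - lineAvg (F j) w u) *
        (F j (u + s * w) - lineAvg (F j) w u) := by
  have hc := fun j => (hF j).cont
  have hexpand : ∀ s : ℝ, ∑ j, (F j (u + s * w) - lineAvg (F j) w u) *
      (F j (u + s * w) - lineAvg (F j) w u) =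
      1 + ∑ j, lineAvg (F j) w u ^ 2 - ∑ j, 2 * lineAvg (F j) w u * F j (u + s * w) := fun s => by
    rw [← hunit (u + s * w), ← Finset.sum_add_distrib, ← Finset.sum_sub_distrib]
    exact Finset.sum_congr rfl fun j _ => by ring
  have hcross : ∀ j, 2 * lineAvg (F j) w u * ∫ s in (0 : ℝ)..1, F j (u + s * w) =
      2 * lineAvg (F j) w u ^ 2 := fun j => by rw [← lineAvg]; ring
  simp only [hexpand]
  rw [intervalIntegral.integral_sub (by simp) (Continuous.intervalIntegrable (by fun_prop) _ _),
    intervalIntegral.integral_finsetSum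
      (fun j _ => Continuous.intervalIntegrable (by have hcj := hc j; fun_prop) _ _)]
  simp only [intervalIntegral.integral_const_mul, hcross, ← Finset.mul_sum,
    intervalIntegral.integral_const, sub_zero, one_smul]
  ring

lemma fourierLE_one_sub_sum_lineAvg_sq (hF : ∀ j, ContPer (F j))
    (hunit : ∀ u, ∑ j, F j u ^ 2 = 1) {a : ℤ → ℝ≥0∞} (ha : ∀ j, FourierLE (F j) a) {θ : ℝ}
    (h0 : 0 ≤ θ) (h1 : θ ≤ 1) (hat : ∑' k, a k ≠ ⊤) (w : ℝ) :
    FourierLE (fun u => 1 - ∑ j, lineAvg (F j) w u ^ 2) (fun k => ENNReal.ofReal (|w| ^ (2 * θ)) *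
      (Fintype.card ι * seqConv (fracBound θ a) (fracBound θ a) k)) := by
  simp only [one_sub_sum_lineAvg_sq hF hunit]
  have hc := fun j => (hF j).cont
  have hcavg := fun j => ((hF j).lineAvg w).cont
  refine FourierLE.average (G := fun s u => ∑ j, (F j (u + s * w) - lineAvg (F j) w u) *
    (F j (u + s * w) - lineAvg (F j) w u)) ?_ fun s hs => ?_
  · refine continuous_finsetSum _ fun j _ => ?_
    have hcj := hc j
    have hcavgj := hcavg j
    fun_prop
  · have hper : ∀ j, ContPer (fun u => F j (u + s * w) - lineAvg (F j) w u) := fun j =>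
      ((hF j).shift _).sub ((hF j).lineAvg w)
    have hdev := fun j => FourierLE.sub_lineAvg h0 h1 (hF j) (ha j) hs w
    have hsummable : ∀ j, Summable (fourierCoef fun u => F j (u + s * w) - lineAvg (F j) w u) :=
      fun j => (FourierLE.sub ((hF j).shift _) ((hF j).lineAvg w) ((ha j).shift (hF j) _)
        ((ha j).lineAvg (hF j) w)).summable (by rw [ENNReal.tsum_add]; finiteness)
    refine (FourierLE.sum Finset.univ (fun j => (hper j).mul (hper j)) fun j =>
      FourierLE.mul_of_summable (hper j) (hper j) (hdev j) (hdev j) (hsummable j)).mono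
        fun k => le_of_eq ?_
    rw [seqConv_const_mul_left, seqConv_const_mul_right, two_mul,
      Real.rpow_add_of_nonneg (abs_nonneg _) h0 h0, ENNReal.ofReal_mul (by positivity)]
    simp only [Finset.sum_const, Finset.card_univ, nsmul_eq_mul]
    ring

/-- A sequence dominating the Fourier coefficients of `1 - ∑ Fⱼ²`, `j ∈ ι`, when `a` dominates
those of every `Fⱼ`. -/
def oneSubSqBound (ι : Type*) [Fintype ι] (a : ℤ → ℝ≥0∞) (k : ℤ) : ℝ≥0∞ :=
  (if k = 0 then 1 else 0) + Fintype.card ι * seqConv a a k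

lemma wienerNorm_oneSubSqBound_lt_top {s : ℝ} (hs : 0 ≤ s) {a : ℤ → ℝ≥0∞}
    (ha : wienerNorm s a < ⊤) : wienerNorm s (oneSubSqBound ι a) < ⊤ := by
  have hzero : wienerNorm s (fun k => if k = 0 then 1 else 0) = 1 := by
    simp [wienerNorm, bracket]
  have hconv : wienerNorm s (seqConv a a) < ⊤ :=
    (wienerNorm_seqConv_le hs a a).trans_lt (ENNReal.mul_lt_top ha ha)
  have hadd : wienerNorm s (oneSubSqBound ι a) = wienerNorm s (fun k => if k = 0 then 1 else 0) +
      wienerNorm s (fun k => Fintype.card ι * seqConv a a k) := by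
    simp only [wienerNorm, oneSubSqBound, mul_add, ENNReal.tsum_add]
  rw [hadd, hzero, wienerNorm_const_mul]
  finiteness

lemma fourierLE_one_sub_sum_sq (hF : ∀ j, ContPer (F j)) {a : ℤ → ℝ≥0∞}
    (ha : ∀ j, FourierLE (F j) a) (hat : ∑' k, a k ≠ ⊤) :
    FourierLE (fun u => 1 - ∑ j, F j u ^ 2) (oneSubSqBound ι a) := by
  have hone : FourierLE (fun _ => 1) (fun k => if k = 0 then 1 else 0) := fun k => by
    rw [fourierCoef_const]
    split_ifs with hk <;> simp [hk]
  have hsum := FourierLE.sum Finset.univ (fun j => (hF j).mul (hF j))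
    fun j => (FourierLE.mul (hF j) (hF j) (ha j) (ha j) hat)
  simp only [sq]
  refine (FourierLE.sub (ContPer.const 1) (ContPer.sum _ fun j => (hF j).mul (hF j)) hone hsum).mono
    fun k => ?_
  simp [oneSubSqBound]

end UnitVector

/-- The `N`-th symmetric partial sum of the Fourier series of `F`. -/
def fourierPartialSum (F : ℝ → ℂ) (N : ℕ) (u : ℝ) : ℂ :=
  ∑ l ∈ Finset.Icc (-(N : ℤ)) N, fourierCoef F l * mode l u

lemma contPer_fourierPartialSum (F : ℝ → ℂ) (N : ℕ) : ContPer (fourierPartialSum F N) :=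
  ContPer.sum _ fun l => (ContPer.const _).mul (contPer_mode l)

lemma fourierCoef_fourierPartialSum (F : ℝ → ℂ) (N : ℕ) (k : ℤ) :
    fourierCoef (fourierPartialSum F N) k = if k.natAbs ≤ N then fourierCoef F k else 0 := by
  unfold fourierPartialSum
  rw [fourierCoef_sum _ fun l => (ContPer.const _).mul (contPer_mode l)]
  simp only [fourierCoef_const_mul, fourierCoef_mode, mul_ite, mul_one, mul_zero,
    Finset.sum_ite_eq', Finset.mem_Icc]
  congr 1
  rw [eq_iff_iff]; omega

/-- The truncation of a sequence to the frequencies `|k| ≤ N`. -/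
def lowPart (a : ℤ → ℝ≥0∞) (N : ℕ) (k : ℤ) : ℝ≥0∞ := if k.natAbs ≤ N then a k else 0

/-- The truncation of a sequence to the frequencies `|k| > N`. -/
def highPart (a : ℤ → ℝ≥0∞) (N : ℕ) (k : ℤ) : ℝ≥0∞ := if k.natAbs ≤ N then 0 else a k

lemma lowPart_le (a : ℤ → ℝ≥0∞) (N : ℕ) : lowPart a N ≤ a := fun k => by
  rw [lowPart]; split_ifs <;> simp

protected lemma FourierLE.fourierPartialSum {F : ℝ → ℂ} {a : ℤ → ℝ≥0∞} (ha : FourierLE F a)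
    (N : ℕ) : FourierLE (fourierPartialSum F N) (lowPart a N) := fun k => by
  rw [fourierCoef_fourierPartialSum, lowPart]
  split_ifs
  · exact ha k
  · simp

lemma FourierLE.sub_fourierPartialSum {F : ℝ → ℂ} {a : ℤ → ℝ≥0∞} (hF : ContPer F)
    (ha : FourierLE F a) (N : ℕ) :
    FourierLE (fun u => F u - fourierPartialSum F N u) (highPart a N) := fun k => by
  rw [fourierCoef_sub hF (contPer_fourierPartialSum F N), fourierCoef_fourierPartialSum, highPart]
  split_ifs
  · simp
  · simpa using ha k

lemma exists_wienerNorm_highPart_le {s : ℝ} {a : ℤ → ℝ≥0∞} (ha : wienerNorm s a < ⊤) {δ : ℝ≥0∞}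
    (hδ : 0 < δ) : ∃ N, wienerNorm s (highPart a N) ≤ δ := by
  have htail := (ENNReal.tendsto_tsum_compl_atTop_zero ha.ne).eventually (ge_mem_nhds hδ)
  obtain ⟨t, ht⟩ := htail.exists
  have hsub := tsum_subtype {x | x ∉ t} (fun k => bracket k ^ s * a k)
  refine ⟨t.sup Int.natAbs, le_trans ?_ (hsub.symm.le.trans ht)⟩
  refine ENNReal.tsum_le_tsum fun k => ?_
  rw [highPart]
  split_ifs with hk
  · simp
  · rw [Set.indicator_of_mem]
    intro hkt
    exact hk (Finset.le_sup (f := Int.natAbs) hkt)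

/-- A quantitative Wiener–Lévy theorem. Splitting off a high-frequency part of small Wiener norm
leaves a trigonometric polynomial, whose powers are controlled by the sup norm alone. -/
lemma exists_fourierLE_powerSeries {s q : ℝ} (hs : 0 ≤ s) (hq0 : 0 ≤ q) (hq : q < 1)
    {a : ℤ → ℝ≥0∞} (ha : wienerNorm s a < ⊤) {c : ℕ → ℝ}
    (hc : ∀ r : ℝ, 0 ≤ r → r < 1 → Summable (fun m => |c m| * r ^ m)) :
    ∃ Y : ℤ → ℝ≥0∞, wienerNorm s Y < ⊤ ∧ ∀ g H : ℝ → ℂ, ContPer g → FourierLE g a →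
      (∀ u, ‖g u‖ ≤ q) → (∀ u, HasSum (fun m => (c m : ℂ) * g u ^ m) (H u)) → FourierLE H Y := by
  set ε := (1 - q) / 3 with hε
  have hε0 : 0 < ε := by linarith
  obtain ⟨N, hN⟩ := exists_wienerNorm_highPart_le ha (ENNReal.ofReal_pos.2 hε0)
  have hlow : ∑' k, lowPart a N k ≠ ⊤ := ne_top_of_le_ne_top
    ((tsum_le_wienerNorm hs a).trans_lt ha).ne (ENNReal.tsum_le_tsum (lowPart_le a N))
  have hhigh : ∑' k, highPart a N k ≤ ENNReal.ofReal ε := (tsum_le_wienerNorm hs _).trans hN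
  obtain ⟨Y, hY, hbound⟩ := exists_fourierLE_powerSeries_add hs (Q := q + ε) (by linarith) hε0.le
    (by linarith) hlow (D := N) (fun k hk => if_neg hk.not_ge) hN hc
  refine ⟨Y, hY, fun g H hg hga hgq hH => ?_⟩
  have hp := contPer_fourierPartialSum g N
  have hrest := hga.sub_fourierPartialSum hg N
  have hsplit : ∀ u, fourierPartialSum g N u + (g u - fourierPartialSum g N u) = g u := fun u =>
    add_sub_cancel _ _
  have hrest_le : ∀ u, ‖g u - fourierPartialSum g N u‖ ≤ ε := fun u => by
    have hle := (hrest.enorm_le (hg.sub hp)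
      (ne_top_of_le_ne_top ENNReal.ofReal_ne_top hhigh) u).trans hhigh
    rwa [← ofReal_norm, ENNReal.ofReal_le_ofReal_iff hε0.le] at hle
  refine hbound _ _ H hp (hg.sub hp) (hga.fourierPartialSum N) hrest (fun u => ?_) fun u => ?_
  · rw [← sub_sub_cancel (g u) (fourierPartialSum g N u)]
    exact (norm_sub_le _ _).trans (add_le_add (hgq u) (hrest_le u))
  · simpa only [hsplit] using hH u

lemma hasSum_one_sub_rpow_neg (p : ℝ) {x : ℝ} (hx : |x| < 1) :
    HasSum (fun m : ℕ => Ring.choose (p + m - 1) m * x ^ m) ((1 - x) ^ (-p)) := by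
  have hseries := (Real.one_div_one_sub_rpow_hasFPowerSeriesOnBall_zero p).hasSum (y := x) (by
    simp [← ofReal_norm, hx])
  have hpos : 0 ≤ 1 - x := by linarith [(abs_lt.1 hx).2]
  simpa [FormalMultilinearSeries.ofScalars_apply_eq, Real.rpow_neg hpos, mul_comm] using hseries

lemma exists_hasSum_one_sub_rpow_neg_sub_one (p : ℝ) :
    ∃ c : ℕ → ℝ, (∀ r : ℝ, 0 ≤ r → r < 1 → Summable (fun m => |c m| * r ^ m)) ∧
      ∀ x : ℝ, |x| < 1 → HasSum (fun m => c m * x ^ m * x) ((1 - x) ^ (-p) - 1) := by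
  set c : ℕ → ℝ := fun m => Ring.choose (p + (m + 1 : ℕ) - 1) (m + 1)
  have hsum : ∀ x : ℝ, |x| < 1 → HasSum (fun m => c m * x ^ m * x) ((1 - x) ^ (-p) - 1) := by
    intro x hx
    have htail := (hasSum_nat_add_iff' 1).2 (hasSum_one_sub_rpow_neg p hx)
    simpa [c, pow_succ, mul_assoc] using htail
  refine ⟨c, fun r hr0 hr1 => ?_, hsum⟩
  rcases hr0.eq_or_lt with rfl | hr0
  · exact summable_of_ne_finset_zero (s := {0}) fun m hm => by
      simp [Finset.notMem_singleton.1 hm]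
  · have habs := (hsum r (by rwa [abs_of_pos hr0])).summable.abs
    simpa [abs_mul, abs_of_pos hr0, mul_assoc, hr0.ne'] using habs.mul_right r⁻¹

lemma ContPer.tsum {G : ℕ → ℝ → ℂ} {g : ℕ → ℝ} (hG : ∀ m, ContPer (G m))
    (hg : ∀ m u, ‖G m u‖ ≤ g m) (hs : Summable g) : ContPer (fun u => ∑' m, G m u) :=
  ⟨continuous_tsum (fun m => (hG m).cont) hs hg, fun u => tsum_congr fun m => (hG m).per u⟩

lemma exists_fourierLE_rpow_neg_sub_one_div {s q : ℝ} (hs : 0 ≤ s) (hq0 : 0 ≤ q) (hq : q < 1)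
    {a : ℤ → ℝ≥0∞} (ha : wienerNorm s a < ⊤) (p : ℝ) :
    ∃ Y : ℤ → ℝ≥0∞, wienerNorm s Y < ⊤ ∧ ∀ x : ℝ → ℝ, ContPer (fun u => (x u : ℂ)) →
      FourierLE (fun u => (x u : ℂ)) a → (∀ u, |x u| ≤ q) →
      ∃ H : ℝ → ℂ, ContPer H ∧ FourierLE H Y ∧
        ∀ u, (((1 - x u) ^ (-p) - 1 : ℝ) : ℂ) = H u * x u := by
  obtain ⟨c, hc, hseries⟩ := exists_hasSum_one_sub_rpow_neg_sub_one p
  obtain ⟨Y, hY, hbound⟩ := exists_fourierLE_powerSeries hs hq0 hq ha hc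
  refine ⟨Y, hY, fun x hx hxa hxq => ?_⟩
  have hxnorm : ∀ u, ‖(x u : ℂ)‖ ≤ q := fun u => by simpa using hxq u
  have hterm : ∀ m u, ‖(c m : ℂ) * (x u : ℂ) ^ m‖ ≤ |c m| * q ^ m := fun m u => by
    rw [norm_mul, norm_pow, Complex.norm_real, Real.norm_eq_abs]
    gcongr
    exact hxnorm u
  have hH : ∀ u, HasSum (fun m => (c m : ℂ) * (x u : ℂ) ^ m) (∑' m, (c m : ℂ) * (x u : ℂ) ^ m) :=
    fun u => (Summable.of_norm_bounded (hc q hq0 hq) fun m => hterm m u).hasSum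
  refine ⟨fun u => ∑' m, (c m : ℂ) * (x u : ℂ) ^ m,
    ContPer.tsum (fun m => (ContPer.const _).mul (hx.pow m)) hterm (hc q hq0 hq),
    hbound _ _ hx hxa hxnorm hH, fun u => ?_⟩
  have hreal := Complex.hasSum_ofReal.2 (hseries (x u) ((hxq u).trans_lt hq))
  push_cast at hreal ⊢
  exact hreal.unique ((hH u).mul_right _)

/-- With `ρ_w = ∑ (avg Fⱼ)²`, the factor `1 - ρ_w` is a double difference of order `|w|^(2θ)`,
which is where the gain in `w` comes from. -/
lemma exists_fourierLE_rpow {ι : Type*} [Fintype ι] {F : ι → ℝ → ℂ} (hF : ∀ j, ContPer (F j))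
    (hunit : ∀ u, ∑ j, F j u ^ 2 = 1) {a : ℤ → ℝ≥0∞} (ha : ∀ j, FourierLE (F j) a)
    {s μ θ q : ℝ} (hμ : 0 ≤ μ) (hsμ : s + 1 / 2 < μ) (h0 : 0 ≤ θ) (h1 : θ ≤ 1)
    (has : wienerNorm (max s 0) a < ⊤) (hb : sobolevSq μ (fracBound θ a) < ⊤) (hq0 : 0 ≤ q)
    (hq : q < 1) {S : Set ℝ} {ρ : ℝ → ℝ → ℝ}
    (hρ : ∀ w ∈ S, ∀ u, (ρ w u : ℂ) = ∑ j, lineAvg (F j) w u ^ 2)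
    (hρq : ∀ w ∈ S, ∀ u, |1 - ρ w u| ≤ q) (p : ℝ) :
    ∃ M : ℤ → ℝ≥0∞, sobolevSq s M < ⊤ ∧ ∀ w ∈ S, ∀ G : ℝ → ℂ, ContPer G → FourierLE G a →
      FourierLE (fun u => G u * ((ρ w u ^ (-p) - 1 : ℝ) : ℂ))
        (fun k => ENNReal.ofReal (|w| ^ (2 * θ)) * M k) := by
  have hs0 : 0 ≤ max s 0 := le_max_right _ _
  have hat : ∑' k, a k ≠ ⊤ := ((tsum_le_wienerNorm hs0 a).trans_lt has).ne
  obtain ⟨Y, hY, hbound⟩ := exists_fourierLE_rpow_neg_sub_one_div hs0 hq0 hq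
    (wienerNorm_oneSubSqBound_lt_top (ι := ι) hs0 has) p
  set b := fracBound θ a
  have hb0 : sobolevSq (max s 0) b < ⊤ :=
    (sobolevSq_mono_exp (max_le (by linarith) hμ) b).trans_lt hb
  have haY : wienerNorm (max s 0) (seqConv a Y) < ⊤ :=
    (wienerNorm_seqConv_le hs0 _ _).trans_lt (ENNReal.mul_lt_top has hY)
  have haYt : ∑' k, seqConv a Y k ≠ ⊤ := ((tsum_le_wienerNorm hs0 _).trans_lt haY).ne
  refine ⟨fun k => Fintype.card ι * seqConv (seqConv (seqConv a Y) b) b k, ?_,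
    fun w hw G hG hGa => ?_⟩
  · rw [sobolevSq_const_mul]
    refine ENNReal.mul_lt_top (by finiteness) (sobolevSq_seqConv_lt_top hμ hsμ ?_ hb)
    rw [seqConv_comm]
    exact (sobolevSq_seqConv_le hs0 _ _).trans_lt
      (ENNReal.mul_lt_top hb0 (ENNReal.pow_lt_top haY))
  have hdefect : (fun u => ((1 - ρ w u : ℝ) : ℂ)) = fun u => 1 - ∑ j, lineAvg (F j) w u ^ 2 :=
    funext fun u => by rw [← hρ w hw u]; push_cast; rfl
  have hx : ContPer (fun u => ((1 - ρ w u : ℝ) : ℂ)) := by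
    rw [hdefect]
    exact (ContPer.const 1).sub (ContPer.sum _ fun j => ((hF j).lineAvg w).pow 2)
  obtain ⟨H, hH, hHY, hfactor⟩ := hbound (fun u => 1 - ρ w u) hx (by
    rw [hdefect]
    exact fourierLE_one_sub_sum_sq (fun j => (hF j).lineAvg w)
      (fun j => (ha j).lineAvg (hF j) w) hat) (hρq w hw)
  have hsmall := fourierLE_one_sub_sum_lineAvg_sq hF hunit ha h0 h1 hat w
  rw [← hdefect] at hsmall
  have hprod := FourierLE.mul (hG.mul hH) hx (FourierLE.mul hG hH hGa hHY hat) hsmall haYt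
  simp only [sub_sub_cancel] at hfactor
  rw [funext fun u => congrArg (G u * ·) (hfactor u)]
  simp only [← mul_assoc (G _)]
  rwa [seqConv_const_mul_right, seqConv_const_mul_right, ← seqConv_assoc] at hprod

/-! ### Fractional Sobolev curves -/

/-- The complexified `j`-th component of a curve. -/
def coord (f : ℝ → Rn n) (j : Fin n) (u : ℝ) : ℂ := (f u j : ℂ)

protected lemma ContPer.coord {f : ℝ → Rn n} (hf : ContPer f) (j : Fin n) :
    ContPer (coord f j) :=
  ⟨Complex.continuous_ofReal.comp
    ((PiLp.continuous_apply 2 (fun _ : Fin n => ℝ) j).comp hf.cont),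
    fun u => by simp only [coord, hf.per u]⟩

lemma fCoef_eq_fourierCoef (γ : ℝ → Rn n) (k : ℤ) (j : Fin n) :
    fCoef γ k j = fourierCoef (coord γ j) k := by
  simp only [fCoef, fourierCoef, coord, mode_eq_exp]
  congr! 4
  push_cast
  ring

lemma norm_two_pi_I_mul_int (k : ℤ) :
    ‖(2 * Real.pi * Complex.I * k : ℂ)‖ = 2 * Real.pi * |(k : ℝ)| := by
  simp [abs_of_pos Real.pi_pos]

lemma contDiff_of_summable_fourierCoef {F : ℝ → ℂ} (hF : ContPer F)
    (hs0 : Summable (fourierCoef F)) (hs1 : Summable fun k : ℤ => |(k : ℝ)| * ‖fourierCoef F k‖) :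
    ContDiff ℝ 1 F := by
  have hs1' : Summable fun k : ℤ => 2 * Real.pi * (|(k : ℝ)| * ‖fourierCoef F k‖) := hs1.mul_left _
  have hterm : ∀ (k : ℤ) (u : ℝ), ‖fourierCoef F k * (2 * Real.pi * Complex.I * k * mode k u)‖ ≤
      2 * Real.pi * (|(k : ℝ)| * ‖fourierCoef F k‖) := fun k u => by
    rw [norm_mul, norm_mul, norm_mode, norm_two_pi_I_mul_int]
    exact le_of_eq (by ring)
  have hseries : F = fun u => ∑' k, fourierCoef F k * mode k u :=
    funext fun u => (hasSum_fourierCoef hF hs0 u).tsum_eq.symm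
  have hderiv : ∀ u,
      HasDerivAt F (∑' k, fourierCoef F k * (2 * Real.pi * Complex.I * k * mode k u)) u := by
    intro u
    have h := hasDerivAt_tsum hs1' (fun k y => (hasDerivAt_mode k y).const_mul _) hterm
      (hasSum_fourierCoef hF hs0 0).summable u
    rwa [← hseries] at h
  rw [contDiff_one_iff_deriv]
  refine ⟨fun u => (hderiv u).differentiableAt, ?_⟩
  rw [funext fun u => (hderiv u).deriv]
  exact continuous_tsum (fun k => by have hk := mode_continuous k; fun_prop) hs1' hterm

lemma sobolevSq_lt_top_of_memHF {t : ℝ} (ht : 0 ≤ t) {γ : ℝ → Rn n} (h : MemHF t γ) (j : Fin n) :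
    sobolevSq t (fun k => ‖fourierCoef (coord γ j) k‖ₑ) < ⊤ := by
  refine lt_of_le_of_lt ?_ (ENNReal.mul_lt_top
    (ENNReal.rpow_lt_top_of_nonneg ht (by simp : (2 : ℝ≥0∞) ≠ ⊤)) h.2.2.tsum_ofReal_lt_top)
  rw [← ENNReal.tsum_mul_left]
  refine ENNReal.tsum_le_tsum fun k => ?_
  rw [mul_pow, ennreal_rpow_sq, ENNReal.ofReal_mul (by positivity),
    ← ENNReal.ofReal_rpow_of_pos (by positivity), ← mul_assoc,
    ← ENNReal.mul_rpow_of_nonneg _ _ ht]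
  gcongr
  · exact bracket_sq_le k
  · beta_reduce
    rw [← ofReal_norm, ← ENNReal.ofReal_pow (norm_nonneg _), ← fCoef_eq_fourierCoef]
    exact ENNReal.ofReal_le_ofReal (Finset.single_le_sum (f := fun j => ‖fCoef γ k j‖ ^ 2)
      (fun _ _ => by positivity) (Finset.mem_univ j))

lemma memHF_of_sobolevSq_lt_top {t : ℝ} (ht : 0 ≤ t) {γ : ℝ → Rn n} (hγ : ContPer γ)
    (h : ∀ j, sobolevSq t (fun k => ‖fourierCoef (coord γ j) k‖ₑ) < ⊤) : MemHF t γ := by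
  refine ⟨hγ.per, hγ.cont, ?_⟩
  simp only [Finset.mul_sum]
  refine summable_sum fun j _ => (ENNReal.summable_toReal (h j).ne).of_nonneg_of_le
    (fun k => by positivity) fun k => ?_
  rw [← ENNReal.ofReal_le_iff_le_toReal (by
      have h0 := bracket_ne_zero k; have htop := bracket_ne_top k; finiteness),
    mul_pow, ennreal_rpow_sq, ENNReal.ofReal_mul (by positivity),
    ← ENNReal.ofReal_rpow_of_pos (by positivity)]
  gcongr
  · exact le_bracket_sq k
  · beta_reduce
    rw [← ofReal_norm, ← ENNReal.ofReal_pow (norm_nonneg _), fCoef_eq_fourierCoef]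

/-- The common majorant `∑ⱼ |f̂ⱼ(k)|` of the Fourier coefficients of the components of `f`. -/
def coordBound (f : ℝ → Rn n) (k : ℤ) : ℝ≥0∞ := ∑ j, ‖fourierCoef (coord f j) k‖ₑ

lemma fourierLE_coordBound (f : ℝ → Rn n) (j : Fin n) : FourierLE (coord f j) (coordBound f) :=
  fun k => Finset.single_le_sum (f := fun j => ‖fourierCoef (coord f j) k‖ₑ)
    (fun _ _ => zero_le) (Finset.mem_univ j)

lemma contDiff_of_memHF {t : ℝ} (ht : 3 / 2 < t) {γ : ℝ → Rn n} (h : MemHF t γ) :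
    ContDiff ℝ 1 γ := by
  have hγ : ContPer γ := ⟨h.2.1, h.1⟩
  rw [contDiff_euclidean]
  intro j
  have hwiener : wienerNorm 1 (fun k => ‖fourierCoef (coord γ j) k‖ₑ) < ⊤ :=
    wienerNorm_lt_top_of_sobolevSq_lt_top (by linarith)
      (sobolevSq_lt_top_of_memHF (by linarith) h j)
  have hsummable : Summable (fourierCoef (coord γ j)) :=
    FourierLE.summable (A := fun k => ‖fourierCoef (coord γ j) k‖ₑ)
      (fun k => le_rfl) ((tsum_le_wienerNorm zero_le_one _).trans_lt hwiener).ne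
  have hsummable_mul : Summable fun k : ℤ => |(k : ℝ)| * ‖fourierCoef (coord γ j) k‖ := by
    refine (ENNReal.summable_toReal hwiener.ne).of_nonneg_of_le
      (fun k => by positivity) fun k => ?_
    rw [← ENNReal.ofReal_le_iff_le_toReal (by
      have h0 := bracket_ne_zero k; have htop := bracket_ne_top k; finiteness), ENNReal.rpow_one,
      ENNReal.ofReal_mul (abs_nonneg _), ofReal_norm]
    gcongr
    exact norm_int_le_bracket k
  exact Complex.reCLM.contDiff.comp
    (contDiff_of_summable_fourierCoef (hγ.coord j) hsummable hsummable_mul)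

lemma contPer_deriv {γ : ℝ → Rn n} (hc : ContDiff ℝ 1 γ) (hp : Function.Periodic γ 1) :
    ContPer (deriv γ) :=
  ⟨hc.continuous_deriv le_rfl, fun u => by
    rw [← deriv_comp_add_const]; congr 1; exact funext hp⟩

lemma hasDerivAt_apply {γ γ' : ℝ → Rn n} {u : ℝ} (h : HasDerivAt γ (γ' u) u) (j : Fin n) :
    HasDerivAt (fun u => γ u j) (γ' u j) u :=
  ((EuclideanSpace.proj (𝕜 := ℝ) j).hasFDerivAt.comp_hasDerivAt u h)

lemma hasDerivAt_coord {γ γ' : ℝ → Rn n} {u : ℝ} (h : HasDerivAt γ (γ' u) u) (j : Fin n) :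
    HasDerivAt (coord γ j) (coord γ' j u) u := (hasDerivAt_apply h j).ofReal_comp

lemma fourierCoef_coord_deriv {γ : ℝ → Rn n} (hc : ContDiff ℝ 1 γ) (hp : Function.Periodic γ 1)
    (j : Fin n) (k : ℤ) :
    fourierCoef (coord (deriv γ) j) k = 2 * Real.pi * Complex.I * k * fourierCoef (coord γ j) k :=
  fourierCoef_deriv (ContPer.coord ⟨hc.continuous, hp⟩ j) ((contPer_deriv hc hp).coord j).cont
    (fun u => hasDerivAt_coord ((hc.differentiable one_ne_zero) u).hasDerivAt j) k

lemma sobolevSq_coordBound_deriv_lt_top {t : ℝ} (ht : 0 ≤ t + 1) {γ : ℝ → Rn n}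
    (hc : ContDiff ℝ 1 γ) (h : MemHF (t + 1) γ) : sobolevSq t (coordBound (deriv γ)) < ⊤ := by
  refine sobolevSq_sum_lt_top _ fun j => ?_
  have hγ := sobolevSq_lt_top_of_memHF ht h j
  rw [← sobolevSq_bracket_mul] at hγ
  refine (sobolevSq_mono fun k => ?_).trans_lt ((sobolevSq_const_mul t (ENNReal.ofReal
    (2 * Real.pi)) _).trans_lt (ENNReal.mul_lt_top (by finiteness) hγ))
  rw [fourierCoef_coord_deriv hc h.1, ENNReal.rpow_one, enorm_mul, ← mul_assoc, ← ofReal_norm,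
    norm_two_pi_I_mul_int, ENNReal.ofReal_mul (by positivity)]
  gcongr
  exact norm_int_le_bracket k

lemma sobolevSq_fracBound_lt_top {μ θ : ℝ} (hθ : 0 ≤ θ) {a : ℤ → ℝ≥0∞}
    (h : sobolevSq (μ + θ) a < ⊤) : sobolevSq μ (fracBound θ a) < ⊤ := by
  unfold fracBound
  rw [sobolevSq_const_mul]
  refine ENNReal.mul_lt_top (by finiteness) (lt_of_le_of_lt (sobolevSq_mono fun k => ?_)
    ((sobolevSq_bracket_mul μ θ a).trans_lt h))
  gcongr
  rw [← ENNReal.ofReal_rpow_of_nonneg (abs_nonneg _) hθ]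
  gcongr
  exact norm_int_le_bracket k

/-! ### Length and chord of a perturbed unit field -/

section Averages
variable {E : Type*} [NormedAddCommGroup E] [NormedSpace ℝ E]

lemma smul_lineAvg (F : ℝ → E) (w u : ℝ) : w • lineAvg F w u = ∫ x in u..u + w, F x := by
  have h := intervalIntegral.smul_integral_comp_add_mul (a := 0) (b := 1) F w u
  simp only [mul_zero, add_zero, mul_one] at h
  rw [← h, lineAvg]
  simp only [mul_comm w]

lemma lineAvg_one {F : ℝ → E} (hF : ContPer F) (u : ℝ) :
    lineAvg F 1 u = ∫ x in (0 : ℝ)..1, F x := by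
  rw [← one_smul ℝ (lineAvg F 1 u), smul_lineAvg, hF.per.intervalIntegral_add_eq u 0, zero_add]

lemma sub_eq_smul_lineAvg [CompleteSpace E] {γ : ℝ → E} (hγ : ContDiff ℝ 1 γ) (w u : ℝ) :
    γ (u + w) - γ u = w • lineAvg (deriv γ) w u := by
  rw [smul_lineAvg]
  exact (intervalIntegral.integral_deriv_eq_sub
    (fun x _ => (hγ.differentiable one_ne_zero) x)
    ((hγ.continuous_deriv le_rfl).intervalIntegrable _ _)).symm

lemma norm_lineAvg_le {F : ℝ → E} {C : ℝ} (h : ∀ u, ‖F u‖ ≤ C) (w u : ℝ) :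
    ‖lineAvg F w u‖ ≤ C := by
  have hbound := intervalIntegral.norm_integral_le_of_norm_le_const (a := (0 : ℝ)) (b := 1)
    (f := fun t => F (u + t * w)) (C := C) fun t _ => h _
  simpa [lineAvg] using hbound

lemma lineAvg_zero [CompleteSpace E] (F : ℝ → E) (u : ℝ) : lineAvg F 0 u = F u := by
  simp [lineAvg]

lemma continuous_lineAvg {F : ℝ → E} (hF : Continuous F) :
    Continuous fun p : ℝ × ℝ => lineAvg F p.2 p.1 :=
  intervalIntegral.continuous_parametric_intervalIntegral_of_continuous'
    (f := fun (p : ℝ × ℝ) t => F (p.1 + t * p.2)) (by fun_prop) 0 1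

lemma lineAvg_add_smul {F G : ℝ → E} (hF : Continuous F) (hG : Continuous G) (τ w u : ℝ) :
    lineAvg (fun x => F x + τ • G x) w u = lineAvg F w u + τ • lineAvg G w u := by
  simp only [lineAvg]
  rw [intervalIntegral.integral_add (Continuous.intervalIntegrable (by fun_prop) _ _)
    (Continuous.intervalIntegrable (by fun_prop) _ _), intervalIntegral.integral_smul]

lemma norm_lineAvg_sub_le {F G : ℝ → E} (hF : Continuous F) (hG : Continuous G) {C : ℝ}
    (h : ∀ u, ‖F u - G u‖ ≤ C) (w u : ℝ) : ‖lineAvg F w u - lineAvg G w u‖ ≤ C := by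
  have hsub : lineAvg F w u - lineAvg G w u = lineAvg (fun x => F x - G x) w u := by
    simp only [lineAvg]
    rw [intervalIntegral.integral_sub (Continuous.intervalIntegrable (by fun_prop) _ _)
      (Continuous.intervalIntegrable (by fun_prop) _ _)]
  rw [hsub]
  exact norm_lineAvg_le h w u

lemma norm_lineAvg_le_lineAvg_norm {F : ℝ → E} (w u : ℝ) :
    ‖lineAvg F w u‖ ≤ lineAvg (fun x => ‖F x‖) w u :=
  intervalIntegral.norm_integral_le_integral_norm zero_le_one

end Averages

section Covariance
variable {E : Type*} [NormedAddCommGroup E] [InnerProductSpace ℝ E]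

/-- The covariance of two fields on `[0, 1]`, with respect to Lebesgue measure. -/
def innerCov (A B : ℝ → E) : ℝ :=
  (∫ s in (0 : ℝ)..1, ⟪A s, B s⟫) - ⟪∫ s in (0 : ℝ)..1, A s, ∫ s in (0 : ℝ)..1, B s⟫

lemma innerCov_comm (A B : ℝ → E) : innerCov A B = innerCov B A := by
  simp only [innerCov, real_inner_comm]

lemma innerCov_self (A : ℝ → E) :
    innerCov A A = (∫ s in (0 : ℝ)..1, ‖A s‖ ^ 2) - ‖∫ s in (0 : ℝ)..1, A s‖ ^ 2 := by
  simp only [innerCov, real_inner_self_eq_norm_sq]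

lemma innerCov_add_left {A A' B : ℝ → E} (hA : Continuous A) (hA' : Continuous A')
    (hB : Continuous B) :
    innerCov (fun s => A s + A' s) B = innerCov A B + innerCov A' B := by
  simp only [innerCov, inner_add_left]
  rw [intervalIntegral.integral_add (Continuous.intervalIntegrable (by fun_prop) _ _)
      (Continuous.intervalIntegrable (by fun_prop) _ _),
    intervalIntegral.integral_add (hA.intervalIntegrable _ _) (hA'.intervalIntegrable _ _),
    inner_add_left]
  ring

lemma innerCov_sub_left {A A' B : ℝ → E} (hA : Continuous A) (hA' : Continuous A')
    (hB : Continuous B) :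
    innerCov (fun s => A s - A' s) B = innerCov A B - innerCov A' B := by
  have h := innerCov_add_left (A := fun s => A s - A' s) (hA.sub hA') hA' hB
  simp only [sub_add_cancel] at h
  linarith

lemma innerCov_sub_add {A B : ℝ → E} (hA : Continuous A) (hB : Continuous B) :
    innerCov (fun s => A s - B s) (fun s => A s + B s) = innerCov A A - innerCov B B := by
  rw [innerCov_sub_left hA hB (by fun_prop), innerCov_comm A, innerCov_comm B,
    innerCov_add_left hA hB hA, innerCov_add_left hA hB hB, innerCov_comm B A]
  ring

lemma abs_innerCov_le {A B : ℝ → E} (hA : Continuous A) (hB : Continuous B) {p : ℝ → ℝ}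
    (hp : Continuous p) {a b : ℝ} (ha : ∀ s ∈ Icc (0 : ℝ) 1, ‖A s‖ ≤ a * p s)
    (hb : ∀ s ∈ Icc (0 : ℝ) 1, ‖B s‖ ≤ b * p s) :
    |innerCov A B| ≤ a * b * ((∫ s in (0 : ℝ)..1, p s ^ 2) + (∫ s in (0 : ℝ)..1, p s) ^ 2) := by
  have norm_integral_le {F : ℝ → E} {c : ℝ} (hF : Continuous F)
      (h : ∀ s ∈ Icc (0 : ℝ) 1, ‖F s‖ ≤ c * p s) :
      ‖∫ s in (0 : ℝ)..1, F s‖ ≤ c * ∫ s in (0 : ℝ)..1, p s := by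
    rw [← intervalIntegral.integral_const_mul]
    exact (intervalIntegral.norm_integral_le_integral_norm zero_le_one).trans
      (intervalIntegral.integral_mono_on zero_le_one
        (Continuous.intervalIntegrable (by fun_prop) _ _)
        (Continuous.intervalIntegrable (by fun_prop) _ _) h)
  have hinner : |∫ s in (0 : ℝ)..1, ⟪A s, B s⟫| ≤ a * b * ∫ s in (0 : ℝ)..1, p s ^ 2 := by
    rw [← intervalIntegral.integral_const_mul, ← Real.norm_eq_abs]
    refine (intervalIntegral.norm_integral_le_integral_norm zero_le_one).trans
      (intervalIntegral.integral_mono_on zero_le_one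
        (Continuous.intervalIntegrable (by fun_prop) _ _)
        (Continuous.intervalIntegrable (by fun_prop) _ _) fun s hs => ?_)
    calc ‖⟪A s, B s⟫‖ ≤ ‖A s‖ * ‖B s‖ := norm_inner_le_norm _ _
      _ ≤ (a * p s) * (b * p s) :=
          mul_le_mul (ha s hs) (hb s hs) (norm_nonneg _) ((norm_nonneg _).trans (ha s hs))
      _ = a * b * p s ^ 2 := by ring
  have hmean := (abs_real_inner_le_norm (∫ s in (0 : ℝ)..1, A s) (∫ s in (0 : ℝ)..1, B s)).trans
    (mul_le_mul (norm_integral_le hA ha) (norm_integral_le hB hb) (norm_nonneg _)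
      ((norm_nonneg _).trans (norm_integral_le hA ha)))
  refine (abs_sub _ _).trans ((add_le_add hinner hmean).trans (le_of_eq ?_))
  ring

variable [CompleteSpace E]

lemma innerCov_const_left (c : E) {B : ℝ → E} (hB : Continuous B) :
    innerCov (fun _ => c) B = 0 := by
  have h : ∫ s in (0 : ℝ)..1, ⟪c, B s⟫ = ⟪c, ∫ s in (0 : ℝ)..1, B s⟫ :=
    (innerSL ℝ c).intervalIntegral_comp_comm (hB.intervalIntegrable 0 1)
  simp [innerCov, h]

lemma innerCov_sub_const_left {A B : ℝ → E} (hA : Continuous A) (hB : Continuous B) (c : E) :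
    innerCov (fun s => A s - c) B = innerCov A B := by
  rw [innerCov_sub_left hA continuous_const hB, innerCov_const_left c hB, sub_zero]

lemma innerCov_sub_const {A B : ℝ → E} (hA : Continuous A) (hB : Continuous B) (c d : E) :
    innerCov (fun s => A s - c) (fun s => B s - d) = innerCov A B := by
  rw [innerCov_sub_const_left hA (by fun_prop), innerCov_comm, innerCov_sub_const_left hB hA,
    innerCov_comm]

lemma innerCov_self_nonneg {A : ℝ → E} (hA : Continuous A) : 0 ≤ innerCov A A := by
  set m := ∫ s in (0 : ℝ)..1, A s with hm
  have hcentred : ∫ s in (0 : ℝ)..1, (A s - m) = 0 := by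
    rw [intervalIntegral.integral_sub (hA.intervalIntegrable _ _) (by simp)]
    simp [hm]
  rw [← innerCov_sub_const hA hA m m, innerCov_self, hcentred]
  simpa using intervalIntegral.integral_nonneg zero_le_one fun s _ => sq_nonneg ‖A s - m‖

lemma abs_innerCov_le_of_norm_sub_le {A B : ℝ → E} (hA : Continuous A) (hB : Continuous B)
    (A₀ B₀ : E) {p : ℝ → ℝ} (hp : Continuous p) {a b : ℝ} (ha₀ : 0 ≤ a) (hb₀ : 0 ≤ b)
    (ha : ∀ s ∈ Icc (0 : ℝ) 1, ‖A s - A₀‖ ≤ a * p s)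
    (hb : ∀ s ∈ Icc (0 : ℝ) 1, ‖B s - B₀‖ ≤ b * p s) :
    |innerCov A B| ≤ 2 * (a * b * ∫ s in (0 : ℝ)..1, p s ^ 2) := by
  have hjensen := innerCov_self_nonneg hp
  simp only [innerCov_self, Real.norm_eq_abs, sq_abs] at hjensen
  rw [← innerCov_sub_const hA hB A₀ B₀]
  refine (abs_innerCov_le (by fun_prop) (by fun_prop) hp ha hb).trans ?_
  nlinarith [mul_nonneg ha₀ hb₀]

end Covariance

lemma abs_rpow_neg_sub_le {p m x y : ℝ} (hp : 0 < p) (hm : 0 < m) (hx : m ≤ x) (hy : m ≤ y) :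
    |x ^ (-p) - y ^ (-p)| ≤ p * m ^ (-p - 1) * |x - y| := by
  have hmvt := (convex_Ici m).norm_image_sub_le_of_norm_hasDerivWithin_le (x := y) (y := x)
    (f := fun x => x ^ (-p)) (f' := fun x => (-p) * x ^ (-p - 1)) (C := p * m ^ (-p - 1))
    (fun z hz => (Real.hasDerivAt_rpow_const
      (Or.inl (hm.trans_le hz).ne')).hasDerivWithinAt) (fun z hz => ?_) hy hx
  · simpa only [Real.norm_eq_abs] using hmvt
  · have hz₀ : 0 < z := hm.trans_le hz
    rw [norm_mul, norm_neg, Real.norm_of_nonneg hp.le, Real.norm_of_nonneg (by positivity)]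
    gcongr 1
    exact Real.rpow_le_rpow_of_nonpos hm hz (by linarith)

lemma abs_rpow_neg_sub_shift_le {p m y : ℝ} (hp : 0 < p) (hm : 0 < m) (hy : 0 ≤ y)
    {x x' : ℝ} (hx : m ≤ x) (hx' : m ≤ x') :
    |(x ^ (-p) - (x + y) ^ (-p)) - (x' ^ (-p) - (x' + y) ^ (-p))| ≤
      p * ((p + 1) * m ^ (-(p + 1) - 1)) * (y * |x - x'|) := by
  have hmvt := (convex_Ici m).norm_image_sub_le_of_norm_hasDerivWithin_le (x := x') (y := x)
    (f := fun x => x ^ (-p) - (x + y) ^ (-p))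
    (f' := fun x => (-p) * x ^ (-p - 1) - (-p) * (x + y) ^ (-p - 1))
    (C := p * ((p + 1) * m ^ (-(p + 1) - 1) * y))
    (fun z hz => ?_) (fun z hz => ?_) hx' hx
  · simp only [Real.norm_eq_abs] at hmvt
    exact hmvt.trans (le_of_eq (by ring))
  · have hz₀ : 0 < z := hm.trans_le hz
    exact ((Real.hasDerivAt_rpow_const (Or.inl hz₀.ne')).sub
      ((Real.hasDerivAt_rpow_const (p := -p)
        (Or.inl (by positivity : z + y ≠ 0))).comp_add_const z y)).hasDerivWithinAt
  · have hz : m ≤ z := hz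
    have hderiv := abs_rpow_neg_sub_le (p := p + 1) (by linarith) hm hz
      (by linarith : m ≤ z + y)
    rw [show z - (z + y) = -y by ring, abs_neg, abs_of_nonneg hy] at hderiv
    rw [← mul_sub, norm_mul, norm_neg, Real.norm_of_nonneg hp.le, Real.norm_eq_abs,
      show -p - 1 = -(p + 1) by ring]
    gcongr

lemma exists_rpow_gap_le {p m : ℝ} (hp : 0 < p) (hm : 0 < m) :
    ∃ C, 0 ≤ C ∧ ∀ M₁ M₂ Y₁ Y₂ : ℝ, m ≤ M₁ → m ≤ M₂ → 0 ≤ Y₁ → 0 ≤ Y₂ →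
      |M₁ ^ (-p) - (M₁ + Y₁) ^ (-p)| ≤ C * Y₁ ∧
      |(M₁ ^ (-p) - (M₁ + Y₁) ^ (-p)) - (M₂ ^ (-p) - (M₂ + Y₂) ^ (-p))| ≤
        C * (Y₁ * |M₁ - M₂| + |Y₁ - Y₂|) := by
  set A := p * m ^ (-p - 1)
  set B := p * ((p + 1) * m ^ (-(p + 1) - 1))
  have hA : 0 ≤ A := by positivity
  have hB : 0 ≤ B := by positivity
  refine ⟨A + B, by positivity, fun M₁ M₂ Y₁ Y₂ hM₁ hM₂ hY₁ hY₂ => ⟨?_, ?_⟩⟩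
  · have hgap := abs_rpow_neg_sub_le hp hm hM₁ (by linarith : m ≤ M₁ + Y₁)
    rw [show M₁ - (M₁ + Y₁) = -Y₁ by ring, abs_neg, abs_of_nonneg hY₁] at hgap
    nlinarith
  · have hshift := abs_rpow_neg_sub_shift_le hp hm hY₁ hM₁ hM₂
    have hinc := abs_rpow_neg_sub_le hp hm (by linarith : m ≤ M₂ + Y₂)
      (by linarith : m ≤ M₂ + Y₁)
    rw [show M₂ + Y₂ - (M₂ + Y₁) = -(Y₁ - Y₂) by ring, abs_neg] at hinc
    rw [show (M₁ ^ (-p) - (M₁ + Y₁) ^ (-p)) - (M₂ ^ (-p) - (M₂ + Y₂) ^ (-p)) =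
      ((M₁ ^ (-p) - (M₁ + Y₁) ^ (-p)) - (M₂ ^ (-p) - (M₂ + Y₁) ^ (-p))) +
      ((M₂ + Y₂) ^ (-p) - (M₂ + Y₁) ^ (-p)) by ring]
    refine (abs_add_le _ _).trans ((add_le_add hshift hinc).trans ?_)
    have hAM := mul_nonneg hA (mul_nonneg hY₁ (abs_nonneg (M₁ - M₂)))
    have hBY := mul_nonneg hB (abs_nonneg (Y₁ - Y₂))
    linarith

lemma abs_div_sub_div_le {A B S T m δ β ε : ℝ} (hm : 0 < m) (hS : m ≤ S) (hT : m ≤ T)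
    (hAB : |A - B| ≤ δ) (hB : |B| ≤ β) (hST : |S - T| ≤ ε) :
    |A / S - B / T| ≤ δ / m + β / m * (ε / m) := by
  have hS₀ : 0 < S := hm.trans_le hS
  have hT₀ : 0 < T := hm.trans_le hT
  rw [show A / S - B / T = (A - B) / S - B / T * ((S - T) / S) by field_simp; ring]
  refine (abs_sub _ _).trans ?_
  rw [abs_mul, abs_div, abs_div, abs_div, abs_of_pos hS₀, abs_of_pos hT₀]
  have hδ := (abs_nonneg _).trans hAB
  have hβ := (abs_nonneg _).trans hB
  have hε := (abs_nonneg _).trans hST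
  gcongr

section LengthGap
variable {E : Type*} [NormedAddCommGroup E] [InnerProductSpace ℝ E]

lemma abs_inner_sub_inner_le (x x' y y' : E) :
    |⟪x, y⟫ - ⟪x', y'⟫| ≤ ‖x - x'‖ * ‖y‖ + ‖x'‖ * ‖y - y'‖ := by
  rw [show ⟪x, y⟫ - ⟪x', y'⟫ = ⟪x - x', y⟫ + ⟪x', y - y'⟫ by
    rw [inner_sub_left, inner_sub_right]; ring]
  exact (abs_add_le _ _).trans
    (add_le_add (abs_real_inner_le_norm _ _) (abs_real_inner_le_norm _ _))

lemma norm_add_smul_sub_norm_add_smul (a b : E) {τ₁ τ₂ : ℝ}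
    (h : ‖a + τ₁ • b‖ + ‖a + τ₂ • b‖ ≠ 0) :
    ‖a + τ₁ • b‖ - ‖a + τ₂ • b‖ =
      (τ₁ - τ₂) * (⟪b, (a + τ₁ • b) + (a + τ₂ • b)⟫ / (‖a + τ₁ • b‖ + ‖a + τ₂ • b‖)) := by
  rw [← mul_div_assoc, eq_div_iff h, mul_comm, ← sq_sub_sq, ← real_inner_self_eq_norm_sq,
    ← real_inner_self_eq_norm_sq]
  simp only [inner_add_left, inner_add_right, inner_smul_left, inner_smul_right,
    real_inner_comm a b, RCLike.conj_to_real]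
  ring

lemma norm_add_smul_bounds {a b : E} {K τ : ℝ} (ha : ‖a‖ = 1)
    (hb : ‖b‖ ≤ K) (hτ : |τ| * K ≤ 1 / 8) :
    7 / 8 ≤ ‖a + τ • b‖ ∧ ‖a + τ • b‖ ≤ 9 / 8 := by
  have hτb : ‖τ • b‖ ≤ 1 / 8 := by
    rw [norm_smul, Real.norm_eq_abs]
    exact (mul_le_mul_of_nonneg_left hb (abs_nonneg _)).trans hτ
  constructor
  · linarith [norm_sub_le_norm_add a (τ • b)]
  · linarith [norm_add_le a (τ • b)]

/-- For a parametrized curve with velocity `F` on `[0, 1]`, the gap between its squared length and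
its squared chord. -/
def lengthGap (F : ℝ → E) : ℝ :=
  (∫ s in (0 : ℝ)..1, ‖F s‖) ^ 2 - ‖∫ s in (0 : ℝ)..1, F s‖ ^ 2

lemma lengthGap_nonneg (F : ℝ → E) : 0 ≤ lengthGap F :=
  sub_nonneg.2 (pow_le_pow_left₀ (norm_nonneg _)
    (intervalIntegral.norm_integral_le_integral_norm zero_le_one) 2)

lemma lengthGap_eq (F : ℝ → E) :
    lengthGap F = innerCov F F - innerCov (fun s => ‖F s‖) (fun s => ‖F s‖) := by
  simp only [lengthGap, innerCov_self, Real.norm_eq_abs, sq_abs]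
  ring

lemma lengthGap_le_innerCov {F : ℝ → E} (hF : Continuous F) : lengthGap F ≤ innerCov F F := by
  linarith [lengthGap_eq F, innerCov_self_nonneg hF.norm]

lemma lengthGap_sub_lengthGap {F G : ℝ → E} (hF : Continuous F) (hG : Continuous G) :
    lengthGap F - lengthGap G = innerCov (fun s => F s - G s) (fun s => F s + G s) -
      innerCov (fun s => ‖F s‖ - ‖G s‖) (fun s => ‖F s‖ + ‖G s‖) := by
  rw [lengthGap_eq, lengthGap_eq, innerCov_sub_add hF hG, innerCov_sub_add hF.norm hG.norm]
  ring

/-- A unit field `f` and a field `g` bounded by `K` whose deviations on `[0,1]` from the constants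
`f0` and `g0` are controlled by `p`. -/
structure DevBound (f g : ℝ → E) (f0 g0 : E) (K : ℝ) (p : ℝ → ℝ) : Prop where
  cont_f : Continuous f
  cont_g : Continuous g
  cont_p : Continuous p
  norm_f : ∀ s, ‖f s‖ = 1
  norm_g : ∀ s, ‖g s‖ ≤ K
  norm_f0 : ‖f0‖ = 1
  norm_g0 : ‖g0‖ ≤ K
  dev_f : ∀ s ∈ Icc (0 : ℝ) 1, ‖f s - f0‖ ≤ p s
  dev_g : ∀ s ∈ Icc (0 : ℝ) 1, ‖g s - g0‖ ≤ K * p s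

namespace DevBound
variable {f g : ℝ → E} {f0 g0 : E} {K : ℝ} {p : ℝ → ℝ} {τ₁ τ₂ s : ℝ}

lemma norm_add_smul_sub_le (H : DevBound f g f0 g0 K p) {τ : ℝ} (hτ : |τ| * K ≤ 1 / 8)
    (hs : s ∈ Icc (0 : ℝ) 1) :
    ‖(f s + τ • g s) - (f0 + τ • g0)‖ ≤ 9 / 8 * p s := by
  have hp := (norm_nonneg _).trans (H.dev_f s hs)
  have hτg : ‖τ • (g s - g0)‖ ≤ 1 / 8 * p s := by
    rw [norm_smul, Real.norm_eq_abs]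
    refine (mul_le_mul_of_nonneg_left (H.dev_g s hs) (abs_nonneg _)).trans ?_
    rw [← mul_assoc]
    gcongr
  rw [show (f s + τ • g s) - (f0 + τ • g0) = (f s - f0) + τ • (g s - g0) by module]
  refine (norm_add_le _ _).trans ?_
  linarith [H.dev_f s hs]

lemma norm_add_smul_add_sub_le (H : DevBound f g f0 g0 K p) (h₁ : |τ₁| * K ≤ 1 / 8)
    (h₂ : |τ₂| * K ≤ 1 / 8) (hs : s ∈ Icc (0 : ℝ) 1) :
    ‖((f s + τ₁ • g s) + (f s + τ₂ • g s)) - ((f0 + τ₁ • g0) + (f0 + τ₂ • g0))‖ ≤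
      9 / 4 * p s := by
  rw [add_sub_add_comm]
  refine (norm_add_le _ _).trans ?_
  linarith [H.norm_add_smul_sub_le h₁ hs, H.norm_add_smul_sub_le h₂ hs]

lemma abs_norm_add_norm_sub_le (H : DevBound f g f0 g0 K p) (h₁ : |τ₁| * K ≤ 1 / 8)
    (h₂ : |τ₂| * K ≤ 1 / 8) (hs : s ∈ Icc (0 : ℝ) 1) :
    |(‖f s + τ₁ • g s‖ + ‖f s + τ₂ • g s‖) - (‖f0 + τ₁ • g0‖ + ‖f0 + τ₂ • g0‖)| ≤
      9 / 4 * p s := by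
  rw [add_sub_add_comm]
  refine (abs_add_le _ _).trans ?_
  linarith [abs_norm_sub_norm_le (f s + τ₁ • g s) (f0 + τ₁ • g0),
    abs_norm_sub_norm_le (f s + τ₂ • g s) (f0 + τ₂ • g0),
    H.norm_add_smul_sub_le h₁ hs, H.norm_add_smul_sub_le h₂ hs]

lemma abs_norm_sub_norm_sub_le (H : DevBound f g f0 g0 K p) (h₁ : |τ₁| * K ≤ 1 / 8)
    (h₂ : |τ₂| * K ≤ 1 / 8) (hs : s ∈ Icc (0 : ℝ) 1) :
    |(‖f s + τ₁ • g s‖ - ‖f s + τ₂ • g s‖) - (‖f0 + τ₁ • g0‖ - ‖f0 + τ₂ • g0‖)| ≤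
      7 * K * |τ₁ - τ₂| * p s := by
  have hp := (norm_nonneg _).trans (H.dev_f s hs)
  have hK := (norm_nonneg _).trans H.norm_g0
  obtain ⟨hf₁, hf₁'⟩ := norm_add_smul_bounds (H.norm_f s) (H.norm_g s) h₁
  obtain ⟨hf₂, hf₂'⟩ := norm_add_smul_bounds (H.norm_f s) (H.norm_g s) h₂
  obtain ⟨hc₁, hc₁'⟩ := norm_add_smul_bounds H.norm_f0 H.norm_g0 h₁
  obtain ⟨hc₂, hc₂'⟩ := norm_add_smul_bounds H.norm_f0 H.norm_g0 h₂
  have hsum_f : ‖(f s + τ₁ • g s) + (f s + τ₂ • g s)‖ ≤ 9 / 4 :=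
    (norm_add_le _ _).trans (by linarith)
  have hsum_c : ‖(f0 + τ₁ • g0) + (f0 + τ₂ • g0)‖ ≤ 9 / 4 :=
    (norm_add_le _ _).trans (by linarith)
  have hnum := (abs_inner_sub_inner_le (g s) g0 ((f s + τ₁ • g s) + (f s + τ₂ • g s))
    ((f0 + τ₁ • g0) + (f0 + τ₂ • g0))).trans
    (add_le_add (mul_le_mul (H.dev_g s hs) hsum_f (norm_nonneg _) (by positivity))
      (mul_le_mul H.norm_g0 (H.norm_add_smul_add_sub_le h₁ h₂ hs) (norm_nonneg _) hK))
  have hnum_c := (abs_real_inner_le_norm g0 ((f0 + τ₁ • g0) + (f0 + τ₂ • g0))).trans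
    (mul_le_mul H.norm_g0 hsum_c (norm_nonneg _) hK)
  have hquot := abs_div_sub_div_le (by norm_num : (0 : ℝ) < 7 / 4)
    (by linarith : 7 / 4 ≤ ‖f s + τ₁ • g s‖ + ‖f s + τ₂ • g s‖)
    (by linarith : 7 / 4 ≤ ‖f0 + τ₁ • g0‖ + ‖f0 + τ₂ • g0‖)
    hnum hnum_c (H.abs_norm_add_norm_sub_le h₁ h₂ hs)
  rw [norm_add_smul_sub_norm_add_smul _ _ (by linarith), norm_add_smul_sub_norm_add_smul _ _
    (by linarith), ← mul_sub, abs_mul]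
  have hKp : 0 ≤ K * p s := by positivity
  calc _ ≤ |τ₁ - τ₂| * (7 * K * p s) := by gcongr; linarith
    _ = 7 * K * |τ₁ - τ₂| * p s := by ring

variable [CompleteSpace E]

lemma lengthGap_le (H : DevBound f g f0 g0 K p) {τ : ℝ} (hτ : |τ| * K ≤ 1 / 8) :
    lengthGap (fun s => f s + τ • g s) ≤ 8 * ∫ s in (0 : ℝ)..1, p s ^ 2 := by
  have hF : Continuous (fun s => f s + τ • g s) := by
    have := H.cont_f; have := H.cont_g; fun_prop
  have hcov := (le_abs_self _).trans (abs_innerCov_le_of_norm_sub_le hF hF _ _ H.cont_p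
    (by norm_num) (by norm_num) (fun s hs => H.norm_add_smul_sub_le hτ hs)
    (fun s hs => H.norm_add_smul_sub_le hτ hs))
  have hP : 0 ≤ ∫ s in (0 : ℝ)..1, p s ^ 2 :=
    intervalIntegral.integral_nonneg zero_le_one fun s _ => sq_nonneg _
  linarith [lengthGap_le_innerCov hF]

lemma abs_lengthGap_sub_le (H : DevBound f g f0 g0 K p) (h₁ : |τ₁| * K ≤ 1 / 8)
    (h₂ : |τ₂| * K ≤ 1 / 8) :
    |lengthGap (fun s => f s + τ₁ • g s) - lengthGap (fun s => f s + τ₂ • g s)| ≤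
      48 * K * |τ₁ - τ₂| * ∫ s in (0 : ℝ)..1, p s ^ 2 := by
  have hf := H.cont_f
  have hg := H.cont_g
  have hK := (norm_nonneg _).trans H.norm_g0
  have hvec := abs_innerCov_le_of_norm_sub_le (A := fun s => (τ₁ - τ₂) • g s)
    (B := fun s => (f s + τ₁ • g s) + (f s + τ₂ • g s)) (by fun_prop) (by fun_prop)
    ((τ₁ - τ₂) • g0) ((f0 + τ₁ • g0) + (f0 + τ₂ • g0)) H.cont_p (a := K * |τ₁ - τ₂|)
    (by positivity) (by norm_num) (fun s hs => by
      rw [← smul_sub, norm_smul, Real.norm_eq_abs, mul_comm K, mul_assoc]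
      exact mul_le_mul_of_nonneg_left (H.dev_g s hs) (abs_nonneg _))
    (fun s hs => H.norm_add_smul_add_sub_le h₁ h₂ hs)
  have hnorm := abs_innerCov_le_of_norm_sub_le (A := fun s => ‖f s + τ₁ • g s‖ - ‖f s + τ₂ • g s‖)
    (B := fun s => ‖f s + τ₁ • g s‖ + ‖f s + τ₂ • g s‖) (by fun_prop) (by fun_prop) _ _ H.cont_p
    (by positivity) (by norm_num) (fun s hs => H.abs_norm_sub_norm_sub_le h₁ h₂ hs)
    (fun s hs => H.abs_norm_add_norm_sub_le h₁ h₂ hs)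
  have hsub (s : ℝ) : (f s + τ₁ • g s) - (f s + τ₂ • g s) = (τ₁ - τ₂) • g s := by module
  rw [lengthGap_sub_lengthGap (by fun_prop) (by fun_prop)]
  simp only [hsub]
  refine (abs_sub _ _).trans ((add_le_add hvec hnorm).trans ?_)
  have hP : 0 ≤ ∫ s in (0 : ℝ)..1, p s ^ 2 :=
    intervalIntegral.integral_nonneg zero_le_one fun s _ => sq_nonneg _
  have hKP : 0 ≤ K * |τ₁ - τ₂| * ∫ s in (0 : ℝ)..1, p s ^ 2 := by positivity
  linarith

end DevBound
end LengthGap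

/-! ### Variations of an arc-length curve -/

lemma exists_chord_lower_bound {γ : ℝ → Rn n} (hc : ContDiff ℝ 1 γ)
    (hp : Function.Periodic γ 1) (hinj : PerInjective γ) (harc : ArcLengthParam γ) :
    ∃ c, 0 < c ∧ ∀ w, |w| ≤ 1 / 2 → ∀ u, c ≤ ‖lineAvg (deriv γ) w u‖ := by
  have hcont := (continuous_lineAvg (hc.continuous_deriv le_rfl)).norm
  obtain ⟨⟨u₀, w₀⟩, hmem, hmin⟩ := (isCompact_Icc (a := (0 : ℝ)) (b := 1)).prod
    (isCompact_Icc (a := (-(1 / 2) : ℝ)) (b := 1 / 2)) |>.exists_isMinOn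
    ⟨(0, 0), by simp⟩ hcont.continuousOn
  refine ⟨‖lineAvg (deriv γ) w₀ u₀‖, norm_pos_iff.2 fun hzero => ?_, fun w hw u => ?_⟩
  · have hclosed := sub_eq_smul_lineAvg hc w₀ u₀
    rw [hzero, smul_zero, sub_eq_zero] at hclosed
    obtain ⟨k, hk⟩ := hinj _ _ hclosed.symm
    have hk : w₀ = k := by linarith
    have hk₀ : k = 0 := by
      obtain ⟨hlower, hupper⟩ : -(1 / 2) ≤ w₀ ∧ w₀ ≤ 1 / 2 := hmem.2
      rw [hk] at hlower hupper
      have : (-1 : ℝ) < k := by linarith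
      have : (k : ℝ) < 1 := by linarith
      norm_cast at *
      lia
    rw [hk, hk₀, Int.cast_zero, lineAvg_zero] at hzero
    simpa [hzero] using harc u₀
  · obtain ⟨y, hy, hyu⟩ := ((contPer_deriv hc hp).lineAvg w).per.exists_mem_Ico₀ one_pos u
    rw [hyu]
    exact isMinOn_iff.1 hmin (y, w) (mk_mem_prod (Ico_subset_Icc_self hy) (abs_le.1 hw))

lemma ContPer.integral_add_sub_intCast {E : Type*} [NormedAddCommGroup E] [NormedSpace ℝ E]
    {F : ℝ → E} (hF : ContPer F) (u w : ℝ) (m : ℤ) :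
    ∫ x in u..u + w - m, F x = w • lineAvg F w u - m • lineAvg F 1 u := by
  have hperiod := hF.per.intervalIntegral_add_zsmul_eq (-m) (u + w)
    (fun a b => hF.cont.intervalIntegrable a b)
  rw [hF.per.intervalIntegral_add_eq _ 0, zero_add, zsmul_one, Int.cast_neg, ← sub_eq_add_neg,
    neg_smul] at hperiod
  rw [← intervalIntegral.integral_add_adjacent_intervals (b := u + w)
    (hF.cont.intervalIntegrable _ _) (hF.cont.intervalIntegrable _ _), hperiod, ← smul_lineAvg,
    lineAvg_one hF, sub_eq_add_neg]

/-- The standing assumptions of the first variation: a closed unit-speed `C¹` curve `γ` whose chords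
`|w| ≤ 1 / 2` have length at least `c |w|`, and a direction `h` whose derivative is bounded by `K`
and `K`-Lipschitz. -/
structure Variation (γ h : ℝ → Rn n) (c K : ℝ) : Prop where
  contDiff : ContDiff ℝ 1 γ
  per : Function.Periodic γ 1
  arc : ArcLengthParam γ
  contDiff_dir : ContDiff ℝ 1 h
  per_dir : Function.Periodic h 1
  norm_dir : ∀ u, ‖deriv h u‖ ≤ K
  lip_dir : ∀ x y, ‖deriv h x - deriv h y‖ ≤ K * |x - y|
  pos : 0 < c
  chord : ∀ w, |w| ≤ 1 / 2 → ∀ u, c ≤ ‖lineAvg (deriv γ) w u‖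

/-- The velocity of the varied curve `γ + τ h`. -/
def vel (γ h : ℝ → Rn n) (τ u : ℝ) : Rn n := deriv γ u + τ • deriv h u

/-- Mean speed of the varied curve between `u` and `u + w`. -/
def meanSpeed (γ h : ℝ → Rn n) (τ w u : ℝ) : ℝ := lineAvg (fun x => ‖vel γ h τ x‖) w u

namespace Variation
variable {γ h : ℝ → Rn n} {c K : ℝ}

lemma continuous_deriv (V : Variation γ h c K) : Continuous (deriv γ) :=
  V.contDiff.continuous_deriv le_rfl

lemma continuous_deriv_dir (V : Variation γ h c K) : Continuous (deriv h) :=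
  V.contDiff_dir.continuous_deriv le_rfl

lemma continuous_vel (V : Variation γ h c K) (τ : ℝ) : Continuous (vel γ h τ) := by
  have := V.continuous_deriv; have := V.continuous_deriv_dir
  unfold vel; fun_prop

lemma nonneg (V : Variation γ h c K) : 0 ≤ K := (norm_nonneg _).trans (V.norm_dir 0)

lemma le_one (V : Variation γ h c K) : c ≤ 1 := by
  simpa [lineAvg_zero, V.arc _] using V.chord 0 (by norm_num) 0

lemma deriv_add_smul (V : Variation γ h c K) (τ : ℝ) : deriv (γ + τ • h) = vel γ h τ := by
  funext u
  exact (((V.contDiff.differentiable one_ne_zero) u).hasDerivAt.add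
    (((V.contDiff_dir.differentiable one_ne_zero) u).hasDerivAt.const_smul τ)).deriv

lemma contDiff_add_smul (V : Variation γ h c K) (τ : ℝ) : ContDiff ℝ 1 (γ + τ • h) :=
  V.contDiff.add (V.contDiff_dir.const_smul τ)

lemma per_add_smul (V : Variation γ h c K) (τ : ℝ) : Function.Periodic (γ + τ • h) 1 :=
  fun u => by simp [V.per u, V.per_dir u]

lemma contPer_vel (V : Variation γ h c K) (τ : ℝ) : ContPer (vel γ h τ) := by
  rw [← V.deriv_add_smul τ]
  exact contPer_deriv (V.contDiff_add_smul τ) (V.per_add_smul τ)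

lemma contPer_norm_vel (V : Variation γ h c K) (τ : ℝ) : ContPer fun u => ‖vel γ h τ u‖ :=
  ⟨(V.continuous_vel τ).norm, fun u => by simp only [(V.contPer_vel τ).per u]⟩

lemma norm_vel_bounds (V : Variation γ h c K) {τ : ℝ} (hτ : |τ| * K ≤ c / 8) (u : ℝ) :
    7 / 8 ≤ ‖vel γ h τ u‖ ∧ ‖vel γ h τ u‖ ≤ 9 / 8 :=
  norm_add_smul_bounds (V.arc u) (V.norm_dir u) (hτ.trans (by linarith [V.le_one]))

lemma norm_vel_sub_le (V : Variation γ h c K) (τ₁ τ₂ u : ℝ) :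
    ‖vel γ h τ₁ u - vel γ h τ₂ u‖ ≤ K * |τ₁ - τ₂| := by
  rw [vel, vel, show deriv γ u + τ₁ • deriv h u - (deriv γ u + τ₂ • deriv h u) =
    (τ₁ - τ₂) • deriv h u by module, norm_smul, mul_comm, Real.norm_eq_abs]
  gcongr
  exact V.norm_dir u

lemma chord_eq (V : Variation γ h c K) (τ u w : ℝ) :
    (γ + τ • h) (u + w) - (γ + τ • h) u = w • lineAvg (vel γ h τ) w u := by
  rw [sub_eq_smul_lineAvg (V.contDiff_add_smul τ), V.deriv_add_smul]

lemma arcLen_eq (V : Variation γ h c K) (τ u w : ℝ) :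
    arcLen (γ + τ • h) u w = |w| * |meanSpeed γ h τ w u| := by
  rw [arcLen, V.deriv_add_smul, ← smul_lineAvg, smul_eq_mul, abs_mul, meanSpeed]

lemma curveLen_eq (V : Variation γ h c K) (τ u : ℝ) :
    curveLen (γ + τ • h) = meanSpeed γ h τ 1 u := by
  rw [curveLen, V.deriv_add_smul, meanSpeed, lineAvg_one (V.contPer_norm_vel τ)]

lemma meanSpeed_bounds (V : Variation γ h c K) {τ : ℝ} (hτ : |τ| * K ≤ c / 8) (w u : ℝ) :
    7 / 8 ≤ meanSpeed γ h τ w u ∧ meanSpeed γ h τ w u ≤ 9 / 8 := by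
  have hc := V.continuous_vel τ
  constructor
  · rw [show (7 / 8 : ℝ) = ∫ _ in (0 : ℝ)..1, (7 / 8 : ℝ) by simp]
    exact intervalIntegral.integral_mono_on zero_le_one (by simp)
      (Continuous.intervalIntegrable (by fun_prop) _ _) fun s _ => (V.norm_vel_bounds hτ _).1
  · rw [show (9 / 8 : ℝ) = ∫ _ in (0 : ℝ)..1, (9 / 8 : ℝ) by simp]
    exact intervalIntegral.integral_mono_on zero_le_one
      (Continuous.intervalIntegrable (by fun_prop) _ _) (by simp)
      fun s _ => (V.norm_vel_bounds hτ _).2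

lemma abs_meanSpeed_sub_le (V : Variation γ h c K) (τ₁ τ₂ w u : ℝ) :
    |meanSpeed γ h τ₁ w u - meanSpeed γ h τ₂ w u| ≤ K * |τ₁ - τ₂| :=
  norm_lineAvg_sub_le (V.continuous_vel τ₁).norm (V.continuous_vel τ₂).norm
    (fun u => (abs_norm_sub_norm_le _ _).trans (V.norm_vel_sub_le τ₁ τ₂ u)) w u

lemma norm_lineAvg_vel_sub_le (V : Variation γ h c K) (τ₁ τ₂ w u : ℝ) :
    ‖lineAvg (vel γ h τ₁) w u - lineAvg (vel γ h τ₂) w u‖ ≤ K * |τ₁ - τ₂| :=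
  norm_lineAvg_sub_le (V.continuous_vel τ₁) (V.continuous_vel τ₂)
    (fun u => (V.norm_vel_sub_le τ₁ τ₂ u)) w u

lemma vel_zero : vel γ h 0 = deriv γ := by funext u; simp [vel]

lemma meanSpeed_zero (V : Variation γ h c K) (w u : ℝ) : meanSpeed γ h 0 w u = 1 := by
  simp [meanSpeed, vel_zero, lineAvg, V.arc _]

lemma norm_lineAvg_vel_bounds (V : Variation γ h c K) {τ : ℝ} (hτ : |τ| * K ≤ c / 8) {w : ℝ}
    (hw : |w| ≤ 1 / 2) (u : ℝ) :
    c / 2 ≤ ‖lineAvg (vel γ h τ) w u‖ ∧ ‖lineAvg (vel γ h τ) w u‖ ≤ 9 / 8 := by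
  refine ⟨?_, norm_lineAvg_le (fun u => (V.norm_vel_bounds hτ u).2) w u⟩
  have hpert := V.norm_lineAvg_vel_sub_le 0 τ w u
  rw [vel_zero, zero_sub, abs_neg] at hpert
  linarith [V.pos, V.chord w hw u,
    norm_le_norm_add_norm_sub' (lineAvg (deriv γ) w u) (lineAvg (vel γ h τ) w u)]

lemma norm_lineAvg_vel_le_meanSpeed (τ w u : ℝ) :
    ‖lineAvg (vel γ h τ) w u‖ ≤ meanSpeed γ h τ w u := norm_lineAvg_le_lineAvg_norm w u

lemma idist_eq (V : Variation γ h c K) {τ : ℝ} (hτ : |τ| * K ≤ c / 8) (u w : ℝ) :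
    idist (γ + τ • h) u w = min (|w| * meanSpeed γ h τ w u)
      (meanSpeed γ h τ 1 u - |w| * meanSpeed γ h τ w u) := by
  rw [idist, V.arcLen_eq, V.curveLen_eq τ u,
    abs_of_nonneg (by linarith [(V.meanSpeed_bounds hτ w u).1] : 0 ≤ meanSpeed γ h τ w u)]

lemma chord_le_idist (V : Variation γ h c K) {τ : ℝ} (hτ : |τ| * K ≤ c / 8) (u : ℝ) {w : ℝ}
    (hw : |w| ≤ 1 / 2) : |w| * ‖lineAvg (vel γ h τ) w u‖ ≤ idist (γ + τ • h) u w := by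
  rw [V.idist_eq hτ]
  refine le_min (by gcongr; exact norm_lineAvg_vel_le_meanSpeed τ w u) ?_
  obtain ⟨ε, hε, hεw⟩ : ∃ ε : ℤ, |(ε : ℝ)| = 1 ∧ w = ε * |w| := by
    rcases le_total 0 w with h | h
    · exact ⟨1, by simp, by simp [abs_of_nonneg h]⟩
    · exact ⟨-1, by simp, by simp [abs_of_nonpos h]⟩
  have hclosed : lineAvg (vel γ h τ) 1 u = 0 := by
    rw [← one_smul ℝ (lineAvg _ _ _), ← V.chord_eq, V.per_add_smul τ u, sub_self]
  have hspeed_w := V.meanSpeed_bounds hτ w u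
  have hspeed_one := V.meanSpeed_bounds hτ 1 u
  -- The chord is also spanned by the complementary arc, which runs from `u` to `u + w - ε`.
  calc |w| * ‖lineAvg (vel γ h τ) w u‖
      = ‖∫ x in u..u + w - ε, vel γ h τ x‖ := by
        rw [(V.contPer_vel τ).integral_add_sub_intCast, hclosed, smul_zero, sub_zero, norm_smul,
          Real.norm_eq_abs]
    _ ≤ |∫ x in u..u + w - ε, ‖vel γ h τ x‖| :=
        intervalIntegral.norm_integral_le_abs_integral_norm
    _ = |w * meanSpeed γ h τ w u - ε * meanSpeed γ h τ 1 u| := by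
        rw [(V.contPer_norm_vel τ).integral_add_sub_intCast, smul_eq_mul, zsmul_eq_mul, meanSpeed,
          meanSpeed]
    _ = meanSpeed γ h τ 1 u - |w| * meanSpeed γ h τ w u := by
        nth_rewrite 1 [hεw]
        rw [mul_assoc, ← mul_sub, abs_mul, hε, one_mul, abs_sub_comm, abs_of_nonneg]
        nlinarith [abs_nonneg w]

end Variation

/-- Mean square oscillation of `F` between `u` and `u + w`. -/
def meanOsc (F : ℝ → Rn n) (w u : ℝ) : ℝ := ∫ s in (0 : ℝ)..1, ‖F (u + s * w) - F u‖ ^ 2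

lemma meanOsc_nonneg (F : ℝ → Rn n) (w u : ℝ) : 0 ≤ meanOsc F w u :=
  intervalIntegral.integral_nonneg zero_le_one fun _ _ => sq_nonneg _

/-- The weight dominating, up to a constant, the O'Hara integrand of the varied curves and its
Lipschitz constant in the variation parameter; here `F` is the tangent. -/
def oscWeight (α : ℝ) (F : ℝ → Rn n) (w u : ℝ) : ℝ := |w| ^ (-α) * (meanOsc F w u + w ^ 2)

lemma oscWeight_nonneg (α : ℝ) (F : ℝ → Rn n) (w u : ℝ) : 0 ≤ oscWeight α F w u :=
  mul_nonneg (by positivity) (add_nonneg (meanOsc_nonneg F w u) (sq_nonneg w))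

lemma one_div_mul_rpow {a x α : ℝ} (ha : 0 ≤ a) (hx : 0 ≤ x) :
    1 / (a * x) ^ α = a ^ (-α) * (x ^ 2) ^ (-(α / 2)) := by
  rw [Real.mul_rpow ha hx, ← Real.rpow_natCast, ← Real.rpow_mul hx, Real.rpow_neg ha,
    show ((2 : ℕ) : ℝ) * -(α / 2) = -α by push_cast; ring, Real.rpow_neg hx, one_div, mul_inv]

lemma abs_mul_sub_mul_le {a a' b b' A B dA dB : ℝ} (ha : |a| ≤ A)
    (hb : |b'| ≤ B) (hda : |a - a'| ≤ dA) (hdb : |b - b'| ≤ dB) :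
    |a * b - a' * b'| ≤ A * dB + dA * B := by
  rw [show a * b - a' * b' = a * (b - b') + (a - a') * b' by ring]
  refine (abs_add_le _ _).trans ?_
  rw [abs_mul, abs_mul]
  exact add_le_add (mul_le_mul ha hdb (abs_nonneg _) ((abs_nonneg _).trans ha))
    (mul_le_mul hda hb (abs_nonneg _) ((abs_nonneg _).trans hda))

namespace Variation
variable {γ h : ℝ → Rn n} {c K : ℝ}

lemma devBound (V : Variation γ h c K) (u w : ℝ) :
    DevBound (fun s => deriv γ (u + s * w)) (fun s => deriv h (u + s * w)) (deriv γ u) (deriv h u)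
      K (fun s => ‖deriv γ (u + s * w) - deriv γ u‖ + |w|) where
  cont_f := by have := V.continuous_deriv; fun_prop
  cont_g := by have := V.continuous_deriv_dir; fun_prop
  cont_p := by have := V.continuous_deriv; fun_prop
  norm_f _ := V.arc _
  norm_g _ := V.norm_dir _
  norm_f0 := V.arc _
  norm_g0 := V.norm_dir _
  dev_f s _ := by simp
  dev_g s hs := by
    refine (V.lip_dir _ _).trans ?_
    have := V.nonneg
    gcongr
    rw [add_sub_cancel_left, abs_mul, abs_of_nonneg hs.1]
    nlinarith [norm_nonneg (deriv γ (u + s * w) - deriv γ u), abs_nonneg w, hs.2]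

lemma integral_dev_sq_le (V : Variation γ h c K) (u w : ℝ) :
    ∫ s in (0 : ℝ)..1, (‖deriv γ (u + s * w) - deriv γ u‖ + |w|) ^ 2 ≤
      2 * (meanOsc (deriv γ) w u + w ^ 2) := by
  have hc := V.continuous_deriv
  have hright : 2 * (meanOsc (deriv γ) w u + w ^ 2) =
      ∫ s in (0 : ℝ)..1, 2 * (‖deriv γ (u + s * w) - deriv γ u‖ ^ 2 + w ^ 2) := by
    rw [intervalIntegral.integral_const_mul, intervalIntegral.integral_add
      (Continuous.intervalIntegrable (by fun_prop) _ _) (by simp), meanOsc]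
    simp
  rw [hright]
  refine intervalIntegral.integral_mono_on zero_le_one
    (Continuous.intervalIntegrable (by fun_prop) _ _)
    (Continuous.intervalIntegrable (by fun_prop) _ _) fun s _ => ?_
  nlinarith [sq_nonneg (‖deriv γ (u + s * w) - deriv γ u‖ - |w|), sq_abs w]

lemma meanSpeed_sq (τ w u : ℝ) :
    meanSpeed γ h τ w u ^ 2 =
      ‖lineAvg (vel γ h τ) w u‖ ^ 2 + lengthGap (fun s => vel γ h τ (u + s * w)) := by
  simp only [lengthGap, meanSpeed, lineAvg]
  ring

lemma lengthGap_vel_le (V : Variation γ h c K) {τ : ℝ} (hτ : |τ| * K ≤ c / 8) (w u : ℝ) :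
    lengthGap (fun s => vel γ h τ (u + s * w)) ≤ 16 * (meanOsc (deriv γ) w u + w ^ 2) := by
  have hgap := (V.devBound u w).lengthGap_le (hτ.trans (by linarith [V.le_one]))
  simp only [vel]
  linarith [V.integral_dev_sq_le u w]

lemma abs_lengthGap_vel_sub_le (V : Variation γ h c K) {τ₁ τ₂ : ℝ} (h₁ : |τ₁| * K ≤ c / 8)
    (h₂ : |τ₂| * K ≤ c / 8) (w u : ℝ) :
    |lengthGap (fun s => vel γ h τ₁ (u + s * w)) - lengthGap (fun s => vel γ h τ₂ (u + s * w))| ≤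
      96 * K * |τ₁ - τ₂| * (meanOsc (deriv γ) w u + w ^ 2) := by
  have hgap := (V.devBound u w).abs_lengthGap_sub_le (h₁.trans (by linarith [V.le_one]))
    (h₂.trans (by linarith [V.le_one]))
  have hK := V.nonneg
  have hdev : 48 * K * |τ₁ - τ₂| * _ ≤ 48 * K * |τ₁ - τ₂| * _ :=
    mul_le_mul_of_nonneg_left (V.integral_dev_sq_le u w) (by positivity)
  simp only [vel]
  linarith

lemma abs_mul_speed_le (V : Variation γ h c K) {τ₁ τ₂ : ℝ} (h₁ : |τ₁| * K ≤ c / 8)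
    (h₂ : |τ₂| * K ≤ c / 8) (u v : ℝ) {x₁ x₂ C : ℝ} (hx : |x₁| ≤ C)
    (hx' : |x₁ - x₂| ≤ C * |τ₁ - τ₂|) :
    |x₁ * (‖vel γ h τ₁ v‖ * ‖vel γ h τ₁ u‖)| ≤ (2 + 3 * K) * C ∧
    |x₁ * (‖vel γ h τ₁ v‖ * ‖vel γ h τ₁ u‖) - x₂ * (‖vel γ h τ₂ v‖ * ‖vel γ h τ₂ u‖)| ≤
      (2 + 3 * K) * C * |τ₁ - τ₂| := by
  have hC : 0 ≤ C := (abs_nonneg _).trans hx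
  have hKC : 0 ≤ K * C := mul_nonneg V.nonneg hC
  have speed_le {τ : ℝ} (hτ : |τ| * K ≤ c / 8) : |‖vel γ h τ v‖ * ‖vel γ h τ u‖| ≤ 2 := by
    rw [abs_of_nonneg (by positivity)]
    nlinarith [V.norm_vel_bounds hτ u, V.norm_vel_bounds hτ v]
  have norm_diff (x : ℝ) : |‖vel γ h τ₁ x‖ - ‖vel γ h τ₂ x‖| ≤ K * |τ₁ - τ₂| :=
    (abs_norm_sub_norm_le _ _).trans (V.norm_vel_sub_le τ₁ τ₂ x)
  have speed_diff : |‖vel γ h τ₁ v‖ * ‖vel γ h τ₁ u‖ - ‖vel γ h τ₂ v‖ * ‖vel γ h τ₂ u‖| ≤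
      3 * (K * |τ₁ - τ₂|) := by
    refine (abs_mul_sub_mul_le (A := 9 / 8) (B := 9 / 8) ?_ ?_ (norm_diff v)
      (norm_diff u)).trans (by linarith [(abs_nonneg _).trans (norm_diff u)])
    · simpa only [abs_norm] using (V.norm_vel_bounds h₁ v).2
    · simpa only [abs_norm] using (V.norm_vel_bounds h₂ u).2
  constructor
  · rw [abs_mul]
    linarith [mul_le_mul hx (speed_le h₁) (abs_nonneg _) hC]
  · exact (abs_mul_sub_mul_le hx (speed_le h₂) hx' speed_diff).trans (le_of_eq (by ring))

lemma ohIntegrand_eq (V : Variation γ h c K) (α τ u w : ℝ) :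
    ohIntegrand α (γ + τ • h) u w =
      (1 / (|w| * ‖lineAvg (vel γ h τ) w u‖) ^ α - 1 / idist (γ + τ • h) u w ^ α) *
        (‖vel γ h τ (u + w)‖ * ‖vel γ h τ u‖) := by
  rw [ohIntegrand, V.chord_eq, V.deriv_add_smul, norm_smul, Real.norm_eq_abs, mul_assoc]

lemma ohIntegrand_eq_of_idist (V : Variation γ h c K) (α : ℝ) {τ : ℝ} (hτ : |τ| * K ≤ c / 8)
    {u w : ℝ} (hd : idist (γ + τ • h) u w = |w| * meanSpeed γ h τ w u) :
    ohIntegrand α (γ + τ • h) u w =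
      |w| ^ (-α) * (((‖lineAvg (vel γ h τ) w u‖ ^ 2) ^ (-(α / 2)) -
        (meanSpeed γ h τ w u ^ 2) ^ (-(α / 2))) *
        (‖vel γ h τ (u + w)‖ * ‖vel γ h τ u‖)) := by
  rw [V.ohIntegrand_eq, hd, one_div_mul_rpow (abs_nonneg _) (norm_nonneg _),
    one_div_mul_rpow (abs_nonneg _) (by linarith [(V.meanSpeed_bounds hτ w u).1])]
  ring

lemma idist_eq_of_abs_lt (V : Variation γ h c K) {τ : ℝ} (hτ : |τ| * K ≤ c / 8) (u : ℝ) {w : ℝ}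
    (hw : |w| < 1 / 4) : idist (γ + τ • h) u w = |w| * meanSpeed γ h τ w u := by
  rw [V.idist_eq hτ, min_eq_left]
  nlinarith [V.meanSpeed_bounds hτ w u, V.meanSpeed_bounds hτ 1 u, abs_nonneg w]

lemma exists_abs_rpow_meanSpeed_gap_le (V : Variation γ h c K) {α : ℝ} (hα : 0 < α) :
    ∃ C, 0 ≤ C ∧ ∀ τ₁ τ₂ : ℝ, |τ₁| * K ≤ c / 8 → |τ₂| * K ≤ c / 8 → ∀ u w : ℝ, |w| ≤ 1 / 2 →
      |(‖lineAvg (vel γ h τ₁) w u‖ ^ 2) ^ (-α) - (meanSpeed γ h τ₁ w u ^ 2) ^ (-α)| ≤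
        C * (meanOsc (deriv γ) w u + w ^ 2) ∧
      |((‖lineAvg (vel γ h τ₁) w u‖ ^ 2) ^ (-α) - (meanSpeed γ h τ₁ w u ^ 2) ^ (-α)) -
        ((‖lineAvg (vel γ h τ₂) w u‖ ^ 2) ^ (-α) - (meanSpeed γ h τ₂ w u ^ 2) ^ (-α))| ≤
        C * (meanOsc (deriv γ) w u + w ^ 2) * |τ₁ - τ₂| := by
  have hc := V.pos
  have hK := V.nonneg
  obtain ⟨C, hC, hgap⟩ := exists_rpow_gap_le hα (by positivity : 0 < (c / 2) ^ 2)
  refine ⟨C * (16 + 144 * K), by positivity, fun τ₁ τ₂ h₁ h₂ u w hw => ?_⟩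
  have hZ : 0 ≤ meanOsc (deriv γ) w u + w ^ 2 := add_nonneg (meanOsc_nonneg _ _ _) (sq_nonneg w)
  have hY := V.lengthGap_vel_le h₁ w u
  have chord_bound {τ : ℝ} (hτ : |τ| * K ≤ c / 8) :
      (c / 2) ^ 2 ≤ ‖lineAvg (vel γ h τ) w u‖ ^ 2 := by
    have := (V.norm_lineAvg_vel_bounds hτ hw u).1
    gcongr
  have chord_diff : |‖lineAvg (vel γ h τ₁) w u‖ ^ 2 - ‖lineAvg (vel γ h τ₂) w u‖ ^ 2| ≤
      3 * (K * |τ₁ - τ₂|) := by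
    have hdiff := (abs_norm_sub_norm_le _ _).trans (V.norm_lineAvg_vel_sub_le τ₁ τ₂ w u)
    rw [sq, sq]
    refine (abs_mul_sub_mul_le (A := 9 / 8) (B := 9 / 8) ?_ ?_ hdiff hdiff).trans
      (by linarith [(abs_nonneg _).trans hdiff])
    · simpa only [abs_norm] using (V.norm_lineAvg_vel_bounds h₁ hw u).2
    · simpa only [abs_norm] using (V.norm_lineAvg_vel_bounds h₂ hw u).2
  obtain ⟨hsize, hlip⟩ := hgap _ _ _ _ (chord_bound h₁) (chord_bound h₂)
    (lengthGap_nonneg fun s => vel γ h τ₁ (u + s * w))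
    (lengthGap_nonneg fun s => vel γ h τ₂ (u + s * w))
  rw [meanSpeed_sq, meanSpeed_sq]
  constructor
  · refine hsize.trans ?_
    rw [mul_assoc]
    gcongr
    linarith [mul_nonneg hK hZ]
  · refine hlip.trans ?_
    rw [mul_assoc, mul_assoc]
    gcongr
    have hprod := mul_le_mul hY chord_diff (abs_nonneg _) (by positivity)
    have hδZ : 0 ≤ |τ₁ - τ₂| * (meanOsc (deriv γ) w u + w ^ 2) := by positivity
    linarith [V.abs_lengthGap_vel_sub_le h₁ h₂ w u]

lemma exists_abs_ohIntegrand_le_near (V : Variation γ h c K) {α : ℝ} (hα : 0 < α) :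
    ∃ C, 0 ≤ C ∧ ∀ τ₁ τ₂ : ℝ, |τ₁| * K ≤ c / 8 → |τ₂| * K ≤ c / 8 → ∀ u w : ℝ, |w| < 1 / 4 →
      |ohIntegrand α (γ + τ₁ • h) u w| ≤ C * oscWeight α (deriv γ) w u ∧
      |ohIntegrand α (γ + τ₁ • h) u w - ohIntegrand α (γ + τ₂ • h) u w| ≤
        C * oscWeight α (deriv γ) w u * |τ₁ - τ₂| := by
  obtain ⟨C, hC, hgap⟩ := V.exists_abs_rpow_meanSpeed_gap_le (half_pos hα)
  have hK := V.nonneg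
  refine ⟨(2 + 3 * K) * C, by positivity, fun τ₁ τ₂ h₁ h₂ u w hw => ?_⟩
  obtain ⟨hsize, hlip⟩ := hgap τ₁ τ₂ h₁ h₂ u w (by linarith)
  obtain ⟨hsize, hlip⟩ := V.abs_mul_speed_le h₁ h₂ u (u + w) hsize hlip
  rw [V.ohIntegrand_eq_of_idist α h₁ (V.idist_eq_of_abs_lt h₁ u hw),
    V.ohIntegrand_eq_of_idist α h₂ (V.idist_eq_of_abs_lt h₂ u hw), ← mul_sub]
  have hw₀ : 0 ≤ |w| ^ (-α) := by positivity
  constructor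
  · rw [abs_mul, abs_of_nonneg hw₀, oscWeight]
    exact (mul_le_mul_of_nonneg_left hsize hw₀).trans (le_of_eq (by ring))
  · rw [abs_mul, abs_of_nonneg hw₀, oscWeight]
    exact (mul_le_mul_of_nonneg_left hlip hw₀).trans (le_of_eq (by ring))

lemma abs_idist_sub_le (V : Variation γ h c K) {τ₁ τ₂ : ℝ} (h₁ : |τ₁| * K ≤ c / 8)
    (h₂ : |τ₂| * K ≤ c / 8) (u : ℝ) {w : ℝ} (hw : |w| ≤ 1) :
    |idist (γ + τ₁ • h) u w - idist (γ + τ₂ • h) u w| ≤ 2 * (K * |τ₁ - τ₂|) := by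
  have harc : |(|w| * meanSpeed γ h τ₁ w u) - |w| * meanSpeed γ h τ₂ w u| ≤ K * |τ₁ - τ₂| := by
    rw [← mul_sub, abs_mul, abs_abs]
    exact (mul_le_of_le_one_left (abs_nonneg _) hw).trans (V.abs_meanSpeed_sub_le τ₁ τ₂ w u)
  rw [V.idist_eq h₁, V.idist_eq h₂]
  refine (abs_min_sub_min_le_max _ _ _ _).trans (max_le ?_ ?_)
  · linarith [(abs_nonneg _).trans harc]
  · rw [sub_sub_sub_comm]
    exact (abs_sub _ _).trans (by linarith [V.abs_meanSpeed_sub_le τ₁ τ₂ 1 u])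

lemma exists_abs_ohIntegrand_le_far (V : Variation γ h c K) {α : ℝ} (hα : 0 < α) :
    ∃ C, 0 ≤ C ∧ ∀ τ₁ τ₂ : ℝ, |τ₁| * K ≤ c / 8 → |τ₂| * K ≤ c / 8 → ∀ u w : ℝ,
      1 / 4 ≤ |w| → |w| ≤ 1 / 2 →
      |ohIntegrand α (γ + τ₁ • h) u w| ≤ C ∧
      |ohIntegrand α (γ + τ₁ • h) u w - ohIntegrand α (γ + τ₂ • h) u w| ≤ C * |τ₁ - τ₂| := by
  have hc := V.pos
  have hK := V.nonneg
  set A := α * (c / 8) ^ (-α - 1)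
  set B := (c / 8) ^ (-α)
  have hA₀ : 0 ≤ A := by positivity
  refine ⟨(2 + 3 * K) * (B + 3 * A * K), by positivity, fun τ₁ τ₂ h₁ h₂ u w hw hw' => ?_⟩
  have chord_bound {τ : ℝ} (hτ : |τ| * K ≤ c / 8) : c / 8 ≤ |w| * ‖lineAvg (vel γ h τ) w u‖ := by
    nlinarith [V.norm_lineAvg_vel_bounds hτ hw' u]
  have idist_bound {τ : ℝ} (hτ : |τ| * K ≤ c / 8) : c / 8 ≤ idist (γ + τ • h) u w :=
    (chord_bound hτ).trans (V.chord_le_idist hτ u hw')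
  have chord_diff : |(|w| * ‖lineAvg (vel γ h τ₁) w u‖) - |w| * ‖lineAvg (vel γ h τ₂) w u‖| ≤
      K * |τ₁ - τ₂| := by
    rw [← mul_sub, abs_mul, abs_abs]
    exact (mul_le_of_le_one_left (abs_nonneg _) (by linarith)).trans
      ((abs_norm_sub_norm_le _ _).trans (V.norm_lineAvg_vel_sub_le τ₁ τ₂ w u))
  have one_div_rpow {x : ℝ} (hx : c / 8 ≤ x) : 1 / x ^ α = x ^ (-α) := by
    rw [Real.rpow_neg (by linarith), one_div]
  have rpow_mem {x : ℝ} (hx : c / 8 ≤ x) : x ^ (-α) ∈ Icc 0 B :=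
    ⟨Real.rpow_nonneg (by linarith) _,
      Real.rpow_le_rpow_of_nonpos (by positivity) hx (by linarith)⟩
  have hchord := (abs_rpow_neg_sub_le hα (by positivity) (chord_bound h₁) (chord_bound h₂)).trans
    (mul_le_mul_of_nonneg_left chord_diff hA₀)
  have hidist := (abs_rpow_neg_sub_le hα (by positivity) (idist_bound h₁) (idist_bound h₂)).trans
    (mul_le_mul_of_nonneg_left (V.abs_idist_sub_le h₁ h₂ u (by linarith)) hA₀)
  rw [V.ohIntegrand_eq, V.ohIntegrand_eq, one_div_rpow (chord_bound h₁),
    one_div_rpow (chord_bound h₂), one_div_rpow (idist_bound h₁), one_div_rpow (idist_bound h₂)]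
  refine V.abs_mul_speed_le h₁ h₂ u (u + w) ?_ ?_
  · obtain ⟨hchord₀, hchord₁⟩ := rpow_mem (chord_bound h₁)
    obtain ⟨hidist₀, hidist₁⟩ := rpow_mem (idist_bound h₁)
    rw [abs_le]
    constructor <;> linarith [mul_nonneg hA₀ hK]
  · have hB : 0 ≤ B * |τ₁ - τ₂| := by positivity
    rw [sub_sub_sub_comm]
    exact (abs_sub _ _).trans (by linarith)

lemma exists_abs_ohIntegrand_le (V : Variation γ h c K) {α : ℝ} (hα : 0 < α) :
    ∃ C, 0 ≤ C ∧ ∀ τ₁ τ₂ : ℝ, |τ₁| * K ≤ c / 8 → |τ₂| * K ≤ c / 8 → ∀ u w : ℝ, |w| ≤ 1 / 2 →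
      |ohIntegrand α (γ + τ₁ • h) u w| ≤ C * oscWeight α (deriv γ) w u ∧
      |ohIntegrand α (γ + τ₁ • h) u w - ohIntegrand α (γ + τ₂ • h) u w| ≤
        C * oscWeight α (deriv γ) w u * |τ₁ - τ₂| := by
  obtain ⟨C₁, hC₁, near⟩ := V.exists_abs_ohIntegrand_le_near hα
  obtain ⟨C₂, hC₂, far⟩ := V.exists_abs_ohIntegrand_le_far hα
  refine ⟨C₁ + 16 * C₂, by positivity, fun τ₁ τ₂ h₁ h₂ u w hw => ?_⟩
  have hweight₀ := oscWeight_nonneg α (deriv γ) w u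
  rcases lt_or_ge |w| (1 / 4) with hw' | hw'
  · obtain ⟨hsize, hlip⟩ := near τ₁ τ₂ h₁ h₂ u w hw'
    refine ⟨hsize.trans ?_, hlip.trans ?_⟩ <;> gcongr <;> linarith
  · obtain ⟨hsize, hlip⟩ := far τ₁ τ₂ h₁ h₂ u w hw' hw
    have hw₀ : 0 < |w| := by linarith
    have hweight : 1 ≤ 16 * oscWeight α (deriv γ) w u := by
      rw [oscWeight, mul_left_comm]
      exact one_le_mul_of_one_le_of_one_le
        (Real.one_le_rpow_of_pos_of_le_one_of_nonpos hw₀ (by linarith) (by linarith))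
        (by rw [← sq_abs w]; nlinarith [meanOsc_nonneg (deriv γ) w u])
    have hC : C₂ ≤ (C₁ + 16 * C₂) * oscWeight α (deriv γ) w u := by
      linarith [mul_nonneg hC₁ hweight₀, mul_le_mul_of_nonneg_left hweight hC₂]
    exact ⟨hsize.trans hC, hlip.trans (by gcongr)⟩

end Variation

/-! ### Differentiating the energy -/

lemma seqConv_self_zero_le (b : ℤ → ℝ≥0∞) : seqConv b b 0 ≤ 2 * sobolevSq 0 b := by
  have hmul (l : ℤ) : b l * b (0 - l) ≤ b l ^ 2 + b (-l) ^ 2 := by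
    rw [zero_sub]
    rcases le_total (b l) (b (-l)) with h | h
    · refine le_add_of_le_right ?_
      rw [sq]
      gcongr
    · refine le_add_of_le_left ?_
      rw [sq]
      gcongr
  calc seqConv b b 0 ≤ ∑' l, (b l ^ 2 + b (-l) ^ 2) := ENNReal.tsum_le_tsum hmul
    _ = 2 * ∑' l, b l ^ 2 := by
      rw [ENNReal.tsum_add, two_mul, show ∑' l, b (-l) ^ 2 = ∑' l, b l ^ 2 from
        (Equiv.neg ℤ).tsum_eq fun l => b l ^ 2]
    _ = 2 * sobolevSq 0 b := by simp [sobolevSq]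

lemma FourierLE.enorm_integral_sq_le {F : ℝ → ℂ} {A : ℤ → ℝ≥0∞} (hF : ContPer F)
    (hA : FourierLE F A) (hs : Summable (fourierCoef F)) :
    ‖∫ u in (0 : ℝ)..1, F u ^ 2‖ₑ ≤ 2 * sobolevSq 0 A := by
  have hsq := FourierLE.mul_of_summable hF hF hA hA hs 0
  simp only [fourierCoef, neg_zero, mode_zero_left, mul_one, ← sq] at hsq
  exact hsq.trans (seqConv_self_zero_le A)

lemma integral_shift_sub_sq_le {F : ℝ → ℝ} {a : ℤ → ℝ≥0∞} {θ : ℝ}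
    (h0 : 0 ≤ θ) (h1 : θ ≤ 1) (hF : ContPer fun u => (F u : ℂ))
    (ha : FourierLE (fun u => (F u : ℂ)) a) (hat : ∑' k, a k ≠ ⊤)
    (hb : sobolevSq 0 (fracBound θ a) < ⊤) {x w : ℝ} (hx : |x| ≤ |w|) :
    ∫ u in (0 : ℝ)..1, (F (u + x) - F u) ^ 2 ≤
      (2 * sobolevSq 0 (fracBound θ a)).toReal * |w| ^ (2 * θ) := by
  have hdiff : FourierLE (fun u => (F (u + x) : ℂ) - F u)
      fun k => ENNReal.ofReal (|w| ^ θ) * fracBound θ a k := by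
    simpa only [add_zero] using
      FourierLE.shift_sub_shift h0 h1 hF ha (x := x) (y := 0) (h := w) (by simpa using hx)
  have hsum : Summable (fourierCoef fun u => (F (u + x) : ℂ) - F u) := by
    refine (FourierLE.sub (hF.shift x) hF (ha.shift hF x) ha).summable ?_
    rw [ENNReal.tsum_add]
    exact ENNReal.add_ne_top.2 ⟨hat, hat⟩
  have hsq := hdiff.enorm_integral_sq_le ((hF.shift x).sub hF) hsum
  have hreal : ∫ u in (0 : ℝ)..1, ((F (u + x) : ℂ) - F u) ^ 2 =
      ((∫ u in (0 : ℝ)..1, (F (u + x) - F u) ^ 2 : ℝ) : ℂ) := by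
    rw [← intervalIntegral.integral_ofReal]
    push_cast
    rfl
  have hpow : ENNReal.ofReal (|w| ^ θ) ^ 2 = ENNReal.ofReal (|w| ^ (2 * θ)) := by
    rw [← ENNReal.ofReal_pow (by positivity), mul_comm 2 θ, Real.rpow_mul (abs_nonneg w),
      Real.rpow_two]
  rw [sobolevSq_const_mul, hpow, mul_left_comm, hreal] at hsq
  have hsq := ENNReal.toReal_mono (by finiteness) hsq
  rw [ENNReal.toReal_mul, ENNReal.toReal_ofReal (by positivity), toReal_enorm,
    Complex.norm_real] at hsq
  exact (Real.le_norm_self _).trans (hsq.trans_eq (mul_comm _ _))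

lemma integral_meanOsc {f : ℝ → Rn n} (hf : Continuous f) (w : ℝ) :
    ∫ u in (0 : ℝ)..1, meanOsc f w u =
      ∫ s in (0 : ℝ)..1, ∑ j, ∫ u in (0 : ℝ)..1, (f (u + s * w) j - f u j) ^ 2 := by
  unfold meanOsc
  rw [intervalIntegral_intervalIntegral_swap]
  · refine intervalIntegral.integral_congr fun s _ => ?_
    have hcoord (j : Fin n) : IntervalIntegrable (fun u => (f (u + s * w) j - f u j) ^ 2)
        volume 0 1 := Continuous.intervalIntegrable (by fun_prop) _ _
    simp only [← intervalIntegral.integral_finsetSum fun j _ => hcoord j,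
      EuclideanSpace.real_norm_sq_eq, PiLp.sub_apply]
  · have hcont : Continuous (Function.uncurry fun u s : ℝ => ‖f (u + s * w) - f u‖ ^ 2) := by
      unfold Function.uncurry
      fun_prop
    rw [uIoc_of_le zero_le_one]
    exact (hcont.continuousOn.integrableOn_compact (isCompact_Icc.prod isCompact_Icc)).mono_set
      (Set.prod_mono Ioc_subset_Icc_self Ioc_subset_Icc_self)

lemma exists_integral_meanOsc_le {f : ℝ → Rn n} (hf : ContPer f) {a : ℤ → ℝ≥0∞} {θ : ℝ}
    (h0 : 0 ≤ θ) (h1 : θ ≤ 1) (ha : ∀ j, FourierLE (coord f j) a) (hat : ∑' k, a k ≠ ⊤)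
    (hb : sobolevSq 0 (fracBound θ a) < ⊤) :
    ∃ C, ∀ w, ∫ u in (0 : ℝ)..1, meanOsc f w u ≤ C * |w| ^ (2 * θ) := by
  have hcont := hf.cont
  set B := (2 * sobolevSq 0 (fracBound θ a)).toReal
  refine ⟨n * B, fun w => ?_⟩
  rw [integral_meanOsc hcont]
  have hle (s : ℝ) (hs : s ∈ Icc (0 : ℝ) 1) :
      ∑ j, ∫ u in (0 : ℝ)..1, (f (u + s * w) j - f u j) ^ 2 ≤ n * B * |w| ^ (2 * θ) := by
    have hsw : |s * w| ≤ |w| := by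
      rw [abs_mul, abs_of_nonneg hs.1]
      exact mul_le_of_le_one_left (abs_nonneg w) hs.2
    refine (Finset.sum_le_sum fun j _ =>
      integral_shift_sub_sq_le h0 h1 (hf.coord j) (ha j) hat hb hsw).trans_eq ?_
    simp [B, mul_assoc]
  refine (intervalIntegral.integral_mono_on zero_le_one
    (Continuous.intervalIntegrable ?_ _ _) intervalIntegrable_const hle).trans_eq (by simp)
  refine continuous_finsetSum _ fun j _ =>
    intervalIntegral.continuous_parametric_intervalIntegral_of_continuous' ?_ 0 1
  unfold Function.uncurry
  fun_prop

/-- The derivative of the O'Hara integrand at an arc-length curve `γ` in direction `h`. -/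
def firstVar (α : ℝ) (γ h : ℝ → Rn n) (u w : ℝ) : ℝ :=
  |w| ^ (-α) * (((‖lineAvg (deriv γ) w u‖ ^ 2) ^ (-(α / 2)) - 1) *
      (⟪deriv γ (u + w), deriv h (u + w)⟫ + ⟪deriv γ u, deriv h u⟫)
    - α * (‖lineAvg (deriv γ) w u‖ ^ 2) ^ (-(α / 2) - 1) *
      ⟪lineAvg (deriv γ) w u, lineAvg (deriv h) w u⟫
    + α * lineAvg (fun x => ⟪deriv γ x, deriv h x⟫) w u)

lemma hasDerivAt_add_smul_zero {E : Type*} [NormedAddCommGroup E] [NormedSpace ℝ E] (a b : E) :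
    HasDerivAt (fun τ : ℝ => a + τ • b) b 0 := by
  simpa using ((hasDerivAt_id (0 : ℝ)).smul_const b).const_add a

lemma hasDerivAt_norm_add_smul {E : Type*} [NormedAddCommGroup E] [InnerProductSpace ℝ E]
    {a : E} (b : E) (ha : ‖a‖ = 1) : HasDerivAt (fun τ : ℝ => ‖a + τ • b‖) ⟪a, b⟫ 0 := by
  have hsqrt := (hasDerivAt_add_smul_zero a b).norm_sq.sqrt (by simp [ha])
  simpa [ha, Real.sqrt_sq] using hsqrt

lemma eventually_abs_mul_le (K : ℝ) {x : ℝ} (hx : 0 < x) :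
    ∀ᶠ τ in 𝓝 (0 : ℝ), |τ| * K ≤ x := by
  have hcont : Continuous fun τ : ℝ => |τ| * K := by fun_prop
  have hlim : Tendsto (fun τ : ℝ => |τ| * K) (𝓝 0) (𝓝 0) := by simpa using hcont.tendsto 0
  exact hlim.eventually_le_const hx

namespace Variation

variable {γ h : ℝ → Rn n} {c K : ℝ}

lemma hasDerivAt_meanSpeed (V : Variation γ h c K) (w u : ℝ) :
    HasDerivAt (fun τ => meanSpeed γ h τ w u)
      (lineAvg (fun x => ⟪deriv γ x, deriv h x⟫) w u) 0 := by
  have hγ := V.continuous_deriv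
  have hh := V.continuous_deriv_dir
  refine (intervalIntegral.hasDerivAt_integral_of_dominated_loc_of_lip (s := univ)
    (bound := fun _ => K) univ_mem (.of_forall fun τ => ?_) ?_ ?_ (.of_forall fun t _ => ?_)
    (by simp) (.of_forall fun t _ => ?_)).2
  · have := V.continuous_vel τ
    exact Continuous.aestronglyMeasurable (by fun_prop)
  · have := V.continuous_vel 0
    exact Continuous.intervalIntegrable (by fun_prop) _ _
  · exact Continuous.aestronglyMeasurable (by fun_prop)
  · refine LipschitzOnWith.of_dist_le_mul fun x _ y _ => ?_
    rw [Real.dist_eq, Real.dist_eq, Real.coe_nnabs, abs_of_nonneg V.nonneg]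
    exact (abs_norm_sub_norm_le _ _).trans (V.norm_vel_sub_le x y _)
  · exact hasDerivAt_norm_add_smul _ (V.arc _)

lemma eventually_idist_eq (V : Variation γ h c K) (u : ℝ) {w : ℝ} (hw : |w| < 1 / 2) :
    ∀ᶠ τ in 𝓝 (0 : ℝ), idist (γ + τ • h) u w = |w| * meanSpeed γ h τ w u := by
  filter_upwards [eventually_abs_mul_le K (by linarith [V.pos] : 0 < c / 8),
    eventually_abs_mul_le K (by linarith : 0 < (1 - 2 * |w|) / 2)] with τ hτ hτw
  rw [V.idist_eq hτ, min_eq_left]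
  have hmean := abs_le.1 (V.abs_meanSpeed_sub_le τ 0 w u)
  have hlength := abs_le.1 (V.abs_meanSpeed_sub_le τ 0 1 u)
  rw [V.meanSpeed_zero, sub_zero] at hmean hlength
  nlinarith [abs_nonneg w, mul_nonneg (abs_nonneg τ) V.nonneg]

lemma hasDerivAt_norm_lineAvg_vel_sq (V : Variation γ h c K) (w u : ℝ) :
    HasDerivAt (fun τ => ‖lineAvg (vel γ h τ) w u‖ ^ 2)
      (2 * ⟪lineAvg (deriv γ) w u, lineAvg (deriv h) w u⟫) 0 := by
  have hlin (τ : ℝ) : lineAvg (vel γ h τ) w u =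
      lineAvg (deriv γ) w u + τ • lineAvg (deriv h) w u :=
    lineAvg_add_smul V.continuous_deriv V.continuous_deriv_dir τ w u
  simp only [hlin]
  simpa using (hasDerivAt_add_smul_zero (lineAvg (deriv γ) w u) (lineAvg (deriv h) w u)).norm_sq

lemma hasDerivAt_ohIntegrand (V : Variation γ h c K) (α u : ℝ) {w : ℝ} (hw : |w| < 1 / 2) :
    HasDerivAt (fun τ : ℝ => ohIntegrand α (γ + τ • h) u w) (firstVar α γ h u w) 0 := by
  have hchord := V.hasDerivAt_norm_lineAvg_vel_sq w u
  have hchord_pos : 0 < ‖lineAvg (vel γ h 0) w u‖ ^ 2 := by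
    rw [vel_zero]
    exact pow_pos (V.pos.trans_le (V.chord w hw.le u)) 2
  have hgap := (hchord.rpow_const (p := -(α / 2)) (Or.inl hchord_pos.ne')).sub
    (((V.hasDerivAt_meanSpeed w u).pow 2).rpow_const (p := -(α / 2))
      (Or.inl (by simp [V.meanSpeed_zero])))
  have hspeed (x : ℝ) : HasDerivAt (fun τ => ‖vel γ h τ x‖) ⟪deriv γ x, deriv h x⟫ 0 :=
    hasDerivAt_norm_add_smul _ (V.arc x)
  have hprod : HasDerivAt (fun τ : ℝ => |w| ^ (-α) *
      (((‖lineAvg (vel γ h τ) w u‖ ^ 2) ^ (-(α / 2)) - (meanSpeed γ h τ w u ^ 2) ^ (-(α / 2))) *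
        (‖vel γ h τ (u + w)‖ * ‖vel γ h τ u‖))) (firstVar α γ h u w) 0 := by
    refine ((hgap.mul ((hspeed (u + w)).mul (hspeed u))).const_mul (|w| ^ (-α))).congr_deriv ?_
    simp only [Pi.mul_apply, Pi.sub_apply, Pi.pow_apply, vel_zero, V.meanSpeed_zero, V.arc _,
      one_pow, Real.one_rpow, firstVar]
    ring
  refine hprod.congr_of_eventuallyEq ?_
  filter_upwards [V.eventually_idist_eq u hw,
    eventually_abs_mul_le K (by linarith [V.pos] : 0 < c / 8)] with τ hidist hτ
    using V.ohIntegrand_eq_of_idist α hτ hidist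

lemma measurable_ohIntegrand (V : Variation γ h c K) (α τ : ℝ) :
    Measurable fun p : ℝ × ℝ => ohIntegrand α (γ + τ • h) p.1 p.2 := by
  have hvel := V.continuous_vel τ
  have hcurve := (V.contDiff_add_smul τ).continuous
  have hmean : Continuous fun p : ℝ × ℝ => meanSpeed γ h τ p.2 p.1 :=
    continuous_lineAvg hvel.norm
  have hidist : Continuous fun p : ℝ × ℝ => idist (γ + τ • h) p.1 p.2 := by
    simp only [idist, V.arcLen_eq]
    fun_prop
  have hchord : Continuous fun p : ℝ × ℝ => ‖(γ + τ • h) (p.1 + p.2) - (γ + τ • h) p.1‖ := by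
    fun_prop
  have hspeed : Continuous fun p : ℝ × ℝ => ‖vel γ h τ (p.1 + p.2)‖ := by fun_prop
  have hspeed' : Continuous fun p : ℝ × ℝ => ‖vel γ h τ p.1‖ := by fun_prop
  simp only [ohIntegrand, V.deriv_add_smul]
  exact ((((hchord.measurable.pow_const α).const_div 1).sub
    ((hidist.measurable.pow_const α).const_div 1)).mul hspeed.measurable).mul hspeed'.measurable

lemma ohIntegrand_nonneg (V : Variation γ h c K) {α : ℝ} (hα : 0 < α) {τ : ℝ}
    (hτ : |τ| * K ≤ c / 8) (u : ℝ) {w : ℝ} (hw : |w| ≤ 1 / 2) :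
    0 ≤ ohIntegrand α (γ + τ • h) u w := by
  rcases eq_or_ne w 0 with rfl | hw0
  · have hidist : idist (γ + τ • h) u 0 = 0 := by
      have hlength := (V.meanSpeed_bounds hτ 1 u).1
      rw [V.idist_eq hτ, abs_zero, zero_mul, sub_zero, min_eq_left (by linarith)]
    simp [ohIntegrand, hidist, Real.zero_rpow hα.ne']
  rw [V.ohIntegrand_eq]
  have hmean := (V.norm_lineAvg_vel_bounds hτ hw u).1
  have hchord : 0 < |w| * ‖lineAvg (vel γ h τ) w u‖ :=
    mul_pos (abs_pos.2 hw0) (by linarith [V.pos])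
  refine mul_nonneg (sub_nonneg.2 ?_) (by positivity)
  exact one_div_le_one_div_of_le (Real.rpow_pos_of_pos hchord _)
    (Real.rpow_le_rpow hchord.le (V.chord_le_idist hτ u hw) hα.le)

end Variation

/-- Lebesgue measure on the domain of integration `(0,1] × (-1/2,1/2)` of the energy. -/
def cellMeasure : Measure (ℝ × ℝ) :=
  (volume.restrict (Ioc (0 : ℝ) 1)).prod (volume.restrict (Ioo (-(1 : ℝ) / 2) (1 / 2)))

lemma ae_cell_abs_lt : ∀ᵐ p ∂cellMeasure, |p.2| < 1 / 2 := by
  rw [cellMeasure, Measure.prod_restrict]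
  filter_upwards [ae_restrict_mem (measurableSet_Ioc.prod measurableSet_Ioo)] with p hp
  exact abs_lt.2 ⟨by linarith [hp.2.1], hp.2.2⟩

lemma integrable_abs_rpow {r : ℝ} (hr : -1 < r) :
    IntegrableOn (fun x : ℝ => |x| ^ r) (Ioo (-(1 : ℝ) / 2) (1 / 2)) := by
  have hright : IntervalIntegrable (fun x : ℝ => |x| ^ r) volume 0 (1 / 2) :=
    (intervalIntegral.intervalIntegrable_rpow' hr).congr fun x hx => by
      rw [uIoc_of_le (by norm_num)] at hx
      simp only [abs_of_pos hx.1]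
  have hleft : IntervalIntegrable (fun x : ℝ => |x| ^ r) volume (-(1 / 2)) 0 := by
    simpa using ((IntervalIntegrable.iff_comp_neg (by simp)).1 hright).symm
  refine ((intervalIntegrable_iff_integrableOn_Ioc_of_le (by norm_num)).1
    (hleft.trans hright)).mono_set fun x hx => ⟨by linarith [hx.1], hx.2.le⟩

lemma continuous_meanOsc {f : ℝ → Rn n} (hf : Continuous f) :
    Continuous fun p : ℝ × ℝ => meanOsc f p.2 p.1 := by
  unfold meanOsc
  apply intervalIntegral.continuous_parametric_intervalIntegral_of_continuous'
  simp only [Function.uncurry_def]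
  fun_prop

lemma integral_norm_oscWeight_le {f : ℝ → Rn n} (hf : Continuous f) {α θ C w : ℝ} (hw : w ≠ 0)
    (hC : ∫ u in (0 : ℝ)..1, meanOsc f w u ≤ C * |w| ^ (2 * θ)) :
    ∫ u in Ioc (0 : ℝ) 1, ‖oscWeight α f w u‖ ≤ C * |w| ^ (2 * θ - α) + |w| ^ (2 - α) := by
  have hosc : IntegrableOn (fun u => meanOsc f w u) (Ioc (0 : ℝ) 1) :=
    ((continuous_meanOsc hf).comp
      (by fun_prop : Continuous fun u : ℝ => (u, w))).integrableOn_Ioc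
  have hw₀ := abs_pos.2 hw
  have hpow : |w| ^ (2 * θ - α) = |w| ^ (-α) * |w| ^ (2 * θ) := by
    rw [← Real.rpow_add hw₀]
    ring_nf
  have hsq : |w| ^ (2 - α) = |w| ^ (-α) * w ^ 2 := by
    rw [← sq_abs w, ← Real.rpow_two, ← Real.rpow_add hw₀]
    ring_nf
  simp only [Real.norm_of_nonneg (oscWeight_nonneg α f w _)]
  unfold oscWeight
  rw [integral_const_mul, integral_add hosc (integrable_const _), integral_const,
    ← intervalIntegral.integral_of_le zero_le_one, hpow, hsq]
  have hbound := mul_le_mul_of_nonneg_left hC (Real.rpow_nonneg (abs_nonneg w) (-α))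
  simp only [MeasurableSet.univ, measureReal_restrict_apply, univ_inter, Real.volume_real_Ioc,
    sub_zero, zero_le_one, sup_of_le_left, smul_eq_mul, one_mul]
  linarith

lemma integrable_oscWeight {f : ℝ → Rn n} (hf : Continuous f) {α θ C : ℝ} (hα : α < 3)
    (hθ : α - 2 * θ < 1)
    (hC : ∀ w, ∫ u in (0 : ℝ)..1, meanOsc f w u ≤ C * |w| ^ (2 * θ)) :
    Integrable (fun p : ℝ × ℝ => oscWeight α f p.2 p.1) cellMeasure := by
  have hosc := continuous_meanOsc hf
  have hmeas : Measurable fun p : ℝ × ℝ => oscWeight α f p.2 p.1 :=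
    (measurable_snd.abs.pow_const _).mul (by fun_prop : Continuous fun p : ℝ × ℝ =>
      meanOsc f p.2 p.1 + p.2 ^ 2).measurable
  have hoscOn (w : ℝ) : IntegrableOn (fun u => meanOsc f w u) (Ioc (0 : ℝ) 1) :=
    (hosc.comp (by fun_prop : Continuous fun u : ℝ => (u, w))).integrableOn_Ioc
  have hsection (w : ℝ) : IntegrableOn (fun u => oscWeight α f w u) (Ioc (0 : ℝ) 1) :=
    ((hoscOn w).add (integrable_const _)).const_mul _
  refine (integrable_prod_iff' hmeas.aestronglyMeasurable).2 ⟨.of_forall hsection, ?_⟩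
  have hbound := ((integrable_abs_rpow (r := 2 * θ - α) (by linarith)).const_mul C).add
    (integrable_abs_rpow (r := 2 - α) (by linarith))
  refine hbound.mono' hmeas.norm.stronglyMeasurable.integral_prod_left.aestronglyMeasurable ?_
  filter_upwards [ae_restrict_of_ae (Measure.ae_ne volume 0)] with w hw
  rw [Real.norm_of_nonneg (integral_nonneg fun u => norm_nonneg _)]
  exact integral_norm_oscWeight_le hf hw (hC w)

namespace Variation

variable {γ h : ℝ → Rn n} {c K : ℝ}

lemma measurable_firstVar (V : Variation γ h c K) (α : ℝ) :
    Measurable fun p : ℝ × ℝ => firstVar α γ h p.1 p.2 := by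
  have hγ := V.continuous_deriv
  have hh := V.continuous_deriv_dir
  have hγavg := continuous_lineAvg hγ
  have hhavg := continuous_lineAvg hh
  have hinner_avg : Continuous fun p : ℝ × ℝ =>
      lineAvg (fun x => ⟪deriv γ x, deriv h x⟫) p.2 p.1 := continuous_lineAvg (hγ.inner hh)
  have hchord : Measurable fun p : ℝ × ℝ => ‖lineAvg (deriv γ) p.2 p.1‖ ^ 2 :=
    Continuous.measurable (by fun_prop)
  have hinner : Continuous fun p : ℝ × ℝ => ⟪deriv γ (p.1 + p.2), deriv h (p.1 + p.2)⟫ +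
      ⟪deriv γ p.1, deriv h p.1⟫ := by fun_prop
  have havg_inner : Continuous fun p : ℝ × ℝ =>
      ⟪lineAvg (deriv γ) p.2 p.1, lineAvg (deriv h) p.2 p.1⟫ := by fun_prop
  exact (measurable_snd.abs.pow_const _).mul (((((hchord.pow_const _).sub_const 1).mul
    hinner.measurable).sub (((hchord.pow_const _).const_mul α).mul havg_inner.measurable)).add
    (hinner_avg.measurable.const_mul α))

lemma oharaER_eq (V : Variation γ h c K) {α : ℝ} (hα : 0 < α) {τ : ℝ}
    (hτ : |τ| * K ≤ c / 8) : oharaER α (γ + τ • h) =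
      ∫ p, ohIntegrand α (γ + τ • h) p.1 p.2 ∂cellMeasure := by
  have hmeas := V.measurable_ohIntegrand α τ
  rw [integral_eq_lintegral_of_nonneg_ae _ hmeas.aestronglyMeasurable, oharaER, oharaE,
    cellMeasure, lintegral_prod _ hmeas.ennreal_ofReal.aemeasurable]
  filter_upwards [ae_cell_abs_lt] with p hp using V.ohIntegrand_nonneg hα hτ p.1 hp.le

lemma hasDerivAt_oharaER (V : Variation γ h c K) {α : ℝ} (hα : 0 < α)
    (hweight : Integrable (fun p : ℝ × ℝ => oscWeight α (deriv γ) p.2 p.1) cellMeasure) :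
    Integrable (fun p => firstVar α γ h p.1 p.2) cellMeasure ∧
      HasDerivAt (fun τ : ℝ => oharaER α (γ + τ • h))
        (∫ p, firstVar α γ h p.1 p.2 ∂cellMeasure) 0 := by
  obtain ⟨C, -, hbound⟩ := V.exists_abs_ohIntegrand_le hα
  have hsmall := eventually_abs_mul_le K (by linarith [V.pos] : 0 < c / 8)
  have hzero : |(0 : ℝ)| * K ≤ c / 8 := hsmall.self_of_nhds
  have hmeas (τ : ℝ) := (V.measurable_ohIntegrand α τ).aestronglyMeasurable (μ := cellMeasure)
  have hint : Integrable (fun p : ℝ × ℝ => ohIntegrand α (γ + (0 : ℝ) • h) p.1 p.2)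
      cellMeasure := by
    refine (hweight.const_mul C).mono' (hmeas 0) ?_
    filter_upwards [ae_cell_abs_lt] with p hp using (hbound 0 0 hzero hzero p.1 p.2 hp.le).1
  have hlip : ∀ᵐ p ∂cellMeasure, LipschitzOnWith (Real.nnabs (C * oscWeight α (deriv γ) p.2 p.1))
      (fun τ : ℝ => ohIntegrand α (γ + τ • h) p.1 p.2) {τ | |τ| * K ≤ c / 8} := by
    filter_upwards [ae_cell_abs_lt] with p hp
    refine LipschitzOnWith.of_dist_le_mul fun x hx y hy => ?_
    rw [Real.dist_eq, Real.dist_eq, Real.coe_nnabs]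
    refine (hbound x y hx hy p.1 p.2 hp.le).2.trans ?_
    gcongr
    exact le_abs_self _
  obtain ⟨hfirstVar, hderiv⟩ := hasDerivAt_integral_of_dominated_loc_of_lip hsmall
    (.of_forall hmeas) hint (V.measurable_firstVar α).aestronglyMeasurable hlip
    (hweight.const_mul C)
    (by filter_upwards [ae_cell_abs_lt] with p hp using V.hasDerivAt_ohIntegrand α p.1 hp)
  refine ⟨hfirstVar, hderiv.congr_of_eventuallyEq ?_⟩
  filter_upwards [hsmall] with τ hτ using V.oharaER_eq hα hτ

lemma eq_integral_firstVar (V : Variation γ h c K) {α : ℝ} (hα : 0 < α)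
    (hweight : Integrable (fun p : ℝ × ℝ => oscWeight α (deriv γ) p.2 p.1) cellMeasure) {d : ℝ}
    (hd : HasDirDeriv (oharaER α) γ h d) :
    d = ∫ p, firstVar α γ h p.1 p.2 ∂cellMeasure := by
  have hslope := (V.hasDerivAt_oharaER hα hweight).2.tendsto_slope_zero
  refine tendsto_nhds_unique hd (hslope.congr fun τ => ?_)
  simp [div_eq_inv_mul]

end Variation

/-! ### The Euler–Lagrange equation in Fourier coefficients -/

lemma mode_neg (k : ℤ) (u : ℝ) : mode (-k) u = starRingEnd ℂ (mode k u) := by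
  have hinv : (mode k u)⁻¹ = mode (-k) u := inv_eq_of_mul_eq_one_right (mode_mul_neg k u)
  rw [← hinv, Complex.inv_def, Complex.normSq_eq_norm_sq, norm_mode]
  simp

lemma lineAvg_mode (k : ℤ) (w u : ℝ) :
    lineAvg (mode k) w u = mode k u * lineAvg (mode k) w 0 := by
  simp only [lineAvg, zero_add, ← intervalIntegral.integral_const_mul, ← mode_add]

lemma lineAvg_mode_neg (k : ℤ) (w u : ℝ) :
    lineAvg (mode (-k)) w u = starRingEnd ℂ (lineAvg (mode k) w u) := by
  simp only [lineAvg, mode_neg, intervalIntegral]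
  rw [map_sub, ← integral_conj, ← integral_conj]

lemma norm_lineAvg_mode_le_one (k : ℤ) (w u : ℝ) : ‖lineAvg (mode k) w u‖ ≤ 1 :=
  norm_lineAvg_le (fun u => (norm_mode k u).le) w u

lemma two_pi_I_mul_lineAvg_mode_zero (k : ℤ) (w : ℝ) :
    2 * Real.pi * Complex.I * k * (w * lineAvg (mode k) w 0) = mode k w - 1 := by
  rw [← Complex.real_smul, smul_lineAvg, zero_add, ← intervalIntegral.integral_const_mul,
    intervalIntegral.integral_eq_sub_of_hasDerivAt (fun u _ => hasDerivAt_mode k u)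
      ((continuous_const.mul (mode_continuous k)).intervalIntegrable _ _), mode_zero]

lemma norm_lineAvg_mode_zero_mul_le (k : ℤ) (w : ℝ) :
    ‖lineAvg (mode k) w 0‖ * (Real.pi * |k * w|) ≤ 1 := by
  have hnorm : ‖mode k w - 1‖ ≤ 1 + 1 := by
    simpa only [norm_mode, norm_one] using norm_sub_le (mode k w) 1
  rw [← two_pi_I_mul_lineAvg_mode_zero, norm_mul, norm_two_pi_I_mul_int, norm_mul,
    Complex.norm_real, Real.norm_eq_abs] at hnorm
  rw [abs_mul]
  linarith

lemma ContPer.fourierCoef_lineAvg {F : ℝ → ℂ} (hF : ContPer F) (w : ℝ) (k : ℤ) :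
    fourierCoef (lineAvg F w) k = lineAvg (mode k) w 0 * fourierCoef F k := by
  have hc := hF.cont
  have hswap := fourierCoef_average (G := fun t u => F (u + t * w)) (by fun_prop) k
  simp only [fourierCoef_shift hF, intervalIntegral.integral_mul_const] at hswap
  simp only [lineAvg, zero_add]
  exact hswap

lemma lineAvg_coord {f : ℝ → Rn n} (hf : Continuous f) (j : Fin n) (w u : ℝ) :
    lineAvg (coord f j) w u = coord (lineAvg f w) j u := by
  have hproj := (EuclideanSpace.proj (𝕜 := ℝ) j).intervalIntegral_comp_comm (μ := volume)
    (Continuous.intervalIntegrable (by fun_prop : Continuous fun t => f (u + t * w)) 0 1)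
  simp only [lineAvg, coord, intervalIntegral.integral_ofReal]
  exact congrArg _ hproj

lemma norm_lineAvg_sq_eq_sum {f : ℝ → Rn n} (hf : Continuous f) (w u : ℝ) :
    ((‖lineAvg f w u‖ ^ 2 : ℝ) : ℂ) = ∑ j, lineAvg (coord f j) w u ^ 2 := by
  simp [lineAvg_coord hf, EuclideanSpace.norm_sq_eq, coord]

lemma lineAvg_ofReal (φ : ℝ → ℝ) (w u : ℝ) :
    lineAvg (fun x => (φ x : ℂ)) w u = ((lineAvg φ w u : ℝ) : ℂ) :=
  intervalIntegral.integral_ofReal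

lemma lineAvg_sub_const_mul {F G : ℝ → ℂ} (hF : Continuous F) (hG : Continuous G) (a : ℂ)
    (w u : ℝ) :
    lineAvg (fun x => F x - a * G x) w u = lineAvg F w u - a * lineAvg G w u := by
  simp only [lineAvg, ← intervalIntegral.integral_const_mul]
  exact intervalIntegral.integral_sub (Continuous.intervalIntegrable (by fun_prop) _ _)
    (Continuous.intervalIntegrable (by fun_prop) _ _)

/-- The deviation from `1` of `q ^ (-2 * p)`, where `q = |γ(u + w) - γ(u)| / |w|` is the chord-arc
quotient of an arc-length curve `γ` with unit tangent `f`. -/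
def chordPowDev (p : ℝ) (f : ℝ → Rn n) (w u : ℝ) : ℂ :=
  (((‖lineAvg f w u‖ ^ 2) ^ (-p) - 1 : ℝ) : ℂ)

lemma continuous_chordPowDev (p : ℝ) {f : ℝ → Rn n} (hf : ContPer f) {w : ℝ}
    (hne : ∀ u, lineAvg f w u ≠ 0) : Continuous (chordPowDev p f w) :=
  Complex.continuous_ofReal.comp <| Continuous.sub
    (((hf.lineAvg w).cont.norm.pow 2).rpow_const fun u =>
      .inl (pow_ne_zero 2 (norm_ne_zero_iff.2 (hne u))))
    continuous_const

/-- The complex-linear extension of `firstVar` to directions with derivative `ψ eⱼ`, at a curve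
with unit tangent `f`. -/
def firstVarC (α : ℝ) (f : ℝ → Rn n) (j : Fin n) (ψ : ℝ → ℂ) (u w : ℝ) : ℂ :=
  ((|w| ^ (-α) : ℝ) : ℂ) *
    (chordPowDev (α / 2) f w u * (coord f j (u + w) * ψ (u + w) + coord f j u * ψ u)
    - α * (1 + chordPowDev (α / 2 + 1) f w u) * (lineAvg (coord f j) w u * lineAvg ψ w u)
    + α * lineAvg (fun x => coord f j x * ψ x) w u)

lemma firstVar_eq_firstVarC {γ h : ℝ → Rn n} (hγ : Continuous (deriv γ)) {ψ : ℝ → ℝ} {j : Fin n}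
    (hh : ∀ u, deriv h u = ψ u • EuclideanSpace.single j 1) (α u w : ℝ) :
    (firstVar α γ h u w : ℂ) = firstVarC α (deriv γ) j (fun x => (ψ x : ℂ)) u w := by
  have havg : lineAvg (deriv h) w u = lineAvg ψ w u • EuclideanSpace.single j (1 : ℝ) := by
    simp only [lineAvg, hh, intervalIntegral.integral_smul_const]
  have hinner (x : Rn n) (r : ℝ) : ⟪x, r • EuclideanSpace.single j (1 : ℝ)⟫ = x j * r := by
    rw [real_inner_smul_right, EuclideanSpace.inner_single_right]
    simp [mul_comm]
  have hprod : (fun x => coord (deriv γ) j x * (ψ x : ℂ)) =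
      fun x => ((deriv γ x j * ψ x : ℝ) : ℂ) := by
    funext x
    simp [coord]
  rw [firstVar, firstVarC, hprod, lineAvg_ofReal, lineAvg_ofReal, lineAvg_coord hγ, havg]
  simp only [hh, hinner, coord, chordPowDev]
  rw [show -(α / 2 + 1) = -(α / 2) - 1 by ring]
  push_cast
  ring

lemma firstVarC_sub_const_mul {f : ℝ → Rn n} (hf : ContPer f) {ψ₁ ψ₂ : ℝ → ℂ}
    (h₁ : Continuous ψ₁) (h₂ : Continuous ψ₂) (a : ℂ) (α : ℝ) (j : Fin n) (u w : ℝ) :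
    firstVarC α f j (fun x => ψ₁ x - a * ψ₂ x) u w =
      firstVarC α f j ψ₁ u w - a * firstVarC α f j ψ₂ u w := by
  have hF := (hf.coord j).cont
  have hprod : (fun x => coord f j x * (ψ₁ x - a * ψ₂ x)) =
      fun x => coord f j x * ψ₁ x - a * (coord f j x * ψ₂ x) := by
    funext x
    ring
  rw [firstVarC, hprod, lineAvg_sub_const_mul (F := fun x => coord f j x * ψ₁ x)
    (G := fun x => coord f j x * ψ₂ x) (hF.mul h₁) (hF.mul h₂), lineAvg_sub_const_mul h₁ h₂,
    firstVarC, firstVarC]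
  ring

/-- The `k`-th Fourier coefficient of the nonlinear part of the Euler–Lagrange operator of the
energy, before integration against `|w| ^ (-α)`: every term carries a factor `chordPowDev`, hence is
of order `|w| ^ (2 * θ)` if `f` has `θ` derivatives. -/
def nonlinearRemainder (α : ℝ) (f : ℝ → Rn n) (j : Fin n) (k : ℤ) (w : ℝ) : ℂ :=
  fourierCoef (fun u => coord f j u * chordPowDev (α / 2) f w u) k
    + mode (-k) w * fourierCoef (fun u => coord f j (u + w) * chordPowDev (α / 2) f w u) k
    - α * starRingEnd ℂ (lineAvg (mode k) w 0) *
      fourierCoef (fun u => lineAvg (coord f j) w u * chordPowDev (α / 2 + 1) f w u) k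

/-- The Fourier multiplier of the linear part of the Euler–Lagrange operator of the energy, before
integration over `w`. -/
def symbolDensity (α : ℝ) (k : ℤ) (w : ℝ) : ℝ :=
  |w| ^ (-α) * (α * (1 - ‖lineAvg (mode k) w 0‖ ^ 2))

lemma firstVarC_mode_neg (α : ℝ) (f : ℝ → Rn n) (j : Fin n) (k : ℤ) (u w : ℝ) :
    firstVarC α f j (mode (-k)) u w = ((|w| ^ (-α) : ℝ) : ℂ) *
      (coord f j u * chordPowDev (α / 2) f w u * mode (-k) u
      + mode (-k) w * (coord f j (u + w) * chordPowDev (α / 2) f w u * mode (-k) u)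
      - α * starRingEnd ℂ (lineAvg (mode k) w 0) *
        (lineAvg (coord f j) w u * chordPowDev (α / 2 + 1) f w u * mode (-k) u)
      - α * starRingEnd ℂ (lineAvg (mode k) w 0) * (lineAvg (coord f j) w u * mode (-k) u)
      + α * (lineAvg (fun x => coord f j x * mode (-k) x) w u * mode (-0) u)) := by
  rw [firstVarC, lineAvg_mode, lineAvg_mode_neg k w 0, mode_add, neg_zero, mode_zero_left]
  ring

lemma integral_firstVarC_mode_neg {f : ℝ → Rn n} (hf : ContPer f) (α : ℝ) (j : Fin n) (k : ℤ)
    {w : ℝ} (hne : ∀ u, lineAvg f w u ≠ 0) :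
    ∫ u in (0 : ℝ)..1, firstVarC α f j (mode (-k)) u w =
      ((|w| ^ (-α) : ℝ) : ℂ) * nonlinearRemainder α f j k w +
        (symbolDensity α k w : ℂ) * fourierCoef (coord f j) k := by
  have hF := hf.coord j
  have hprod : ContPer fun x => coord f j x * mode (-k) x := hF.mul (contPer_mode _)
  have hcont := hF.cont
  have hcontAvg := (hF.lineAvg w).cont
  have hcontProdAvg := (hprod.lineAvg w).cont
  have hcontMode := mode_continuous
  have hcontDev (p : ℝ) := continuous_chordPowDev p hf hne
  have hzero : fourierCoef (fun x => coord f j x * mode (-k) x) 0 = fourierCoef (coord f j) k := by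
    simp [fourierCoef, mode_zero_left]
  have hone : lineAvg (mode 0) w 0 = 1 := by simp [lineAvg, mode_zero_left]
  have hsum : ∫ u in (0 : ℝ)..1, firstVarC α f j (mode (-k)) u w = ((|w| ^ (-α) : ℝ) : ℂ) *
      (nonlinearRemainder α f j k w
      - α * starRingEnd ℂ (lineAvg (mode k) w 0) * fourierCoef (lineAvg (coord f j) w) k
      + α * fourierCoef (lineAvg (fun x => coord f j x * mode (-k) x) w) 0) := by
    simp only [firstVarC_mode_neg]
    rw [intervalIntegral.integral_const_mul, intervalIntegral.integral_add,
      intervalIntegral.integral_sub, intervalIntegral.integral_sub, intervalIntegral.integral_add]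
    · simp only [intervalIntegral.integral_const_mul]
      rfl
    all_goals exact Continuous.intervalIntegrable (by fun_prop) _ _
  have hnorm : starRingEnd ℂ (lineAvg (mode k) w 0) * lineAvg (mode k) w 0 =
      ((‖lineAvg (mode k) w 0‖ ^ 2 : ℝ) : ℂ) := by
    rw [mul_comm, Complex.mul_conj, Complex.normSq_eq_norm_sq]
  rw [hsum, hF.fourierCoef_lineAvg, hprod.fourierCoef_lineAvg, hzero, hone, symbolDensity]
  push_cast at hnorm ⊢
  linear_combination (-(((|w| ^ (-α) : ℝ) : ℂ) * α * fourierCoef (coord f j) k)) * hnorm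

lemma gagliardoSq_lt_top_of_lipschitz {E : Type*} [NormedAddCommGroup E] {f : ℝ → E} {K s : ℝ}
    (hs : s < 1) (hf : ∀ x y, ‖f x - f y‖ ≤ K * |x - y|) : gagliardoSq s f < ⊤ := by
  have hquotient (u w : ℝ) : ENNReal.ofReal (‖f (u + w) - f u‖ ^ 2 / |w| ^ (1 + 2 * s)) ≤
      ENNReal.ofReal (K ^ 2 * |w| ^ (1 - 2 * s)) := by
    refine ENNReal.ofReal_le_ofReal ?_
    rcases eq_or_ne w 0 with rfl | hw
    · rw [add_zero, sub_self, norm_zero, zero_pow two_ne_zero, zero_div]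
      positivity
    have hw := abs_pos.2 hw
    have hlip : ‖f (u + w) - f u‖ ≤ K * |w| := by simpa using hf (u + w) u
    rw [div_le_iff₀ (by positivity), mul_assoc, ← Real.rpow_add hw,
      show 1 - 2 * s + (1 + 2 * s) = 2 by ring, Real.rpow_two, ← mul_pow]
    gcongr
  have hfinite : ∫⁻ w in Ioo (-(1 : ℝ) / 2) (1 / 2), ENNReal.ofReal (K ^ 2 * |w| ^ (1 - 2 * s)) <
      ⊤ := ((integrable_abs_rpow (by linarith)).const_mul _).lintegral_lt_top
  calc gagliardoSq s f ≤ ∫⁻ _ in Ioc (0 : ℝ) 1,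
        ∫⁻ w in Ioo (-(1 : ℝ) / 2) (1 / 2), ENNReal.ofReal (K ^ 2 * |w| ^ (1 - 2 * s)) :=
      lintegral_mono fun u => lintegral_mono fun w => hquotient u w
    _ < ⊤ := by simpa using hfinite

/-- The trigonometric direction with derivative `L (e^{2πiku}) eⱼ`, for `k ≠ 0`. -/
def trigDir (L : ℂ →L[ℝ] ℝ) (k : ℤ) (j : Fin n) (u : ℝ) : Rn n :=
  L (mode k u / (2 * Real.pi * Complex.I * k)) • EuclideanSpace.single j 1

section TrigDir

variable {L : ℂ →L[ℝ] ℝ} {k : ℤ}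

lemma hasDerivAt_trigDir (hk : k ≠ 0) (j : Fin n) (u : ℝ) :
    HasDerivAt (trigDir L k j) (L (mode k u) • EuclideanSpace.single j (1 : ℝ)) u := by
  have hfactor : (2 * Real.pi * Complex.I * k : ℂ) ≠ 0 := by
    simp [hk, Real.pi_ne_zero, Complex.I_ne_zero]
  have hmode := (hasDerivAt_mode k u).div_const (2 * Real.pi * Complex.I * k)
  rw [mul_div_cancel_left₀ _ hfactor] at hmode
  exact (L.hasFDerivAt.comp_hasDerivAt u hmode).smul_const _

lemma deriv_trigDir (hk : k ≠ 0) (j : Fin n) :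
    deriv (trigDir L k j) = fun u => L (mode k u) • EuclideanSpace.single j (1 : ℝ) :=
  funext fun u => (hasDerivAt_trigDir hk j u).deriv

lemma contDiff_trigDir (hk : k ≠ 0) (j : Fin n) : ContDiff ℝ 1 (trigDir L k j) := by
  refine contDiff_one_iff_deriv.2
    ⟨fun u => (hasDerivAt_trigDir hk j u).differentiableAt, ?_⟩
  rw [deriv_trigDir hk]
  have hcont := mode_continuous k
  fun_prop

lemma periodic_trigDir (j : Fin n) : Function.Periodic (trigDir L k j) 1 := fun u => by
  simp only [trigDir, mode_periodic k u]

lemma norm_deriv_trigDir_le (hL : ∀ z, |L z| ≤ ‖z‖) (hk : k ≠ 0) (j : Fin n) (u : ℝ) :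
    ‖deriv (trigDir L k j) u‖ ≤ 1 := by
  rw [deriv_trigDir hk, norm_smul, PiLp.norm_single, norm_one, mul_one]
  exact (hL _).trans (norm_mode k u).le

lemma norm_deriv_trigDir_sub_le (hL : ∀ z, |L z| ≤ ‖z‖) (hk : k ≠ 0) (j : Fin n) (x y : ℝ) :
    ‖deriv (trigDir L k j) x - deriv (trigDir L k j) y‖ ≤
      2 * Real.pi * |(k : ℝ)| * |x - y| := by
  rw [deriv_trigDir hk, ← sub_smul, norm_smul, PiLp.norm_single, norm_one, mul_one, ← map_sub]
  exact (hL _).trans (norm_mode_sub_mode_le k x y)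

end TrigDir

/-- An arc-length `C¹` curve, critical for the energy plus `lam` times the length, with chord-arc
quotients at least `c` and with the integrable weight that dominates the difference quotients of
the energy in smooth directions. -/
structure Stationary (α lam c : ℝ) (γ : ℝ → Rn n) : Prop where
  contDiff : ContDiff ℝ 1 γ
  per : Function.Periodic γ 1
  arc : ArcLengthParam γ
  pos : 0 < c
  chord : ∀ w, |w| ≤ 1 / 2 → ∀ u, c ≤ ‖lineAvg (deriv γ) w u‖
  weight : Integrable (fun p : ℝ × ℝ => oscWeight α (deriv γ) p.2 p.1) cellMeasure
  stat : ∀ h : ℝ → Rn n, MemH1 ((α - 1) / 2) h → ∃ d : ℝ, HasDirDeriv (oharaER α) γ h d ∧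
    d + lam * ∫ u in Ioc (0 : ℝ) 1, ⟪deriv γ u, deriv h u⟫ = 0

namespace Stationary

variable {α lam c : ℝ} {γ : ℝ → Rn n}

lemma variation_trigDir (St : Stationary α lam c γ) {L : ℂ →L[ℝ] ℝ} (hL : ∀ z, |L z| ≤ ‖z‖)
    {k : ℤ} (hk : k ≠ 0) (j : Fin n) :
    Variation γ (trigDir L k j) c (1 + 2 * Real.pi * |(k : ℝ)|) where
  contDiff := St.contDiff
  per := St.per
  arc := St.arc
  contDiff_dir := contDiff_trigDir hk j
  per_dir := periodic_trigDir j
  norm_dir u := (norm_deriv_trigDir_le hL hk j u).trans (le_add_of_nonneg_right (by positivity))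
  lip_dir x y := (norm_deriv_trigDir_sub_le hL hk j x y).trans (by gcongr; linarith)
  pos := St.pos
  chord := St.chord

lemma integral_firstVarC_real (St : Stationary α lam c γ) (hα : α ∈ Ioo (0 : ℝ) 3)
    {L : ℂ →L[ℝ] ℝ} (hL : ∀ z, |L z| ≤ ‖z‖) {k : ℤ} (hk : k ≠ 0) (j : Fin n) :
    Integrable (fun p : ℝ × ℝ =>
        firstVarC α (deriv γ) j (fun u => (L (mode k u) : ℂ)) p.1 p.2) cellMeasure ∧
      ∫ p, firstVarC α (deriv γ) j (fun u => (L (mode k u) : ℂ)) p.1 p.2 ∂cellMeasure +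
        lam * ∫ u in (0 : ℝ)..1, coord (deriv γ) j u * L (mode k u) = 0 := by
  have V := St.variation_trigDir hL hk j
  obtain ⟨d, hd, hstat⟩ := St.stat (trigDir L k j) ⟨V.per_dir, V.contDiff_dir,
    gagliardoSq_lt_top_of_lipschitz (by linarith [hα.2]) V.lip_dir⟩
  have hd := V.eq_integral_firstVar hα.1 St.weight hd
  have hvar (u w : ℝ) : (firstVar α γ (trigDir L k j) u w : ℂ) =
      firstVarC α (deriv γ) j (fun u => (L (mode k u) : ℂ)) u w :=
    firstVar_eq_firstVarC V.continuous_deriv (fun u => (hasDerivAt_trigDir hk j u).deriv) α u w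
  have hlength (u : ℝ) : coord (deriv γ) j u * (L (mode k u) : ℂ) =
      ((⟪deriv γ u, deriv (trigDir L k j) u⟫ : ℝ) : ℂ) := by
    rw [deriv_trigDir hk, real_inner_smul_right, EuclideanSpace.inner_single_right]
    simp [coord, mul_comm]
  simp only [← hvar, hlength]
  refine ⟨(V.hasDerivAt_oharaER hα.1 St.weight).1.ofReal, ?_⟩
  rw [show ∫ p, (firstVar α γ (trigDir L k j) p.1 p.2 : ℂ) ∂cellMeasure = d from
      integral_ofReal.trans (congrArg _ hd.symm),
    intervalIntegral.integral_ofReal, intervalIntegral.integral_of_le zero_le_one]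
  exact_mod_cast hstat

lemma integral_firstVarC_mode_neg_add (St : Stationary α lam c γ) (hα : α ∈ Ioo (0 : ℝ) 3) {k : ℤ}
    (hk : k ≠ 0) (j : Fin n) :
    Integrable (fun p : ℝ × ℝ => firstVarC α (deriv γ) j (mode (-k)) p.1 p.2) cellMeasure ∧
      ∫ p, firstVarC α (deriv γ) j (mode (-k)) p.1 p.2 ∂cellMeasure +
        lam * fourierCoef (coord (deriv γ) j) k = 0 := by
  obtain ⟨hintRe, hre⟩ :=
    St.integral_firstVarC_real hα (L := Complex.reCLM) Complex.abs_re_le_norm hk j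
  obtain ⟨hintIm, him⟩ :=
    St.integral_firstVarC_real hα (L := Complex.imCLM) Complex.abs_im_le_norm hk j
  have hf := contPer_deriv St.contDiff St.per
  have hF := (hf.coord j).cont
  have hcontMode := mode_continuous k
  have hcontRe : Continuous fun u => (Complex.reCLM (mode k u) : ℂ) := by fun_prop
  have hcontIm : Continuous fun u => (Complex.imCLM (mode k u) : ℂ) := by fun_prop
  have hmode : mode (-k) = fun u =>
      (Complex.reCLM (mode k u) : ℂ) - Complex.I * (Complex.imCLM (mode k u) : ℂ) := by
    funext u
    rw [mode_neg]
    apply Complex.ext <;> simp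
  have hcoef : fourierCoef (coord (deriv γ) j) k =
      (∫ u in (0 : ℝ)..1, coord (deriv γ) j u * (Complex.reCLM (mode k u) : ℂ)) -
      Complex.I * ∫ u in (0 : ℝ)..1, coord (deriv γ) j u * (Complex.imCLM (mode k u) : ℂ) := by
    simp only [fourierCoef, hmode, mul_sub, mul_left_comm _ Complex.I]
    rw [intervalIntegral.integral_sub (Continuous.intervalIntegrable (by fun_prop) _ _)
      (Continuous.intervalIntegrable (by fun_prop) _ _), intervalIntegral.integral_const_mul]
  simp only [hmode, firstVarC_sub_const_mul hf hcontRe hcontIm]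
  refine ⟨hintRe.sub (hintIm.const_mul _), ?_⟩
  rw [integral_sub hintRe (hintIm.const_mul _), integral_const_mul, hcoef]
  linear_combination hre - Complex.I * him

end Stationary

lemma symbolDensity_nonneg {α : ℝ} (hα : 0 ≤ α) (k : ℤ) (w : ℝ) : 0 ≤ symbolDensity α k w := by
  have hle : ‖lineAvg (mode k) w 0‖ ^ 2 ≤ 1 :=
    pow_le_one₀ (norm_nonneg _) (norm_lineAvg_mode_le_one k w 0)
  exact mul_nonneg (by positivity) (mul_nonneg hα (sub_nonneg.2 hle))

lemma one_fourth_le_one_sub_norm_lineAvg_mode_sq {k : ℤ} {w : ℝ} (h : 2 / 5 ≤ |k * w|) :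
    1 / 4 ≤ 1 - ‖lineAvg (mode k) w 0‖ ^ 2 := by
  have hdecay := norm_lineAvg_mode_zero_mul_le k w
  have hnonneg := norm_nonneg (lineAvg (mode k) w 0)
  have hpi : 6 / 5 ≤ Real.pi * |k * w| := by nlinarith [Real.pi_gt_three]
  have hle : ‖lineAvg (mode k) w 0‖ ≤ 5 / 6 := by nlinarith
  nlinarith

/-- The frequency window in `w` on which `symbolDensity α k` is comparable to `|k| ^ α`. -/
def modeWindow (k : ℤ) : Set ℝ := Ico (2 / 5 / |(k : ℝ)|) (1 / 2 / |(k : ℝ)|)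

lemma rpow_le_symbolDensity {α : ℝ} (hα : 0 ≤ α) {k : ℤ} (hk : k ≠ 0) {w : ℝ}
    (hw : w ∈ modeWindow k) : α * |(k : ℝ)| ^ α / 4 ≤ symbolDensity α k w := by
  have hk₀ : 0 < |(k : ℝ)| := by positivity
  have hlower : 2 / 5 ≤ w * |(k : ℝ)| := (div_le_iff₀ hk₀).1 hw.1
  have hupper : w * |(k : ℝ)| < 1 / 2 := (lt_div_iff₀ hk₀).1 hw.2
  have hw₀ : 0 < w := pos_of_mul_pos_left (by linarith) hk₀.le
  have hmode : 1 / 4 ≤ 1 - ‖lineAvg (mode k) w 0‖ ^ 2 := by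
    refine one_fourth_le_one_sub_norm_lineAvg_mode_sq ?_
    rwa [abs_mul, abs_of_pos hw₀, mul_comm]
  have hpow : |(k : ℝ)| ^ α ≤ |w| ^ (-α) := by
    rw [abs_of_pos hw₀, Real.rpow_neg hw₀.le, ← Real.inv_rpow hw₀.le]
    refine Real.rpow_le_rpow hk₀.le ?_ hα
    rw [le_inv_comm₀ hk₀ hw₀, ← one_div, le_div_iff₀ hk₀]
    linarith
  calc α * |(k : ℝ)| ^ α / 4 = |(k : ℝ)| ^ α * (α * (1 / 4)) := by ring
    _ ≤ symbolDensity α k w := by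
      unfold symbolDensity
      gcongr

lemma indicator_modeWindow_le_symbolDensity {α : ℝ} (hα : 0 ≤ α) {k : ℤ} (hk : k ≠ 0) (w : ℝ) :
    (modeWindow k).indicator (fun _ => α * |(k : ℝ)| ^ α / 4) w ≤ symbolDensity α k w :=
  indicator_le' (fun _ hw => rpow_le_symbolDensity hα hk hw)
    (fun w _ => symbolDensity_nonneg hα k w) w

lemma setIntegral_indicator_modeWindow {k : ℤ} (hk : k ≠ 0) (A : ℝ) :
    ∫ w in Ioo (-(1 : ℝ) / 2) (1 / 2), (modeWindow k).indicator (fun _ => A) w =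
      A / (10 * |(k : ℝ)|) := by
  have hk₁ : 1 ≤ |(k : ℝ)| := by exact_mod_cast Int.one_le_abs hk
  have hsub : modeWindow k ⊆ Ioo (-(1 : ℝ) / 2) (1 / 2) := fun w hw => by
    have hlower : 0 < 2 / 5 / |(k : ℝ)| := by positivity
    have hupper : 1 / 2 / |(k : ℝ)| ≤ 1 / 2 := div_le_self (by norm_num) hk₁
    exact ⟨by linarith [hw.1], by linarith [hw.2]⟩
  have hlen : 2 / 5 / |(k : ℝ)| ≤ 1 / 2 / |(k : ℝ)| :=
    div_le_div_of_nonneg_right (by norm_num) (abs_nonneg _)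
  rw [setIntegral_indicator (t := modeWindow k) measurableSet_Ico, inter_eq_right.2 hsub,
    setIntegral_const, modeWindow, Real.volume_real_Ico_of_le hlen, smul_eq_mul]
  field_simp
  ring

lemma sub_le_re_mul_conj {α θ B w : ℝ} (hB : 0 ≤ B) {k : ℤ} {N : ℂ} (m : ℂ)
    (hN : ‖N‖ ≤ |w| ^ (2 * θ) * B) :
    symbolDensity α k w * ‖m‖ ^ 2 - |w| ^ (2 * θ - α) * (B * ‖m‖) ≤
      ((((|w| ^ (-α) : ℝ) : ℂ) * N + (symbolDensity α k w : ℂ) * m) * starRingEnd ℂ m).re := by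
  have hpow : |w| ^ (-α) * |w| ^ (2 * θ) ≤ |w| ^ (2 * θ - α) := by
    rw [show 2 * θ - α = -α + 2 * θ by ring]
    exact Real.le_rpow_add (abs_nonneg w) _ _
  have hre : -(‖N‖ * ‖m‖) ≤ (N * starRingEnd ℂ m).re := by
    have habs := neg_le_of_abs_le (Complex.abs_re_le_norm (N * starRingEnd ℂ m))
    rwa [norm_mul, RCLike.norm_conj] at habs
  have hremainder : -(|w| ^ (2 * θ - α) * (B * ‖m‖)) ≤
      |w| ^ (-α) * (N * starRingEnd ℂ m).re :=
    calc -(|w| ^ (2 * θ - α) * (B * ‖m‖))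
        ≤ -(|w| ^ (-α) * |w| ^ (2 * θ) * (B * ‖m‖)) := by gcongr
      _ = |w| ^ (-α) * -(|w| ^ (2 * θ) * B * ‖m‖) := by ring
      _ ≤ |w| ^ (-α) * -(‖N‖ * ‖m‖) := by gcongr
      _ ≤ |w| ^ (-α) * (N * starRingEnd ℂ m).re := by gcongr
  rw [add_mul, mul_assoc, mul_assoc, Complex.mul_conj, Complex.add_re, Complex.re_ofReal_mul,
    Complex.re_ofReal_mul, Complex.ofReal_re, Complex.normSq_eq_norm_sq]
  linarith

lemma le_setIntegral_re_mul_conj {α θ B : ℝ} (hα : 0 ≤ α) (hθ : α - 2 * θ < 1) (hB : 0 ≤ B)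
    {k : ℤ} (hk : k ≠ 0) {J N : ℝ → ℂ} {m : ℂ}
    (hJ : ∀ w ∈ Ioo (-(1 : ℝ) / 2) (1 / 2),
      J w = ((|w| ^ (-α) : ℝ) : ℂ) * N w + (symbolDensity α k w : ℂ) * m)
    (hN : ∀ w ∈ Ioo (-(1 : ℝ) / 2) (1 / 2), ‖N w‖ ≤ |w| ^ (2 * θ) * B)
    (hint : IntegrableOn J (Ioo (-(1 : ℝ) / 2) (1 / 2))) :
    α * |(k : ℝ)| ^ (α - 1) / 40 * ‖m‖ ^ 2 -
        (∫ w in Ioo (-(1 : ℝ) / 2) (1 / 2), |w| ^ (2 * θ - α)) * (B * ‖m‖) ≤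
      ∫ w in Ioo (-(1 : ℝ) / 2) (1 / 2), (J w * starRingEnd ℂ m).re := by
  set A := α * |(k : ℝ)| ^ α / 4 with hA
  have hpow : IntegrableOn (fun w : ℝ => |w| ^ (2 * θ - α)) (Ioo (-(1 : ℝ) / 2) (1 / 2)) :=
    integrable_abs_rpow (by linarith)
  have hwindow : IntegrableOn ((modeWindow k).indicator fun _ => A) (Ioo (-(1 : ℝ) / 2) (1 / 2)) :=
    (integrable_const A).indicator measurableSet_Ico
  have hA' : A / (10 * |(k : ℝ)|) = α * |(k : ℝ)| ^ (α - 1) / 40 := by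
    rw [Real.rpow_sub_one (by positivity), hA]
    ring
  rw [← hA', ← setIntegral_indicator_modeWindow hk, ← integral_mul_const, ← integral_mul_const,
    ← integral_sub (hwindow.mul_const _) (hpow.mul_const _)]
  refine setIntegral_mono_on ((hwindow.mul_const _).sub (hpow.mul_const _))
    (hint.mul_const (starRingEnd ℂ m)).re measurableSet_Ioo fun w hw => ?_
  rw [hJ w hw]
  refine le_trans ?_ (sub_le_re_mul_conj hB m (hN w hw))
  have hle := indicator_modeWindow_le_symbolDensity hα hk w
  gcongr

/-- Test the equation with `m`: since `symbolDensity` is nonnegative and at least of order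
`|k| ^ α` on an interval of length of order `|k|⁻¹`, its integral is at least of order
`|k| ^ (α - 1)`. -/
lemma rpow_mul_norm_le_of_integral_eq_zero {α θ lam B : ℝ} (hα : 0 ≤ α) (hθ : α - 2 * θ < 1)
    (hlam : 0 ≤ lam) (hB : 0 ≤ B) {k : ℤ} (hk : k ≠ 0) {J N : ℝ → ℂ} {m : ℂ}
    (hJ : ∀ w ∈ Ioo (-(1 : ℝ) / 2) (1 / 2),
      J w = ((|w| ^ (-α) : ℝ) : ℂ) * N w + (symbolDensity α k w : ℂ) * m)
    (hN : ∀ w ∈ Ioo (-(1 : ℝ) / 2) (1 / 2), ‖N w‖ ≤ |w| ^ (2 * θ) * B)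
    (hint : IntegrableOn J (Ioo (-(1 : ℝ) / 2) (1 / 2)))
    (hzero : (∫ w in Ioo (-(1 : ℝ) / 2) (1 / 2), J w) + lam * m = 0) :
    α * (|(k : ℝ)| ^ (α - 1) * ‖m‖) ≤
      40 * (∫ w in Ioo (-(1 : ℝ) / 2) (1 / 2), |w| ^ (2 * θ - α)) * B := by
  have hlower := le_setIntegral_re_mul_conj hα hθ hB hk hJ hN hint
  have htested : ∫ w in Ioo (-(1 : ℝ) / 2) (1 / 2), (J w * starRingEnd ℂ m).re =
      -(lam * ‖m‖ ^ 2) := by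
    refine (integral_re (hint.mul_const (starRingEnd ℂ m))).trans ?_
    rw [integral_mul_const, eq_neg_of_add_eq_zero_left hzero, neg_mul, mul_assoc,
      Complex.mul_conj, Complex.normSq_eq_norm_sq]
    simp only [map_neg, RCLike.re_to_complex, Complex.re_ofReal_mul, Complex.ofReal_re]
  have hC : 0 ≤ ∫ w in Ioo (-(1 : ℝ) / 2) (1 / 2), |w| ^ (2 * θ - α) :=
    integral_nonneg fun w => by positivity
  rcases eq_or_ne m 0 with rfl | hm
  · simp only [norm_zero, mul_zero]
    exact mul_nonneg (mul_nonneg (by norm_num) hC) hB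
  refine le_of_mul_le_mul_right ?_ (norm_pos_iff.2 hm)
  have hlength : 0 ≤ lam * ‖m‖ ^ 2 := by positivity
  linarith

lemma exists_fourierLE_mul_chordPowDev {f : ℝ → Rn n} (hf : ContPer f) (hunit : ∀ u, ‖f u‖ = 1)
    {c : ℝ} (hc : 0 < c) (hchord : ∀ w, |w| ≤ 1 / 2 → ∀ u, c ≤ ‖lineAvg f w u‖) {a : ℤ → ℝ≥0∞}
    (ha : ∀ j, FourierLE (coord f j) a) {s μ θ : ℝ} (hμ : 0 ≤ μ) (hsμ : s + 1 / 2 < μ)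
    (h0 : 0 ≤ θ) (h1 : θ ≤ 1) (has : wienerNorm (max s 0) a < ⊤)
    (hb : sobolevSq μ (fracBound θ a) < ⊤) (p : ℝ) :
    ∃ M : ℤ → ℝ≥0∞, sobolevSq s M < ⊤ ∧ ∀ w, |w| ≤ 1 / 2 → ∀ G : ℝ → ℂ, ContPer G →
      FourierLE G a → FourierLE (fun u => G u * chordPowDev p f w u)
        fun k => ENNReal.ofReal (|w| ^ (2 * θ)) * M k := by
  have hsphere (u : ℝ) : ∑ j, coord f j u ^ 2 = 1 := by
    have hsum := norm_lineAvg_sq_eq_sum hf.cont 0 u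
    simp only [lineAvg_zero] at hsum
    rw [← hsum, hunit u]
    norm_num
  have hle : ∀ w u, ‖lineAvg f w u‖ ≤ 1 := norm_lineAvg_le fun u => (hunit u).le
  have hc₁ : c ≤ 1 := (hchord 0 (by norm_num) 0).trans (hle 0 0)
  have hdefect (w : ℝ) (hw : |w| ≤ 1 / 2) (u : ℝ) : |1 - ‖lineAvg f w u‖ ^ 2| ≤ 1 - c ^ 2 := by
    have hlower := hchord w hw u
    have hupper := hle w u
    rw [abs_le]
    constructor <;> nlinarith
  exact exists_fourierLE_rpow (F := coord f) (fun j => hf.coord j) hsphere ha hμ hsμ h0 h1 has hb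
    (q := 1 - c ^ 2) (by nlinarith) (by nlinarith) (S := {w | |w| ≤ 1 / 2})
    (ρ := fun w u => ‖lineAvg f w u‖ ^ 2) (fun w _ u => norm_lineAvg_sq_eq_sum hf.cont w u)
    hdefect p

lemma exists_enorm_nonlinearRemainder_le {f : ℝ → Rn n} (hf : ContPer f) (hunit : ∀ u, ‖f u‖ = 1)
    {c : ℝ} (hc : 0 < c) (hchord : ∀ w, |w| ≤ 1 / 2 → ∀ u, c ≤ ‖lineAvg f w u‖) {a : ℤ → ℝ≥0∞}
    (ha : ∀ j, FourierLE (coord f j) a) {s μ θ : ℝ} (hμ : 0 ≤ μ) (hsμ : s + 1 / 2 < μ)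
    (h0 : 0 ≤ θ) (h1 : θ ≤ 1) (has : wienerNorm (max s 0) a < ⊤)
    (hb : sobolevSq μ (fracBound θ a) < ⊤) {α : ℝ} :
    ∃ M : ℤ → ℝ≥0∞, sobolevSq s M < ⊤ ∧ ∀ j k w, |w| ≤ 1 / 2 →
      ‖nonlinearRemainder α f j k w‖ₑ ≤ ENNReal.ofReal (|w| ^ (2 * θ)) * M k := by
  have hbound := exists_fourierLE_mul_chordPowDev hf hunit hc hchord ha hμ hsμ h0 h1 has hb
  obtain ⟨M₁, hM₁, hM₁le⟩ := hbound (α / 2)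
  obtain ⟨M₂, hM₂, hM₂le⟩ := hbound (α / 2 + 1)
  refine ⟨fun k => M₁ k + M₁ k + ‖(α : ℂ)‖ₑ * M₂ k,
    sobolevSq_add_lt_top (sobolevSq_add_lt_top hM₁ hM₁) ?_, fun j k w hw => ?_⟩
  · rw [sobolevSq_const_mul]
    exact ENNReal.mul_lt_top (by finiteness) hM₂
  have hF := hf.coord j
  have hleft := hM₁le w hw _ hF (ha j) k
  have hright := hM₁le w hw _ (hF.shift w) ((ha j).shift hF w) k
  have hchordTerm := hM₂le w hw _ (hF.lineAvg w) ((ha j).lineAvg hF w) k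
  have hmode : ‖mode (-k) w‖ₑ = 1 := by
    rw [← ofReal_norm, norm_mode, ENNReal.ofReal_one]
  have havg : ‖starRingEnd ℂ (lineAvg (mode k) w 0)‖ₑ ≤ 1 := by
    rw [← ofReal_norm, RCLike.norm_conj]
    exact ENNReal.ofReal_le_one.2 (norm_lineAvg_mode_le_one k w 0)
  rw [mul_add, mul_add]
  refine enorm_sub_le.trans (add_le_add ((enorm_add_le _ _).trans (add_le_add hleft ?_)) ?_)
  · rwa [enorm_mul, hmode, one_mul]
  · rw [enorm_mul, enorm_mul, mul_left_comm, mul_assoc]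
    exact mul_le_mul' le_rfl ((mul_le_mul' havg hchordTerm).trans_eq (one_mul _))

namespace Stationary

variable {α lam c : ℝ} {γ : ℝ → Rn n}

lemma rpow_mul_norm_fourierCoef_le (St : Stationary α lam c γ) (hα : α ∈ Ioo (0 : ℝ) 3)
    (hlam : 0 ≤ lam) {θ B : ℝ} (hθ : α - 2 * θ < 1) (hB : 0 ≤ B) {k : ℤ} (hk : k ≠ 0) (j : Fin n)
    (hN : ∀ w, |w| ≤ 1 / 2 → ‖nonlinearRemainder α (deriv γ) j k w‖ ≤ |w| ^ (2 * θ) * B) :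
    α * (|(k : ℝ)| ^ (α - 1) * ‖fourierCoef (coord (deriv γ) j) k‖) ≤
      40 * (∫ w in Ioo (-(1 : ℝ) / 2) (1 / 2), |w| ^ (2 * θ - α)) * B := by
  obtain ⟨hint, hEulerLagrange⟩ := St.integral_firstVarC_mode_neg_add hα hk j
  have hhalf {w : ℝ} (hw : w ∈ Ioo (-(1 : ℝ) / 2) (1 / 2)) : |w| ≤ 1 / 2 :=
    abs_le.2 ⟨by linarith [hw.1], hw.2.le⟩
  refine rpow_mul_norm_le_of_integral_eq_zero hα.1.le hθ hlam hB hk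
    (J := fun w => ∫ u in Ioc (0 : ℝ) 1, firstVarC α (deriv γ) j (mode (-k)) u w)
    (fun w hw => ?_) (fun w hw => hN w (hhalf hw)) hint.integral_prod_right ?_
  · rw [← intervalIntegral.integral_of_le zero_le_one, integral_firstVarC_mode_neg
      (contPer_deriv St.contDiff St.per) α j k fun u =>
        norm_pos_iff.1 (St.pos.trans_le (St.chord w (hhalf hw) u))]
  · rw [← hEulerLagrange, cellMeasure, integral_prod_symm _ hint]

lemma exists_rpow_mul_enorm_fourierCoef_le (St : Stationary α lam c γ) (hα : α ∈ Ioo (0 : ℝ) 3)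
    (hlam : 0 ≤ lam) {a : ℤ → ℝ≥0∞} (ha : ∀ j, FourierLE (coord (deriv γ) j) a) {s μ θ : ℝ}
    (hμ : 0 ≤ μ) (hsμ : s + 1 / 2 < μ) (h0 : 0 ≤ θ) (h1 : θ ≤ 1) (hθ : α - 2 * θ < 1)
    (has : wienerNorm (max s 0) a < ⊤) (hb : sobolevSq μ (fracBound θ a) < ⊤) :
    ∃ M : ℤ → ℝ≥0∞, sobolevSq s M < ⊤ ∧ ∀ j, ∀ k : ℤ, k ≠ 0 →
      ENNReal.ofReal (|(k : ℝ)| ^ (α - 1)) * ‖fourierCoef (coord (deriv γ) j) k‖ₑ ≤ M k := by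
  obtain ⟨M, hM, hremainder⟩ := exists_enorm_nonlinearRemainder_le
    (contPer_deriv St.contDiff St.per) St.arc St.pos St.chord ha hμ hsμ h0 h1 has hb (α := α)
  set C := ∫ w in Ioo (-(1 : ℝ) / 2) (1 / 2), |w| ^ (2 * θ - α)
  have hC : 0 ≤ 40 * C / α := div_nonneg
    (mul_nonneg (by norm_num) (integral_nonneg fun w => by positivity)) hα.1.le
  refine ⟨fun k => ENNReal.ofReal (40 * C / α) * M k, ?_, fun j k hk => ?_⟩
  · rw [sobolevSq_const_mul]
    exact ENNReal.mul_lt_top (by finiteness) hM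
  have hMk := ne_top_of_sobolevSq_lt_top hM k
  have hdecay := St.rpow_mul_norm_fourierCoef_le hα hlam hθ (B := (M k).toReal)
    ENNReal.toReal_nonneg hk j fun w hw => by
      rw [← ENNReal.ofReal_le_ofReal_iff (by positivity), ofReal_norm,
        ENNReal.ofReal_mul (by positivity), ENNReal.ofReal_toReal hMk]
      exact hremainder j k w hw
  change _ ≤ ENNReal.ofReal (40 * C / α) * M k
  rw [← ofReal_norm, ← ENNReal.ofReal_mul (by positivity), ← ENNReal.ofReal_toReal hMk,
    ← ENNReal.ofReal_mul hC, div_mul_eq_mul_div]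
  exact ENNReal.ofReal_le_ofReal ((le_div_iff₀' hα.1).2 hdecay)

end Stationary

/-! ### Regularity of stationary curves -/

lemma bracket_rpow_mul_enorm_fourierCoef_le {α : ℝ} (hα : 0 ≤ α) {γ : ℝ → Rn n}
    (hc : ContDiff ℝ 1 γ) (hp : Function.Periodic γ 1) (j : Fin n) {k : ℤ} (hk : k ≠ 0) :
    bracket k ^ α * ‖fourierCoef (coord γ j) k‖ₑ ≤ ENNReal.ofReal (2 ^ α) *
      (ENNReal.ofReal (|(k : ℝ)| ^ (α - 1)) * ‖fourierCoef (coord (deriv γ) j) k‖ₑ) := by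
  have hk₁ : 1 ≤ |(k : ℝ)| := by exact_mod_cast Int.one_le_abs hk
  have hbracket : (1 + |(k : ℝ)|) ^ α ≤ 2 ^ α * |(k : ℝ)| ^ α := by
    rw [← Real.mul_rpow zero_le_two (abs_nonneg _)]
    exact Real.rpow_le_rpow (by positivity) (by linarith) hα
  have hpow : |(k : ℝ)| ^ α = |(k : ℝ)| ^ (α - 1) * |(k : ℝ)| := by
    rw [Real.rpow_sub_one (by positivity), div_mul_cancel₀ _ (by positivity)]
  have hpi : 1 ≤ 2 * Real.pi := by linarith [Real.pi_gt_three]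
  rw [bracket_eq_ofReal, ENNReal.ofReal_rpow_of_pos (by positivity), ← ofReal_norm, ← ofReal_norm,
    ← ENNReal.ofReal_mul (by positivity), ← ENNReal.ofReal_mul (by positivity),
    ← ENNReal.ofReal_mul (by positivity), fourierCoef_coord_deriv hc hp, norm_mul,
    norm_two_pi_I_mul_int]
  refine ENNReal.ofReal_le_ofReal ?_
  calc (1 + |(k : ℝ)|) ^ α * ‖fourierCoef (coord γ j) k‖
      ≤ 2 ^ α * |(k : ℝ)| ^ α * ‖fourierCoef (coord γ j) k‖ := by gcongr
    _ = 2 ^ α * (|(k : ℝ)| ^ (α - 1) * (1 * |(k : ℝ)| * ‖fourierCoef (coord γ j) k‖)) := by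
      rw [hpow]
      ring
    _ ≤ _ := by gcongr

lemma memHF_of_enorm_fourierCoef_deriv_le {α s : ℝ} (hα : 0 ≤ α) (hs : 0 ≤ s + α) {γ : ℝ → Rn n}
    (hc : ContDiff ℝ 1 γ) (hp : Function.Periodic γ 1) {M : ℤ → ℝ≥0∞} (hM : sobolevSq s M < ⊤)
    (hdecay : ∀ j, ∀ k : ℤ, k ≠ 0 →
      ENNReal.ofReal (|(k : ℝ)| ^ (α - 1)) * ‖fourierCoef (coord (deriv γ) j) k‖ₑ ≤ M k) :
    MemHF (s + α) γ := by
  refine memHF_of_sobolevSq_lt_top hs ⟨hc.continuous, hp⟩ fun j => ?_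
  have hcoef (k : ℤ) : bracket k ^ α * ‖fourierCoef (coord γ j) k‖ₑ ≤
      ENNReal.ofReal (2 ^ α) * M k + if k = 0 then ‖fourierCoef (coord γ j) 0‖ₑ else 0 := by
    rcases eq_or_ne k 0 with rfl | hk
    · simp [bracket]
    rw [if_neg hk, add_zero]
    refine (bracket_rpow_mul_enorm_fourierCoef_le hα hc hp j hk).trans ?_
    gcongr
    exact hdecay j k hk
  rw [← sobolevSq_bracket_mul]
  refine (sobolevSq_mono hcoef).trans_lt (sobolevSq_add_lt_top ?_ ?_)
  · rw [sobolevSq_const_mul]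
    exact ENNReal.mul_lt_top (by finiteness) hM
  · rw [sobolevSq, tsum_eq_single 0 fun k hk => by simp [hk]]
    simp [bracket]

lemma exists_stationary {α lam t : ℝ} (hα : α < 3) (ht : 1 / 2 < t) (htα : (α - 1) / 2 < t)
    {γ : ℝ → Rn n} (hγ : MemHF (t + 1) γ) (hinj : PerInjective γ) (harc : ArcLengthParam γ)
    (hstat : ∀ h : ℝ → Rn n, MemH1 ((α - 1) / 2) h → ∃ d : ℝ, HasDirDeriv (oharaER α) γ h d ∧
      d + lam * ∫ u in Ioc (0 : ℝ) 1, ⟪deriv γ u, deriv h u⟫ = 0) :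
    ∃ c, Stationary α lam c γ := by
  have hc := contDiff_of_memHF (by linarith) hγ
  have hf := contPer_deriv hc hγ.1
  have hcoef := sobolevSq_coordBound_deriv_lt_top (by linarith) hc hγ
  have hsum := (tsum_le_wienerNorm le_rfl _).trans_lt
    (wienerNorm_lt_top_of_sobolevSq_lt_top (by linarith) hcoef)
  have hθ : 0 ≤ min t 1 := le_min (by linarith) zero_le_one
  have hexponent : α - 2 * min t 1 < 1 := by
    linarith [lt_min htα (by linarith : (α - 1) / 2 < 1)]
  obtain ⟨c, hpos, hchord⟩ := exists_chord_lower_bound hc hγ.1 hinj harc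
  obtain ⟨C, hC⟩ := exists_integral_meanOsc_le hf hθ (min_le_right t 1) (fourierLE_coordBound _)
    hsum.ne <| sobolevSq_fracBound_lt_top hθ <|
      (sobolevSq_mono_exp (by simp) _).trans_lt hcoef
  exact ⟨c, hc, hγ.1, harc, hpos, hchord, integrable_oscWeight hf.cont hα hexponent hC, hstat⟩

/-- A stationary point `γ ∈ H^{(α+1)/2+σ,2}` of `E^α + λL` (injective,
arc-length, `σ > 0`) belongs to `H^{α−1/2+σ̂,2}` for every `0 < σ̂ < σ`. -/
theorem statement17 {n : ℕ} (hn : 2 ≤ n) {α lam σ : ℝ} (hα : α ∈ Ioo (2:ℝ) 3)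
    (hlam : 0 < lam) (hσ : 0 < σ)
    {γ : ℝ → Rn n} (hγ : MemHF ((α + 1) / 2 + σ) γ) (hinj : PerInjective γ)
    (harc : ArcLengthParam γ)
    (hstat : ∀ h : ℝ → Rn n, MemH1 ((α - 1) / 2) h →
      ∃ d : ℝ, HasDirDeriv (oharaER α) γ h d ∧
        d + lam * ∫ u in Ioc (0:ℝ) 1, ⟪deriv γ u, deriv h u⟫ = 0) :
    ∀ σh ∈ Ioo (0:ℝ) σ, MemHF (α - 1/2 + σh) γ := by
  rintro σh ⟨hσh₀, hσh⟩
  obtain ⟨hα₂, hα₃⟩ := hα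
  obtain ⟨ε, hε₀, hε⟩ := exists_between (lt_min (sub_pos.2 hσh) (by linarith : 0 < (3 - α) / 2))
  obtain ⟨hεσ, hεα⟩ := lt_min_iff.1 hε
  have hγ' : MemHF ((α - 1) / 2 + σ + 1) γ := by convert hγ using 1; ring
  obtain ⟨c, hγstat⟩ := exists_stationary hα₃ (by linarith) (by linarith) hγ' hinj harc hstat
  have ha : sobolevSq ((α - 1) / 2 + σ) (coordBound (deriv γ)) < ⊤ :=
    sobolevSq_coordBound_deriv_lt_top (by linarith) hγstat.contDiff hγ'
  have hwiener : wienerNorm (max (σh - 1 / 2) 0) (coordBound (deriv γ)) < ⊤ :=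
    wienerNorm_lt_top_of_sobolevSq_lt_top
      (lt_sub_iff_add_lt.1 (max_lt (by linarith) (by linarith))) ha
  have hfrac : sobolevSq (σ - ε) (fracBound ((α - 1) / 2 + ε) (coordBound (deriv γ))) < ⊤ :=
    sobolevSq_fracBound_lt_top (by linarith) (by convert ha using 2; ring)
  obtain ⟨M, hM, hdecay⟩ := hγstat.exists_rpow_mul_enorm_fourierCoef_le ⟨by linarith, hα₃⟩ hlam.le
    (fourierLE_coordBound _) (s := σh - 1 / 2) (by linarith) (by linarith) (by linarith)
    (by linarith) (by linarith) hwiener hfrac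
  rw [show α - 1 / 2 + σh = σh - 1 / 2 + α by ring]
  exact memHF_of_enorm_fourierCoef_deriv_le (by linarith) (by linarith) hγstat.contDiff
    hγstat.per hM hdecay

end
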